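/- arXiv:1806.03523 — 4 statements merged into one kernel-verified Lean document; each statement's English description precedes it below -/
import Mathlib

section
/- Let a be linked by I over M where I is generated by an M-regular sequence, suppose Ass(M/IM) = Min Ass(M/IM) (all associated primes are minimal), and set t = grade_M(a), c = ⋂_{p ∈ Ass(M/IM) \ V(a)} p. Then cd(a, M) ∈ {t, cd(a, H^t_c(M)) + t}. -/
universe u

open RingTheory.Sequence CategoryTheory

noncomputable section

/-- `N :_M a`, set of `m : M` with `a • m ⊆ N`. -/
def Submodule.modColon {R : Type u} [CommRing R] {M : Type u} [AddCommGroup M] [Module R M]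
    (N : Submodule R M) (a : Ideal R) : Submodule R M :=
  ⨅ r ∈ a, N.comap (LinearMap.lsmul R M r)

/-- The ideals `a` and `b` are linked by `I` over `M`: `I ⊆ a ⊓ b` is generated by an
`M`-regular sequence, `bM = IM :_M a`, `aM = IM :_M b`, and `aM ≠ M ≠ bM`. -/
def Ideal.IsLinkedBy {R : Type u} [CommRing R] (M : Type u) [AddCommGroup M] [Module R M]
    (I a b : Ideal R) : Prop :=
  (∃ rs : List R, RingTheory.Sequence.IsRegular M rs ∧ I = Ideal.ofList rs) ∧
  I ≤ a ⊓ b ∧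
  a • (⊤ : Submodule R M) ≠ ⊤ ∧ b • (⊤ : Submodule R M) ≠ ⊤ ∧
  Submodule.modColon (I • (⊤ : Submodule R M)) a = b • (⊤ : Submodule R M) ∧
  Submodule.modColon (I • (⊤ : Submodule R M)) b = a • (⊤ : Submodule R M)

/-- Cohomological dimension `cd(a, M) = sup { i | H^i_a(M) ≠ 0 }`. -/
def cohDim {R : Type u} [CommRing R] (a : Ideal R) (M : Type u) [AddCommGroup M]
    [Module R M] : ℕ∞ :=
  sSup {n : ℕ∞ | ∃ i : ℕ, n = i ∧ Nontrivial ↥((localCohomology a i).obj (ModuleCat.of R M))}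

/-- `grade_M(a)`: the supremum of lengths of `M`-regular sequences contained in `a`. -/
def gradeM {R : Type u} [CommRing R] (a : Ideal R) (M : Type u) [AddCommGroup M]
    [Module R M] : ℕ :=
  sSup {n : ℕ | ∃ rs : List R, rs.length = n ∧ (∀ r ∈ rs, r ∈ a) ∧
    RingTheory.Sequence.IsRegular M rs}

section PartA
open CategoryTheory
namespace LCaux
variable {R : Type u} [CommRing R]

open ProjectiveResolution in
lemma extMk_zero_iff {C : Type*} [Category C] [Abelian C] [HasExt C] {X Y : C} (P : ProjectiveResolution X)
    (f : P.complex.X 0 ⟶ Y) (hf : P.complex.d 1 0 ≫ f = 0) (h : P.extMk f 1 rfl hf = 0) : f = 0 := by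
  simp only [← P.extEquivCohomologyClass.apply_eq_iff_eq,
    extEquivCohomologyClass_extMk, extEquivCohomologyClass_zero,
    CochainComplex.HomComplex.CohomologyClass.mk_eq_zero_iff] at h
  rw [CochainComplex.HomComplex.Cocycle.toSingleMk_mem_coboundaries_iff _ _ _ _ _ 1 (by simp)] at h
  obtain ⟨g, hg⟩ := h
  have hz : Limits.IsZero (P.cochainComplex.X 1) := P.cochainComplex.isZero_of_isStrictlyLE 0 1 (by simp)
  rw [hz.eq_of_src g 0, Limits.comp_zero] at hg
  exact (cancel_epi (P.cochainComplexXIso (-(0:ℕ)) 0 rfl).hom).1 (by rw [← hg, Limits.comp_zero])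

variable {X X' Y : ModuleCat.{u} R} (P : ProjectiveResolution X)

lemma smul_extMk (n : ℕ) (f : P.complex.X n ⟶ Y) (m : ℕ) (hm : n + 1 = m)
    (hf : P.complex.d m n ≫ f = 0) (r : R) :
    P.extMk (r • f) m hm (by simp [hf]) = r • P.extMk f m hm hf := by
  rw [Abelian.Ext.smul_eq_comp_mk₀, P.extMk_comp_mk₀]
  simp

lemma cyc_d (n : ℕ) (c : (P.complex.linearYonedaObj R Y).cycles n) :
    P.complex.d (n+1) n ≫ (show P.complex.X n ⟶ Y from (P.complex.linearYonedaObj R Y).iCycles n c) = 0 := by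
  have := congr($((P.complex.linearYonedaObj R Y).iCycles_d n (n+1)) c)
  exact this

def cyc (n : ℕ) (c : (P.complex.linearYonedaObj R Y).cycles n) : P.complex.X n ⟶ Y :=
  (P.complex.linearYonedaObj R Y).iCycles n c

lemma extMk_congr (n : ℕ) {f g : P.complex.X n ⟶ Y} (h : f = g) (m : ℕ) (hm : n + 1 = m)
    (hf : P.complex.d m n ≫ f = 0) (hg : P.complex.d m n ≫ g = 0) :
    P.extMk f m hm hf = P.extMk g m hm hg := by subst h; rfl

def cycToExt (n : ℕ) : (P.complex.linearYonedaObj R Y).cycles n ⟶ ModuleCat.of R (Abelian.Ext.{u} X Y n) :=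
  ModuleCat.ofHom
  { toFun := fun c => P.extMk (cyc P n c) (n+1) rfl (cyc_d P n c)
    map_add' := fun x y => by
      refine (extMk_congr P n ?_ _ _ _ ?_).trans (P.add_extMk (cyc P n x) (cyc P n y) (n+1) rfl (cyc_d P n x) (cyc_d P n y)).symm
      · exact map_add ((P.complex.linearYonedaObj R Y).iCycles n).hom x y
      · rw [Preadditive.comp_add, show P.complex.d (n+1) n ≫ cyc P n x = 0 from cyc_d P n x,
          show P.complex.d (n+1) n ≫ cyc P n y = 0 from cyc_d P n y, zero_add]
    map_smul' := fun r x => by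
      refine (extMk_congr P n ?_ _ _ _ ?_).trans (smul_extMk P n (cyc P n x) (n+1) rfl (cyc_d P n x) r)
      · exact map_smul ((P.complex.linearYonedaObj R Y).iCycles n).hom r x
      · rw [Linear.comp_smul, show P.complex.d (n+1) n ≫ cyc P n x = 0 from cyc_d P n x, smul_zero] }

lemma cycToExt_apply (n : ℕ) (c : (P.complex.linearYonedaObj R Y).cycles n) :
    cycToExt P n c = P.extMk (cyc P n c) (n+1) rfl (cyc_d P n c) := rfl

lemma toCycles_cycToExt (n j : ℕ) : (P.complex.linearYonedaObj R Y).toCycles j n ≫ cycToExt P n = 0 := by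
  ext x
  refine (cycToExt_apply P n ((P.complex.linearYonedaObj R Y).toCycles j n x)).trans ?_
  have key : (P.complex.linearYonedaObj R Y).iCycles n ((P.complex.linearYonedaObj R Y).toCycles j n x)
     = (P.complex.linearYonedaObj R Y).d j n x :=
    congr($((P.complex.linearYonedaObj R Y).toCycles_i j n) x)
  by_cases h : j + 1 = n
  · exact (P.extMk_eq_zero_iff _ _ _ _ j h).2 ⟨x, key.symm⟩
  · have h0 : (P.complex.linearYonedaObj R Y).d j n = 0 :=
      (P.complex.linearYonedaObj R Y).shape _ _ (by simpa using h)
    rw [h0] at key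
    exact (extMk_congr P n key _ _ _ Limits.comp_zero).trans (P.extMk_zero (n+1) rfl)

lemma prev_cond (n : ℕ) : (ComplexShape.up ℕ).prev n = (ComplexShape.up ℕ).prev n := rfl

def homToExt (n : ℕ) : (P.complex.linearYonedaObj R Y).homology n ⟶ ModuleCat.of R (Abelian.Ext.{u} X Y n) :=
  ((P.complex.linearYonedaObj R Y).homologyIsCokernel _ n rfl).desc
    (Limits.CokernelCofork.ofπ (cycToExt P n) (toCycles_cycToExt P n _))

lemma π_homToExt (n : ℕ) : (P.complex.linearYonedaObj R Y).homologyπ n ≫ homToExt P n = cycToExt P n :=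
  ((P.complex.linearYonedaObj R Y).homologyIsCokernel _ n rfl).fac
    (Limits.CokernelCofork.ofπ (cycToExt P n) (toCycles_cycToExt P n _)) Limits.WalkingParallelPair.one

lemma homologyπ_surj (K : CochainComplex (ModuleCat.{u} R) ℕ) (n : ℕ) : Function.Surjective (K.homologyπ n) :=
  (ModuleCat.epi_iff_surjective _).1 inferInstance
lemma iCycles_inj (K : CochainComplex (ModuleCat.{u} R) ℕ) (n : ℕ) : Function.Injective (K.iCycles n) :=
  (ModuleCat.mono_iff_injective _).1 inferInstance

lemma homToExt_bij (n : ℕ) : Function.Bijective (homToExt (Y := Y) P n) := by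
  constructor
  · refine (injective_iff_map_eq_zero (homToExt (Y := Y) P n).hom).2 fun a ha => ?_
    obtain ⟨c, rfl⟩ := homologyπ_surj _ n a
    have h1 : P.extMk (show P.complex.X n ⟶ Y from (P.complex.linearYonedaObj R Y).iCycles n c) (n+1) rfl (cyc_d P n c) = 0 :=
      (congr($(π_homToExt (Y := Y) P n) c)).symm.trans ha
    rcases n with _ | n
    · have h2 := extMk_zero_iff _ _ _ h1
      have : c = 0 := iCycles_inj _ _ (h2.trans (map_zero ((P.complex.linearYonedaObj R Y).iCycles 0).hom).symm)
      rw [this]; exact map_zero ((P.complex.linearYonedaObj R Y).homologyπ 0).hom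
    · rw [P.extMk_eq_zero_iff _ _ _ _ n rfl] at h1
      obtain ⟨g, hg⟩ := h1
      have : c = (P.complex.linearYonedaObj R Y).toCycles n (n+1) g := by
        apply iCycles_inj
        refine hg.symm.trans ?_
        exact (congr($((P.complex.linearYonedaObj R Y).toCycles_i n (n+1)) g)).symm
      rw [this]
      exact congr($((P.complex.linearYonedaObj R Y).toCycles_comp_homologyπ n (n+1)) g)
  · intro x
    obtain ⟨f, hf, rfl⟩ := P.extMk_surjective x (n+1) rfl
    let K := P.complex.linearYonedaObj R Y
    let φ : ModuleCat.of R R ⟶ K.X n := ModuleCat.ofHom (LinearMap.toSpanSingleton R (K.X n) f)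
    have hφ : φ ≫ K.d n (n+1) = 0 := by
      ext
      refine (congrArg (K.d n (n+1)) (one_smul R (show K.X n from f))).trans hf
    refine ⟨K.homologyπ n (K.liftCycles φ (n+1) (by simp) hφ (1 : R)), ?_⟩
    refine (congr($(π_homToExt (Y := Y) P n) _)).trans ?_
    refine (cycToExt_apply P n _).trans ?_
    refine extMk_congr P n ?_ _ _ _ _
    refine (congr($(K.liftCycles_i φ (n+1) (by simp) hφ) (1 : R))).trans ?_
    exact one_smul R (show K.X n from f)

variable {P} {P' : ProjectiveResolution X'} {g : X' ⟶ X} (φ : ProjectiveResolution.Hom P' P g)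

/-- The induced map on Hom complexes. -/
def yonMap (Y : ModuleCat.{u} R) : P.complex.linearYonedaObj R Y ⟶ P'.complex.linearYonedaObj R Y :=
  (HomologicalComplex.unopFunctor _ _).map
    ((((linearYoneda R (ModuleCat.{u} R)).obj Y).rightOp.mapHomologicalComplex _).map φ.hom).op

lemma iso_aux {C : Type*} [Category C] {A B A' B' : C} (e : A ≅ B) (e' : A' ≅ B') (f : A ⟶ A') (g : B ⟶ B')
    (h : f ≫ e'.hom = e.hom ≫ g) : e.inv ≫ f = g ≫ e'.inv := by
  rw [Iso.inv_comp_eq, ← Category.assoc, Iso.eq_comp_inv, h]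

lemma isoExt_nat (n : ℕ) :
    ((Ext R (ModuleCat.{u} R) n).map g.op).app Y ≫ (P'.isoExt n Y).hom =
      (P.isoExt n Y).hom ≫ HomologicalComplex.homologyMap (yonMap φ Y) n := by
  have h1 := ProjectiveResolution.isoLeftDerivedObj_inv_naturality g P' P φ.hom
    (by simpa using φ.hom_f_zero_comp_π_f_zero)
    ((linearYoneda R (ModuleCat.{u} R)).obj Y).rightOp n
  have h2 := HomologicalComplex.homologyOp_hom_naturality (yonMap φ Y) n
  have h3 : ((P'.complex.linearYonedaObj R Y).homologyOp n).inv ≫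
      HomologicalComplex.homologyMap ((HomologicalComplex.opFunctor _ _).map (yonMap φ Y).op) n =
      (HomologicalComplex.homologyMap (yonMap φ Y) n).op ≫ ((P.complex.linearYonedaObj R Y).homologyOp n).inv :=
    iso_aux _ _ _ _ h2
  have h1' := congrArg Quiver.Hom.unop h1
  have h3' := congrArg Quiver.Hom.unop h3
  refine (Category.assoc _ _ _).symm.trans ?_
  refine (congrArg (· ≫ ((P'.complex.linearYonedaObj R Y).homologyOp n).inv.unop) h1').trans ?_
  refine (Category.assoc _ _ _).trans ?_
  refine Eq.trans ?_ (Category.assoc _ _ _).symm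
  exact congrArg (((P.isoLeftDerivedObj ((linearYoneda R (ModuleCat.{u} R)).obj Y).rightOp n).inv).unop ≫ ·) h3'

lemma homToExt_nat (n : ℕ) (z : (P.complex.linearYonedaObj R Y).homology n) :
    homToExt P' n (HomologicalComplex.homologyMap (yonMap φ Y) n z) =
      (Abelian.Ext.mk₀ g).comp (show Abelian.Ext X Y n from homToExt P n z) (zero_add _) := by
  obtain ⟨c, rfl⟩ := homologyπ_surj _ n z
  have e1 : homToExt P n ((P.complex.linearYonedaObj R Y).homologyπ n c) = P.extMk (cyc P n c) (n+1) rfl (cyc_d P n c) :=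
    congr($(π_homToExt (Y := Y) P n) c)
  rw [e1]
  refine Eq.trans ?_ (ProjectiveResolution.mk₀_comp_extMk (cyc P n c) (n+1) rfl (cyc_d P n c) φ).symm
  have e2 : HomologicalComplex.homologyMap (yonMap φ Y) n ((P.complex.linearYonedaObj R Y).homologyπ n c)
    = (P'.complex.linearYonedaObj R Y).homologyπ n (HomologicalComplex.cyclesMap (yonMap φ Y) n c) :=
    congr($(HomologicalComplex.homologyπ_naturality (yonMap φ Y) n) c)
  rw [e2]
  refine (congr($(π_homToExt (Y := Y) P' n) _)).trans ?_
  refine (cycToExt_apply P' n _).trans ?_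
  refine extMk_congr P' n ?_ _ _ (cyc_d P' n _) _
  exact congr($(HomologicalComplex.cyclesMap_i (yonMap φ Y) n) c)

lemma exists_hom (P' : ProjectiveResolution X') (P : ProjectiveResolution X) (g : X' ⟶ X) :
    Nonempty (ProjectiveResolution.Hom P' P g) :=
  ⟨{ hom := ProjectiveResolution.lift g P' P
     hom_f_zero_comp_π_f_zero := by
      have := congr(HomologicalComplex.Hom.f $(ProjectiveResolution.lift_commutes g P' P) 0)
      rw [HomologicalComplex.comp_f, HomologicalComplex.comp_f] at this
      exact this }⟩

def extIso (X Y : ModuleCat.{u} R) (n : ℕ) :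
    ((Ext R (ModuleCat.{u} R) n).obj (Opposite.op X)).obj Y ≅ ModuleCat.of R (Abelian.Ext.{u} X Y n) :=
  (projectiveResolution X).isoExt n Y ≪≫
    (LinearEquiv.ofBijective (homToExt (projectiveResolution X) n).hom (homToExt_bij _ n)).toModuleIso

/-- precomposition -/
def extPre (g : X' ⟶ X) (Y : ModuleCat.{u} R) (n : ℕ) :
    Abelian.Ext.{u} X Y n →ₗ[R] Abelian.Ext.{u} X' Y n :=
  Abelian.Ext.bilinearCompOfLinear R X' X Y 0 n n (zero_add n) (Abelian.Ext.mk₀ g)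

lemma extPre_apply (g : X' ⟶ X) (Y : ModuleCat.{u} R) (n : ℕ) (e : Abelian.Ext.{u} X Y n) :
    extPre g Y n e = (Abelian.Ext.mk₀ g).comp e (zero_add n) := rfl

lemma extIso_nat (g : X' ⟶ X) (Y : ModuleCat.{u} R) (n : ℕ) :
    ((Ext R (ModuleCat.{u} R) n).map g.op).app Y ≫ (extIso X' Y n).hom =
      (extIso X Y n).hom ≫ ModuleCat.ofHom (extPre g Y n) := by
  obtain ⟨φ⟩ := exists_hom (projectiveResolution X') (projectiveResolution X) g
  have h1 := isoExt_nat (Y := Y) φ n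
  have h2 : HomologicalComplex.homologyMap (yonMap φ Y) n ≫ homToExt _ n =
      homToExt _ n ≫ ModuleCat.ofHom (extPre g Y n) := by
    ext z
    exact homToExt_nat φ n z
  change _ ≫ ((projectiveResolution X').isoExt n Y).hom ≫ homToExt _ n =
    (((projectiveResolution X).isoExt n Y).hom ≫ homToExt _ n) ≫ _
  rw [← Category.assoc, h1, Category.assoc, Category.assoc, h2]

section LCdef
variable (J : Ideal R) (i : ℕ) (M : Type u) [AddCommGroup M] [Module R M]

def qmap {m n : ℕ} (h : m ≤ n) : ModuleCat.of R (R ⧸ J ^ n) ⟶ ModuleCat.of R (R ⧸ J ^ m) :=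
  ModuleCat.ofHom (Submodule.mapQ _ _ LinearMap.id (Ideal.pow_le_pow_right h))

lemma qmap_refl (n : ℕ) : qmap J (le_refl n) = 𝟙 _ := by
  ext; rfl
lemma qmap_comp {l m n : ℕ} (h : l ≤ m) (h' : m ≤ n) : qmap J h' ≫ qmap J h = qmap J (h.trans h') := by
  ext; rfl

abbrev LCobj (n : ℕ) : Type u := Abelian.Ext.{u} (ModuleCat.of R (R ⧸ J ^ n)) (ModuleCat.of R M) i

def LCtrans (m n : ℕ) (h : m ≤ n) : LCobj J i M m →ₗ[R] LCobj J i M n :=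
  extPre (qmap J h) (ModuleCat.of R M) i

lemma LCtrans_apply (m n : ℕ) (h : m ≤ n) (e : LCobj J i M m) :
   LCtrans J i M m n h e = (Abelian.Ext.mk₀ (qmap J h)).comp e (zero_add i) := rfl

instance : DirectedSystem (LCobj J i M) (LCtrans J i M · · ·) where
  map_self n x := by
    rw [LCtrans_apply, qmap_refl, Abelian.Ext.mk₀_id_comp]
  map_map l m n hlm hmn x := by
    rw [LCtrans_apply, LCtrans_apply, LCtrans_apply, Abelian.Ext.mk₀_comp_mk₀_assoc, qmap_comp]

/-- Local cohomology as a concrete direct limit. -/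
def LC : Type u := Module.DirectLimit (LCobj J i M) (LCtrans J i M)
instance : AddCommGroup (LC J i M) := inferInstanceAs (AddCommGroup (Module.DirectLimit (LCobj J i M) (LCtrans J i M)))
instance : Module R (LC J i M) := inferInstanceAs (Module R (Module.DirectLimit (LCobj J i M) (LCtrans J i M)))

def LCfunctor : ℕ ⥤ ModuleCat.{u} R where
  obj n := ModuleCat.of R (LCobj J i M n)
  map {m n} h := ModuleCat.ofHom (LCtrans J i M m n h.le)
  map_id n := by
    ext x
    exact DirectedSystem.map_self (f := (LCtrans J i M · · ·)) x
  map_comp {l m n} hij hjk := by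
    ext x
    exact (DirectedSystem.map_map (f := (LCtrans J i M · · ·)) hij.le hjk.le x).symm

def LCcocone : Limits.Cocone (LCfunctor J i M) where
  pt := ModuleCat.of R (LC J i M)
  ι :=
    { app := fun n => ModuleCat.ofHom (Module.DirectLimit.of R ℕ (LCobj J i M) (LCtrans J i M) n)
      naturality := fun _ _ hij => by
        ext x
        exact Module.DirectLimit.of_f (f := LCtrans J i M) (hij := hij.le) (x := x) }

def LCdesc (s : Limits.Cocone (LCfunctor J i M)) : LC J i M →ₗ[R] s.pt :=
    Module.DirectLimit.lift R ℕ (LCobj J i M) (LCtrans J i M) (fun n => (s.ι.app n).hom) fun _ _ h x =>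
      congr($(s.w (homOfLE h)) x)

lemma LCdesc_of (s : Limits.Cocone (LCfunctor J i M)) (n : ℕ) (x : LCobj J i M n) :
    LCdesc J i M s (Module.DirectLimit.of R ℕ (LCobj J i M) (LCtrans J i M) n x) = (s.ι.app n).hom x :=
  Module.DirectLimit.lift_of _ _ _

def LCisColimit : Limits.IsColimit (LCcocone J i M) where
  desc s := ModuleCat.ofHom (LCdesc J i M s)
  fac s n := by
    ext x
    exact LCdesc_of J i M s n x
  uniq s m h := by
    ext x
    refine Module.DirectLimit.induction_on x fun n y => ?_
    exact (congr($(h n) y)).trans (LCdesc_of J i M s n y).symm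

def natIso1 : localCohomology.diagram (localCohomology.idealPowersDiagram J) i ⋙
      (evaluation _ _).obj (ModuleCat.of R M) ≅ (opOpEquivalence ℕ).functor ⋙ LCfunctor J i M :=
  NatIso.ofComponents (fun _ => extIso _ _ i) (fun _ => extIso_nat _ _ _)

def lcIso : (localCohomology J i).obj (ModuleCat.of R M) ≅ ModuleCat.of R (LC J i M) :=
  (Limits.colimitObjIsoColimitCompEvaluation _ _) ≪≫
   (Limits.HasColimit.isoOfNatIso (natIso1 J i M)) ≪≫ (Functor.Final.colimitIso _ _) ≪≫
   (Limits.colimit.isColimit _).coconePointUniqueUpToIso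
     (LCisColimit J i M)

def lcEquiv : (localCohomology J i).obj (ModuleCat.of R M) ≃ₗ[R] LC J i M := (lcIso J i M).toLinearEquiv

end LCdef

end LCaux
end PartA

section PartB
open CategoryTheory
namespace LCaux
variable {R : Type u} [CommRing R]
section LCapi
variable (J : Ideal R)
variable {M N Q : Type u} [AddCommGroup M] [Module R M] [AddCommGroup N] [Module R N]
  [AddCommGroup Q] [Module R Q]

def LCof (i : ℕ) (M : Type u) [AddCommGroup M] [Module R M] (n : ℕ) : LCobj J i M n →ₗ[R] LC J i M :=
  Module.DirectLimit.of R ℕ (LCobj J i M) (LCtrans J i M) n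

lemma LCof_trans {i m n : ℕ} (h : m ≤ n) (x : LCobj J i M m) :
    LCof J i M n (LCtrans J i M m n h x) = LCof J i M m x := Module.DirectLimit.of_f

lemma LC_exists {i : ℕ} (x : LC J i M) : ∃ n e, LCof J i M n e = x := Module.DirectLimit.exists_of x

lemma LCof_zero {i n : ℕ} {x : LCobj J i M n} (h : LCof J i M n x = 0) :
    ∃ m, ∃ h : n ≤ m, LCtrans J i M n m h x = 0 := Module.DirectLimit.of.zero_exact h

/-- postcomposition with an Ext class -/
def LCpost {i j k : ℕ} (α : Abelian.Ext.{u} (ModuleCat.of R M) (ModuleCat.of R N) k) (h : i + k = j) :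
    LC J i M →ₗ[R] LC J j N :=
  Module.DirectLimit.lift R ℕ (LCobj J i M) (LCtrans J i M)
    (fun n => LCof J j N n ∘ₗ (Abelian.Ext.bilinearCompOfLinear R _ _ _ i k j h).flip α)
    (fun m n hmn x => by
      change LCof J j N n ((LCtrans J i M m n hmn x).comp α h) = LCof J j N m (x.comp α h)
      rw [← LCof_trans J hmn, LCtrans_apply, LCtrans_apply, Abelian.Ext.comp_assoc _ _ _ (zero_add i) h (by omega)])

lemma LCpost_of {i j k : ℕ} (α : Abelian.Ext.{u} (ModuleCat.of R M) (ModuleCat.of R N) k) (h : i + k = j) (n : ℕ)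
    (x : LCobj J i M n) : LCpost J α h (LCof J i M n x) = LCof J j N n (x.comp α h) :=
  Module.DirectLimit.lift_of _ _ _

lemma trans_comp {i j k m n : ℕ} (hmn : m ≤ n) (α : Abelian.Ext.{u} (ModuleCat.of R M) (ModuleCat.of R N) k) (h : i + k = j)
    (x : LCobj J i M m) : LCtrans J j N m n hmn (x.comp α h) = (LCtrans J i M m n hmn x).comp α h := by
  rw [LCtrans_apply, LCtrans_apply, Abelian.Ext.comp_assoc _ _ _ (zero_add i) h (by omega)]

def LCmap (i : ℕ) (f : M →ₗ[R] N) : LC J i M →ₗ[R] LC J i N :=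
  LCpost J (Abelian.Ext.mk₀ (ModuleCat.ofHom f)) (add_zero i)

lemma LCmap_of (i : ℕ) (f : M →ₗ[R] N) (n : ℕ) (x : LCobj J i M n) :
    LCmap J i f (LCof J i M n x) = LCof J i N n (x.comp (Abelian.Ext.mk₀ (ModuleCat.ofHom f)) (add_zero i)) :=
  LCpost_of J _ _ _ _

lemma LCmap_id (i : ℕ) : LCmap J i (LinearMap.id : M →ₗ[R] M) = LinearMap.id := by
  ext x
  obtain ⟨n, e, rfl⟩ := LC_exists J x
  rw [LCmap_of, show ModuleCat.ofHom (LinearMap.id : M →ₗ[R] M) = 𝟙 _ from rfl, Abelian.Ext.comp_mk₀_id]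
  rfl

lemma LCmap_comp (i : ℕ) (f : M →ₗ[R] N) (g : N →ₗ[R] Q) (x : LC J i M) :
    LCmap J i (g ∘ₗ f) x = LCmap J i g (LCmap J i f x) := by
  obtain ⟨n, e, rfl⟩ := LC_exists J x
  rw [LCmap_of, LCmap_of, LCmap_of, ModuleCat.ofHom_comp, ← Abelian.Ext.mk₀_comp_mk₀,
    Abelian.Ext.comp_assoc_of_third_deg_zero]

lemma LCmap_smul (i : ℕ) (r : R) (f : M →ₗ[R] N) (x : LC J i M) :
    LCmap J i (r • f) x = r • LCmap J i f x := by
  obtain ⟨n, e, rfl⟩ := LC_exists J x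
  rw [LCmap_of, LCmap_of, show ModuleCat.ofHom (r • f) = r • ModuleCat.ofHom f from rfl,
    Abelian.Ext.mk₀_smul, Abelian.Ext.comp_smul, map_smul]

lemma LCmap_smul_id (i : ℕ) (r : R) (x : LC J i M) :
    LCmap J i (r • (LinearMap.id : M →ₗ[R] M)) x = r • x := by
  rw [LCmap_smul, LCmap_id]; rfl

def LCcongr (i : ℕ) (e : M ≃ₗ[R] N) : LC J i M ≃ₗ[R] LC J i N :=
  LinearEquiv.ofLinearMap (LCmap J i e) (LCmap J i e.symm)
    (by ext x; simp [← LCmap_comp, LCmap_id]) (by ext x; simp [← LCmap_comp, LCmap_id])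

lemma LC_tors (i : ℕ) (x : LC J i M) : ∃ n, ∀ r ∈ J ^ n, r • x = 0 := by
  obtain ⟨n, e, rfl⟩ := LC_exists J x
  refine ⟨n, fun r hr => ?_⟩
  have h : r • 𝟙 (ModuleCat.of R (R ⧸ J ^ n)) = 0 := by
    ext
    change r • (Submodule.Quotient.mk (1:R) : R ⧸ J ^ n) = 0
    rw [← Submodule.Quotient.mk_smul, Submodule.Quotient.mk_eq_zero]
    simpa using hr
  have : r • e = 0 := by
    rw [← Abelian.Ext.mk₀_id_comp e, ← Abelian.Ext.smul_comp, ← Abelian.Ext.mk₀_smul, h,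
      Abelian.Ext.mk₀_zero, Abelian.Ext.zero_comp]
  rw [← map_smul, this, map_zero]

lemma LC_inj (E : Type u) [AddCommGroup E] [Module R E] [Injective (ModuleCat.of R E)] (i : ℕ) :
    Subsingleton (LC J (i+1) E) := by
  refine subsingleton_of_forall_eq 0 fun x => ?_
  obtain ⟨n, e, rfl⟩ := LC_exists J x
  rw [Abelian.Ext.eq_zero_of_injective e, map_zero]

lemma ext_class (f : M →ₗ[R] N) (g : N →ₗ[R] Q) (hf : Function.Injective f) (hg : Function.Surjective g)
    (hfg : Function.Exact f g) : ∃ ε : Abelian.Ext.{u} (ModuleCat.of R Q) (ModuleCat.of R M) 1,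
    (Abelian.Ext.mk₀ (ModuleCat.ofHom f)).comp (Abelian.Ext.mk₀ (ModuleCat.ofHom g)) (add_zero 0) = 0 ∧
    (Abelian.Ext.mk₀ (ModuleCat.ofHom g)).comp ε (zero_add 1) = 0 ∧
    ε.comp (Abelian.Ext.mk₀ (ModuleCat.ofHom f)) (add_zero 1) = 0 ∧
    (∀ (X : ModuleCat.{u} R) (i : ℕ) (x : Abelian.Ext.{u} X (ModuleCat.of R N) i),
      x.comp (Abelian.Ext.mk₀ (ModuleCat.ofHom g)) (add_zero i) = 0 →
      ∃ y : Abelian.Ext.{u} X (ModuleCat.of R M) i, y.comp (Abelian.Ext.mk₀ (ModuleCat.ofHom f)) (add_zero i) = x) ∧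
    (∀ (X : ModuleCat.{u} R) (i : ℕ) (x : Abelian.Ext.{u} X (ModuleCat.of R Q) i),
      x.comp ε (rfl : i + 1 = i + 1) = 0 →
      ∃ y : Abelian.Ext.{u} X (ModuleCat.of R N) i, y.comp (Abelian.Ext.mk₀ (ModuleCat.ofHom g)) (add_zero i) = x) ∧
    (∀ (X : ModuleCat.{u} R) (i : ℕ) (x : Abelian.Ext.{u} X (ModuleCat.of R M) (i+1)),
      x.comp (Abelian.Ext.mk₀ (ModuleCat.ofHom f)) (add_zero (i+1)) = 0 →
      ∃ y : Abelian.Ext.{u} X (ModuleCat.of R Q) i, y.comp ε rfl = x) := by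
  let S : ShortComplex (ModuleCat.{u} R) := ShortComplex.mk (ModuleCat.ofHom f) (ModuleCat.ofHom g)
    (by ext x; exact hfg.apply_apply_eq_zero x)
  have hS : S.ShortExact := ModuleCat.shortComplex_shortExact S hfg hf hg
  have z1 : (Abelian.Ext.mk₀ (ModuleCat.ofHom f)).comp (Abelian.Ext.mk₀ (ModuleCat.ofHom g)) (add_zero 0) = 0 := by
    rw [Abelian.Ext.mk₀_comp_mk₀]
    exact (congrArg Abelian.Ext.mk₀ S.zero).trans (Abelian.Ext.mk₀_zero _ _)
  exact ⟨hS.extClass, z1, hS.comp_extClass, hS.extClass_comp,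
    fun X i x h => Abelian.Ext.covariant_sequence_exact₂ _ hS _ h,
    fun X i x h => Abelian.Ext.covariant_sequence_exact₃ _ hS _ rfl h,
    fun X i x h => Abelian.Ext.covariant_sequence_exact₁ _ hS _ h rfl⟩

lemma LES (f : M →ₗ[R] N) (g : N →ₗ[R] Q) (hf : Function.Injective f) (hg : Function.Surjective g)
    (hfg : Function.Exact f g) : ∃ δ : ∀ i, LC J i Q →ₗ[R] LC J (i+1) M,
      (∀ i, Function.Exact (LCmap J i f) (LCmap J i g)) ∧
      (∀ i, Function.Exact (LCmap J i g) (δ i)) ∧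
      (∀ i, Function.Exact (δ i) (LCmap J (i+1) f)) := by
  obtain ⟨ε, z1, z2, z3, e2, e3, e1⟩ := ext_class f g hf hg hfg
  refine ⟨fun i => LCpost J ε rfl, fun i x => ⟨fun h => ?_, ?_⟩, fun i x => ⟨fun h => ?_, ?_⟩, fun i x => ⟨fun h => ?_, ?_⟩⟩
  · obtain ⟨n, e, rfl⟩ := LC_exists J x
    rw [LCmap_of] at h
    obtain ⟨m, hm, h⟩ := LCof_zero J h
    rw [trans_comp] at h
    obtain ⟨y, hy⟩ := e2 _ _ _ h
    exact ⟨LCof J i M m y, by rw [LCmap_of, ← LCof_trans J hm, hy]⟩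
  · rintro ⟨y, rfl⟩
    obtain ⟨n, e, rfl⟩ := LC_exists J y
    rw [LCmap_of, LCmap_of, Abelian.Ext.comp_assoc_of_third_deg_zero, z1, Abelian.Ext.comp_zero, map_zero]
  · obtain ⟨n, e, rfl⟩ := LC_exists J x
    rw [LCpost_of] at h
    obtain ⟨m, hm, h⟩ := LCof_zero J h
    rw [trans_comp] at h
    obtain ⟨y, hy⟩ := e3 _ _ _ h
    exact ⟨LCof J i N m y, by rw [LCmap_of, ← LCof_trans J hm, hy]⟩
  · rintro ⟨y, rfl⟩
    obtain ⟨n, e, rfl⟩ := LC_exists J y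
    rw [LCmap_of, LCpost_of, Abelian.Ext.comp_assoc_of_second_deg_zero, z2, Abelian.Ext.comp_zero, map_zero]
  · obtain ⟨n, e, rfl⟩ := LC_exists J x
    rw [LCmap_of] at h
    obtain ⟨m, hm, h⟩ := LCof_zero J h
    rw [trans_comp] at h
    obtain ⟨y, hy⟩ := e1 _ _ _ h
    exact ⟨LCof J i Q m y, by rw [LCpost_of, ← LCof_trans J hm, hy]⟩
  · rintro ⟨y, rfl⟩
    obtain ⟨n, e, rfl⟩ := LC_exists J y
    rw [LCpost_of, LCmap_of, Abelian.Ext.comp_assoc_of_third_deg_zero, z3, Abelian.Ext.comp_zero, map_zero]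

/-- torsion submodule -/
def gam (M : Type u) [AddCommGroup M] [Module R M] : Submodule R M where
  carrier := {m | ∃ n, ∀ r ∈ J ^ n, r • m = 0}
  add_mem' := by
    rintro a b ⟨n, hn⟩ ⟨m, hm⟩
    refine ⟨n + m, fun r hr => ?_⟩
    rw [smul_add, hn r (Ideal.pow_le_pow_right (by omega) hr), hm r (Ideal.pow_le_pow_right (by omega) hr), add_zero]
  zero_mem' := ⟨0, by simp⟩
  smul_mem' := by
    rintro c x ⟨n, hn⟩
    exact ⟨n, fun r hr => by rw [smul_comm, hn r hr, smul_zero]⟩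

lemma mem_gam {m : M} : m ∈ gam J M ↔ ∃ n, ∀ r ∈ J ^ n, r • m = 0 := Iff.rfl

def ev1 (n : ℕ) : LCobj J 0 M n →ₗ[R] M where
  toFun e := (Abelian.Ext.linearEquiv₀ (R := R) e).hom (Submodule.Quotient.mk (1:R))
  map_add' x y := by simp
  map_smul' r x := by simp

lemma ev1_mk₀ (n : ℕ) (φ : ModuleCat.of R (R ⧸ J ^ n) ⟶ ModuleCat.of R M) :
    ev1 J n (Abelian.Ext.mk₀ φ) = φ.hom (Submodule.Quotient.mk (1:R)) := by
  have : Abelian.Ext.linearEquiv₀ (R := R) (Abelian.Ext.mk₀ φ) = φ :=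
    (Abelian.Ext.linearEquiv₀ (R := R)).apply_symm_apply φ
  change (Abelian.Ext.linearEquiv₀ (R := R) (Abelian.Ext.mk₀ φ)).hom _ = _
  rw [this]

lemma ex_mk₀ {X Y : ModuleCat.{u} R} (e : Abelian.Ext.{u} X Y 0) : ∃ φ, Abelian.Ext.mk₀ φ = e :=
  ⟨_, Abelian.Ext.mk₀_homEquiv₀_apply e⟩

def LCev : LC J 0 M →ₗ[R] M :=
  Module.DirectLimit.lift R ℕ (LCobj J 0 M) (LCtrans J 0 M) (fun n => ev1 J n) (fun m n h e => by
    obtain ⟨φ, rfl⟩ := ex_mk₀ e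
    rw [LCtrans_apply, Abelian.Ext.mk₀_comp_mk₀, ev1_mk₀, ev1_mk₀]
    rfl)

lemma LCev_of (n : ℕ) (e : LCobj J 0 M n) : LCev J (LCof J 0 M n e) = ev1 J n e := Module.DirectLimit.lift_of _ _ _

lemma LCev_map (f : M →ₗ[R] N) (x : LC J 0 M) : LCev J (LCmap J 0 f x) = f (LCev J x) := by
  obtain ⟨n, e, rfl⟩ := LC_exists J x
  obtain ⟨φ, rfl⟩ := ex_mk₀ e
  rw [LCmap_of, LCev_of, LCev_of, Abelian.Ext.mk₀_comp_mk₀, ev1_mk₀, ev1_mk₀]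
  rfl

lemma LCev_inj : Function.Injective (LCev J (M := M)) := by
  refine (injective_iff_map_eq_zero _).2 fun x hx => ?_
  obtain ⟨n, e, rfl⟩ := LC_exists J x
  obtain ⟨φ, rfl⟩ := ex_mk₀ e
  rw [LCev_of, ev1_mk₀] at hx
  have : φ = 0 := by
    ext
    exact hx
  rw [this, Abelian.Ext.mk₀_zero, map_zero]

lemma LCev_range : LinearMap.range (LCev J (M := M)) = gam J M := by
  ext m
  constructor
  · rintro ⟨x, rfl⟩
    obtain ⟨n, h⟩ := LC_tors J 0 x
    exact ⟨n, fun r hr => by rw [← map_smul, h r hr, map_zero]⟩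
  · rintro ⟨n, h⟩
    let φ : (R ⧸ J ^ n) →ₗ[R] M := Submodule.liftQ _ (LinearMap.toSpanSingleton R M m) (fun r hr => h r hr)
    refine ⟨LCof J 0 M n (Abelian.Ext.mk₀ (ModuleCat.ofHom φ)), ?_⟩
    rw [LCev_of, ev1_mk₀]
    exact one_smul R m

def LC0 : LC J 0 M ≃ₗ[R] gam J M :=
  (LinearEquiv.ofInjective (LCev J) (LCev_inj J)).trans (LinearEquiv.ofEq _ _ (LCev_range J))

lemma LCmap0_inj (f : M →ₗ[R] N) (hf : Function.Injective f) : Function.Injective (LCmap J 0 f) := by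
  intro x y h
  have := congrArg (LCev J) h
  rw [LCev_map, LCev_map] at this
  exact LCev_inj J (hf this)

end LCapi
end LCaux
end PartB

section PartC
open CategoryTheory
namespace LCaux
variable {R : Type u} [CommRing R]
section C1
variable (J : Ideal R)
variable {M N Q : Type u} [AddCommGroup M] [Module R M] [AddCommGroup N] [Module R N]
  [AddCommGroup Q] [Module R Q]

abbrev Z (J : Ideal R) (i : ℕ) (M : Type u) [AddCommGroup M] [Module R M] : Prop := Subsingleton (LC J i M)

variable {J}
lemma Z_congr {i : ℕ} (e : M ≃ₗ[R] N) (h : Z J i M) : Z J i N :=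
  (LCcongr J i e).symm.toEquiv.subsingleton

section

lemma Z_mid (f : M →ₗ[R] N) (g : N →ₗ[R] Q) (hf : Function.Injective f)
    (hg : Function.Surjective g) (hfg : Function.Exact f g)
    {i : ℕ} (h1 : Z J i M) (h2 : Z J i Q) : Z J i N := by
  obtain ⟨δ, e2, e3, e1⟩ := LES J f g hf hg hfg
  refine subsingleton_of_forall_eq 0 fun x => ?_
  obtain ⟨y, rfl⟩ := (e2 i x).1 (Subsingleton.elim _ _)
  rw [Subsingleton.elim y 0, map_zero]

lemma Z_left (f : M →ₗ[R] N) (g : N →ₗ[R] Q) (hf : Function.Injective f)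
    (hg : Function.Surjective g) (hfg : Function.Exact f g)
    {i : ℕ} (h1 : Z J i Q) (h2 : Z J (i+1) N) : Z J (i+1) M := by
  obtain ⟨δ, e2, e3, e1⟩ := LES J f g hf hg hfg
  refine subsingleton_of_forall_eq 0 fun x => ?_
  obtain ⟨y, rfl⟩ := (e1 i x).1 (Subsingleton.elim _ _)
  rw [Subsingleton.elim y 0, map_zero]

lemma Z_right (f : M →ₗ[R] N) (g : N →ₗ[R] Q) (hf : Function.Injective f)
    (hg : Function.Surjective g) (hfg : Function.Exact f g)
    {i : ℕ} (h1 : Z J i N) (h2 : Z J (i+1) M) : Z J i Q := by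
  obtain ⟨δ, e2, e3, e1⟩ := LES J f g hf hg hfg
  refine subsingleton_of_forall_eq 0 fun x => ?_
  obtain ⟨y, rfl⟩ := (e3 i x).1 (Subsingleton.elim _ _)
  rw [Subsingleton.elim y 0, map_zero]

lemma shift (f : M →ₗ[R] N) (g : N →ₗ[R] Q) (hf : Function.Injective f)
    (hg : Function.Surjective g) (hfg : Function.Exact f g)
    {i : ℕ} (h1 : Z J i N) (h2 : Z J (i+1) N) : Nonempty (LC J i Q ≃ₗ[R] LC J (i+1) M) := by
  obtain ⟨δ, e2, e3, e1⟩ := LES J f g hf hg hfg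
  refine ⟨LinearEquiv.ofBijective (δ i) ⟨?_, fun x => (e1 i x).1 (Subsingleton.elim _ _)⟩⟩
  refine (injective_iff_map_eq_zero _).2 fun x hx => ?_
  obtain ⟨y, rfl⟩ := (e3 i x).1 hx
  rw [Subsingleton.elim y 0, map_zero]

lemma map_surj (f : M →ₗ[R] N) (g : N →ₗ[R] Q) (hf : Function.Injective f)
    (hg : Function.Surjective g) (hfg : Function.Exact f g)
    {i : ℕ} (h : Z J i Q) : Function.Surjective (LCmap J i f) := by
  obtain ⟨δ, e2, e3, e1⟩ := LES J f g hf hg hfg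
  exact fun x => (e2 i x).1 (Subsingleton.elim _ _)

lemma map_surj' (f : M →ₗ[R] N) (g : N →ₗ[R] Q) (hf : Function.Injective f)
    (hg : Function.Surjective g) (hfg : Function.Exact f g)
    {i : ℕ} (h : Z J (i+1) M) : Function.Surjective (LCmap J i g) := by
  obtain ⟨δ, e2, e3, e1⟩ := LES J f g hf hg hfg
  exact fun x => (e3 i x).1 (Subsingleton.elim _ _)

lemma map_inj (f : M →ₗ[R] N) (g : N →ₗ[R] Q) (hf : Function.Injective f)
    (hg : Function.Surjective g) (hfg : Function.Exact f g)
    {i : ℕ} (h : Z J i Q) : Function.Injective (LCmap J (i+1) f) := by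
  obtain ⟨δ, e2, e3, e1⟩ := LES J f g hf hg hfg
  refine (injective_iff_map_eq_zero _).2 fun x hx => ?_
  obtain ⟨y, rfl⟩ := (e1 i x).1 hx
  rw [Subsingleton.elim y 0, map_zero]

lemma map_inj_smul (f : M →ₗ[R] N) (g : N →ₗ[R] Q) (hf : Function.Injective f)
    (hg : Function.Surjective g) (hfg : Function.Exact f g)
    {i : ℕ} (h : Z J i Q) : Function.Injective (LCmap J (i+1) f) :=
  map_inj f g hf hg hfg h

lemma Z_one_iff (f : M →ₗ[R] N) (g : N →ₗ[R] Q) (hf : Function.Injective f)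
    (hg : Function.Surjective g) (hfg : Function.Exact f g)
    (h : Z J 1 N) : Z J 1 M ↔ ∀ q ∈ gam J Q, ∃ n ∈ gam J N, g n = q := by
  obtain ⟨δ, e2, e3, e1⟩ := LES J f g hf hg hfg
  constructor
  · intro hz q hq
    rw [← LCev_range] at hq
    obtain ⟨y, rfl⟩ := hq
    obtain ⟨x, rfl⟩ := (e3 0 y).1 (Subsingleton.elim _ _)
    exact ⟨LCev J x, by rw [← LCev_range]; exact ⟨x, rfl⟩, (LCev_map J g x).symm⟩
  · intro hq
    refine subsingleton_of_forall_eq 0 fun x => ?_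
    obtain ⟨y, rfl⟩ := (e1 0 x).1 (Subsingleton.elim _ _)
    obtain ⟨n, hn, h⟩ := hq (LCev J y) (by rw [← LCev_range]; exact ⟨y, rfl⟩)
    rw [← LCev_range] at hn
    obtain ⟨z, rfl⟩ := hn
    rw [← LCev_map] at h
    rw [← LCev_inj J h]
    exact (e3 0 _).2 ⟨z, rfl⟩

end

lemma exact_sub (A : Submodule R M) : Function.Exact A.subtype A.mkQ :=
  LinearMap.exact_subtype_mkQ A

lemma exact_range (f : M →ₗ[R] N) : Function.Exact f (LinearMap.range f).mkQ :=
  LinearMap.exact_iff.2 (by simp)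

lemma Z0_iff : Z J 0 M ↔ gam J M = ⊥ := by
  rw [← Submodule.subsingleton_iff_eq_bot]
  exact (LC0 J).toEquiv.subsingleton_congr

lemma gam_map (f : M →ₗ[R] N) {m : M} (h : m ∈ gam J M) : f m ∈ gam J N := by
  obtain ⟨n, h⟩ := h
  exact ⟨n, fun r hr => by rw [← map_smul, h r hr, map_zero]⟩

lemma gam_of_inj (f : M →ₗ[R] N) (hf : Function.Injective f) {m : M} (h : f m ∈ gam J N) : m ∈ gam J M := by
  obtain ⟨n, h⟩ := h
  exact ⟨n, fun r hr => hf (by rw [map_smul, h r hr, map_zero])⟩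

lemma gam_anti {J J' : Ideal R} (h : J ≤ J') : gam J' M ≤ gam J M := by
  rintro m ⟨n, hn⟩
  exact ⟨n, fun r hr => hn r (Ideal.pow_right_mono h n hr)⟩

lemma Z0_anti {J J' : Ideal R} (h : J ≤ J') (hz : Z J 0 M) : Z J' 0 M := by
  rw [Z0_iff] at *
  exact le_bot_iff.1 (hz ▸ gam_anti h)

lemma Z_inj (E : Type u) [AddCommGroup E] [Module R E] (hE : Module.Injective R E) (i : ℕ) :
    Z J (i+1) E := by
  have := (Module.injective_iff_injective_object R E).1 hE
  exact LC_inj J E i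

lemma exists_inj (M : Type u) [AddCommGroup M] [Module R M] : ∃ (E : ModuleCat.{u} R) (f : M →ₗ[R] E),
    Function.Injective f ∧ Module.Injective R E := by
  refine ⟨Injective.under (ModuleCat.of R M), (Injective.ι (ModuleCat.of R M)).hom,
    (ModuleCat.mono_iff_injective _).1 inferInstance, ?_⟩
  rw [Module.injective_iff_injective_object]
  exact inferInstanceAs (Injective (Injective.under (ModuleCat.of R M)))

def Tors (J : Ideal R) (M : Type u) [AddCommGroup M] [Module R M] : Prop := ∀ m : M, m ∈ gam J M

lemma Tors.surj (g : N →ₗ[R] Q) (hg : Function.Surjective g) (h : Tors J N) : Tors J Q := fun q => by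
  obtain ⟨n, rfl⟩ := hg q
  exact gam_map g (h n)

lemma tors_gam : Tors J (gam J M) := fun m => gam_of_inj (gam J M).subtype Subtype.val_injective m.2

lemma tors_LC (i : ℕ) : Tors J (LC J i M) := fun m => LC_tors J i m

variable [IsNoetherianRing R]

lemma mem_gam_iff {m : M} : m ∈ gam J M ↔ ∀ r ∈ J, ∃ n, r ^ n • m = 0 := by
  constructor
  · rintro ⟨n, h⟩ r hr
    exact ⟨n, h _ (Ideal.pow_mem_pow hr n)⟩
  · intro h
    have : J ≤ (Ideal.span {r | r • m = 0} : Ideal R).radical := by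
      intro r hr
      obtain ⟨n, hn⟩ := h r hr
      exact ⟨n, Ideal.subset_span hn⟩
    obtain ⟨n, hn⟩ := Ideal.exists_pow_le_of_le_radical_of_fg this (IsNoetherian.noetherian J)
    refine ⟨n, fun r hr => ?_⟩
    have h2 : Ideal.span {r | r • m = 0} ≤ LinearMap.ker (LinearMap.toSpanSingleton R M m) :=
      Ideal.span_le.2 fun r hr => hr
    exact h2 (hn hr)

lemma fin_kill (B : Ideal R) (hM : Module.Finite R N) (g : N →ₗ[R] gam B M) :
    ∃ n, ∀ r ∈ B ^ n, ∀ x, r • g x = 0 := by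
  obtain ⟨s, hs⟩ := hM
  have : ∀ x : N, ∃ n, ∀ r ∈ B ^ n, r • g x = 0 := fun x => tors_gam (g x)
  choose k hk using this
  refine ⟨s.sup k, fun r hr x => ?_⟩
  have h2 : Submodule.span R (s : Set N) ≤ LinearMap.ker (r • g) := by
    rw [Submodule.span_le]
    intro y hy
    exact hk y r (Ideal.pow_le_pow_right (Finset.le_sup hy) hr)
  rw [hs] at h2
  exact h2 (Submodule.mem_top : x ∈ ⊤)

lemma gam_injective (B : Ideal R) (E : Type u) [AddCommGroup E] [Module R E] (hE : Module.Injective R E) :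
    Module.Injective R (gam B E) := by
  apply Module.Baer.injective
  intro K g
  obtain ⟨n, hn⟩ := fin_kill B (inferInstanceAs (Module.Finite R K)) g
  obtain ⟨k, hk⟩ := Ideal.exists_pow_inf_eq_pow_smul B (K : Submodule R R)
  have hk := hk (n + k) (by omega)
  rw [Nat.add_sub_cancel] at hk
  let φ : K →ₗ[R] (R ⧸ B ^ (n+k)) := (B ^ (n+k)).mkQ ∘ₗ K.subtype
  have hker : LinearMap.ker φ ≤ LinearMap.ker ((gam B E).subtype ∘ₗ g) := by
    rintro ⟨x, hx⟩ h
    have h1 : x ∈ B ^ (n+k) := by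
      simpa [φ, Ideal.Quotient.eq_zero_iff_mem] using h
    have h2 : x ∈ B ^ n • (B ^ k • ⊤ ⊓ K) := by
      rw [← hk]; exact ⟨by simpa using h1, hx⟩
    have h3 : x ∈ B ^ n • (K : Submodule R R) := Submodule.smul_mono le_rfl inf_le_right h2
    have h4 : ∃ hx' : x ∈ K, g ⟨x, hx'⟩ = 0 := by
      refine Submodule.smul_induction_on h3 ?_ ?_
      · intro r hr y hy
        refine ⟨K.smul_mem r hy, ?_⟩
        rw [← hn r hr ⟨y, hy⟩, ← map_smul]; rfl
      · rintro y z ⟨hy, h⟩ ⟨hz, h'⟩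
        refine ⟨K.add_mem hy hz, ?_⟩
        rw [show (⟨y + z, K.add_mem hy hz⟩ : K) = ⟨y, hy⟩ + ⟨z, hz⟩ from rfl, map_add, h, h', add_zero]
    obtain ⟨hx', h4⟩ := h4
    simp [h4]
  obtain ⟨h, hh⟩ := hE.out ((LinearMap.ker φ).liftQ φ le_rfl)
    (LinearMap.ker_eq_bot.1 (Submodule.ker_liftQ_eq_bot _ _ _ le_rfl)) ((LinearMap.ker φ).liftQ _ hker)
  have hh' : ∀ x : K, h ((B ^ (n+k)).mkQ x) = g x := fun x => by
    simpa [φ] using hh (Submodule.Quotient.mk x)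
  let e : gam B E := ⟨h ((B ^ (n+k)).mkQ 1), n + k, fun r hr => by
    rw [← map_smul, ← map_smul, smul_eq_mul, mul_one, Submodule.mkQ_apply,
      (Submodule.Quotient.mk_eq_zero _).2 hr, map_zero]⟩
  refine ⟨LinearMap.toSpanSingleton R _ e, fun x hx => ?_⟩
  apply Subtype.ext
  rw [← hh' ⟨x, hx⟩]
  simp only [LinearMap.toSpanSingleton_apply, SetLike.val_smul, e]
  rw [← map_smul, ← map_smul, smul_eq_mul, mul_one]

/-- Torsion modules embed in torsion injectives. -/
lemma exists_tors_inj (B : Ideal R) (hN : Tors B N) : ∃ (E : ModuleCat.{u} R) (f : N →ₗ[R] E),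
    Function.Injective f ∧ Module.Injective R E ∧ Tors B E := by
  obtain ⟨E, f, hf, hE⟩ := exists_inj (R := R) N
  refine ⟨ModuleCat.of R (gam B E), f.codRestrict _ (fun x => gam_map f (hN x)), ?_, gam_injective B E hE, tors_gam⟩
  intro x y h
  exact hf congr(($h).1)

lemma L2 (i : ℕ) : ∀ (N : Type u) [AddCommGroup N] [Module R N], Tors J N → Z J (i+1) N := by
  induction i with
  | zero =>
    intro N _ _ hN
    obtain ⟨E, f, hf, hE, hT⟩ := exists_tors_inj J hN
    refine (Z_one_iff f _ hf (Submodule.mkQ_surjective _) (exact_range f) (Z_inj E hE 0)).2 fun q _ => ?_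
    obtain ⟨n, rfl⟩ := Submodule.mkQ_surjective _ q
    exact ⟨n, hT n, rfl⟩
  | succ i ih =>
    intro N _ _ hN
    obtain ⟨E, f, hf, hE, hT⟩ := exists_tors_inj J hN
    exact Z_left f _ hf (Submodule.mkQ_surjective _) (exact_range f)
      (ih _ (hT.surj _ (Submodule.mkQ_surjective _))) (Z_inj E hE _)

lemma L2' {i : ℕ} (hi : 0 < i) (hN : Tors J N) : Z J i N := by
  obtain ⟨i, rfl⟩ := Nat.exists_eq_succ_of_ne_zero hi.ne'
  exact L2 i N hN

lemma gam_eq_of_tors (x : R) (hN : Tors (Ideal.span {x}) N) : gam (Ideal.span {x} ⊔ J) N = gam J N := by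
  refine le_antisymm (gam_anti le_sup_right) fun m hm => ?_
  obtain ⟨k, hk⟩ := hm
  obtain ⟨n, hn⟩ := hN m
  refine ⟨n + k, fun r hr => ?_⟩
  have := Ideal.sup_pow_add_le_pow_sup_pow hr
  obtain ⟨a, ha, b, hb, rfl⟩ := Submodule.mem_sup.1 this
  rw [add_smul, hn a ha, hk b hb, add_zero]

lemma L3 (x : R) (i : ℕ) : ∀ (N : Type u) [AddCommGroup N] [Module R N], Tors (Ideal.span {x}) N → Z J i N →
    Z (Ideal.span {x} ⊔ J) i N := by
  induction i with
  | zero =>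
    intro N _ _ hN h
    rw [Z0_iff] at *
    rw [gam_eq_of_tors x hN, h]
  | succ i ih =>
    intro N _ _ hN h
    obtain ⟨E, f, hf, hE, hT⟩ := exists_tors_inj _ hN
    have hT' := hT.surj _ (LinearMap.range f).mkQ_surjective
    have hs := (LinearMap.range f).mkQ_surjective
    rcases i with _ | i
    · rw [Z_one_iff f _ hf hs (exact_range f) (Z_inj E hE 0)] at *
      rw [gam_eq_of_tors x hT, gam_eq_of_tors x hT']
      exact h
    · exact Z_left f _ hf hs (exact_range f) (ih _ hT' (Z_right f _ hf hs (exact_range f) (Z_inj E hE _) h))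
        (Z_inj E hE _)

lemma Z_of_inj {x : R} (hx : x ∈ J) (i : ℕ)
    (h : Function.Injective (LCmap J i (x • (LinearMap.id : N →ₗ[R] N)))) : Z J i N := by
  have hinj : ∀ y : LC J i N, x • y = 0 → y = 0 := by
    intro y hy
    apply h
    rw [map_zero, ← hy]
    exact LCmap_smul_id J i x y
  refine subsingleton_of_forall_eq 0 fun y => ?_
  obtain ⟨n, hn⟩ := LC_tors J i y
  replace hn := hn _ (Ideal.pow_mem_pow hx n)
  induction n with
  | zero => simpa using hn
  | succ n ih =>
    rw [pow_succ', mul_smul] at hn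
    exact ih (hinj _ hn)

lemma L5 {x : R} (hx : x ∈ J) (h : Function.Bijective (x • (LinearMap.id : N →ₗ[R] N))) (i : ℕ) : Z J i N :=
  Z_of_inj hx i (LCcongr J i (LinearEquiv.ofBijective _ h)).injective

lemma L4 (rs : List R) : ∀ (N : Type u) [AddCommGroup N] [Module R N] (i : ℕ), rs.length < i →
    Z (Ideal.ofList rs) i N := by
  induction rs with
  | nil =>
    intro N _ _ i hi
    refine L2' hi fun m => ⟨1, fun r hr => ?_⟩
    rw [Ideal.ofList_nil, pow_one] at hr
    rw [(Submodule.mem_bot R).1 hr, zero_smul]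
  | cons x rs ih =>
    intro N _ _ i hi
    rw [List.length_cons] at hi
    obtain ⟨i, rfl⟩ := Nat.exists_eq_succ_of_ne_zero (by omega : i ≠ 0)
    rw [Ideal.ofList_cons]
    set G := gam (Ideal.span {x}) N
    have h1 : Z (Ideal.span {x} ⊔ Ideal.ofList rs) (i+1) G := L3 x _ _ tors_gam (ih _ _ (by omega))
    refine Z_mid G.subtype G.mkQ G.injective_subtype G.mkQ_surjective (exact_sub G) h1 ?_
    let f := LocalizedModule.mkLinearMap (Submonoid.powers x) (N ⧸ G)
    have hx0 : ∀ y : N ⧸ G, ∀ n : ℕ, x ^ n • y = 0 → y = 0 := by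
      intro y n hy
      obtain ⟨y, rfl⟩ := G.mkQ_surjective y
      rw [← map_smul, Submodule.mkQ_apply, Submodule.Quotient.mk_eq_zero] at hy
      rw [Submodule.mkQ_apply, Submodule.Quotient.mk_eq_zero]
      rw [mem_gam_iff] at hy ⊢
      intro r hr
      obtain ⟨s, rfl⟩ := Ideal.mem_span_singleton'.1 hr
      obtain ⟨k, hk⟩ := hy x (Ideal.mem_span_singleton_self x)
      refine ⟨k + n, ?_⟩
      rw [mul_pow, mul_smul, pow_add x, mul_smul (x ^ k), hk, smul_zero]
    have hf : Function.Injective f := by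
      refine (injective_iff_map_eq_zero f).2 fun y hy => ?_
      have := (IsLocalizedModule.eq_zero_iff (Submonoid.powers x) f).1 hy
      obtain ⟨⟨_, n, rfl⟩, h⟩ := this
      exact hx0 y n h
    have hs := (LinearMap.range f).mkQ_surjective
    have hC : Tors (Ideal.span {x}) (LocalizedModule (Submonoid.powers x) (N ⧸ G) ⧸ LinearMap.range f) := by
      intro y
      rw [mem_gam_iff]
      intro r hr
      obtain ⟨s, rfl⟩ := Ideal.mem_span_singleton'.1 hr
      obtain ⟨z, rfl⟩ := hs y
      obtain ⟨⟨w, ⟨_, n, rfl⟩⟩, h⟩ := IsLocalizedModule.surj (Submonoid.powers x) f z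
      refine ⟨n, ?_⟩
      rw [mul_pow, mul_smul, ← map_smul]
      have h' : x ^ n • z = f w := h
      rw [h', Submodule.mkQ_apply, (Submodule.Quotient.mk_eq_zero _).2 (LinearMap.mem_range_self f w), smul_zero]
    refine Z_left f _ hf hs (exact_range f) (L3 x i _ hC (ih _ _ (by omega)))
      (L5 (x := x) (Ideal.mem_sup_left (Ideal.mem_span_singleton_self x)) ?_ _)
    have := (Module.End.isUnit_iff _).1 (IsLocalizedModule.map_units f ⟨x, Submonoid.mem_powers x⟩)
    exact this

lemma L6 (I : Ideal R) (hQ : gam I Q = ⊥) : ∃ (E : ModuleCat.{u} R) (f : Q →ₗ[R] E),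
    Function.Injective f ∧ Module.Injective R E ∧ gam I E = ⊥ := by
  obtain ⟨E, f, hf, hE⟩ := exists_inj (R := R) Q
  have hG := gam_injective I E hE
  obtain ⟨r, hr⟩ := hG.out (gam I E).subtype (gam I E).injective_subtype LinearMap.id
  have hr : ∀ x : gam I E, r x = x := hr
  let π : E →ₗ[R] LinearMap.ker r := (LinearMap.id - (gam I E).subtype ∘ₗ r).codRestrict _ (fun e => by
    simp [LinearMap.mem_ker, hr])
  have hπ : ∀ e, (π e : E) = e - r e := fun e => rfl
  refine ⟨ModuleCat.of R (LinearMap.ker r), π ∘ₗ f, ?_, ?_, ?_⟩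
  · refine (injective_iff_map_eq_zero (π ∘ₗ f)).2 fun q hq => ?_
    have h1 : (π (f q) : E) = 0 := congrArg Subtype.val hq
    rw [hπ, sub_eq_zero] at h1
    have : f q ∈ gam I E := h1 ▸ (r (f q)).2
    have h2 : q ∈ gam I Q := gam_of_inj f hf this
    rw [hQ] at h2
    exact h2
  · constructor
    intro X Y _ _ _ _ a ha g
    obtain ⟨h, hh⟩ := hE.out a ha ((LinearMap.ker r).subtype ∘ₗ g)
    refine ⟨π ∘ₗ h, fun x => Subtype.ext ?_⟩
    rw [LinearMap.comp_apply, hπ, hh]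
    simp
  · rw [eq_bot_iff]
    rintro ⟨e, he⟩ hm
    have h1 : e ∈ gam I E := gam_map (LinearMap.ker r).subtype hm
    have h2 := hr ⟨e, h1⟩
    rw [LinearMap.mem_ker.1 he] at h2
    have : e = 0 := (congrArg Subtype.val h2).symm
    simpa using this

lemma L6' {I : Ideal R} (hQ : Z I 0 Q) : ∃ (E : ModuleCat.{u} R) (f : Q →ₗ[R] E),
    Function.Injective f ∧ ∀ c, I ≤ c → ∀ i, Z c i E := by
  obtain ⟨E, f, hf, hE, h⟩ := L6 I (Z0_iff.1 hQ)
  refine ⟨E, f, hf, fun c hc i => ?_⟩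
  rcases i with _ | i
  · exact Z0_anti hc (Z0_iff.2 h)
  · exact Z_inj E hE i

lemma Vlem {I c : Ideal R} (hc : I ≤ c) (i : ℕ) : ∀ (Q : Type u) [AddCommGroup Q] [Module R Q],
    (∀ j ≤ i, Z I j Q) → Z c i Q := by
  induction i with
  | zero => intro Q _ _ h; exact Z0_anti hc (h 0 le_rfl)
  | succ i ih =>
    intro Q _ _ h
    obtain ⟨E, f, hf, hE⟩ := L6' (h 0 (Nat.zero_le _))
    have hs := (LinearMap.range f).mkQ_surjective
    refine Z_left f _ hf hs (exact_range f) (ih _ fun j hj => ?_) (hE c hc _)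
    exact Z_right f _ hf hs (exact_range f) (hE I le_rfl _) (h _ (by omega))

lemma L7 {I c : Ideal R} (hc : I ≤ c) (t : ℕ) : ∀ (M : Type u) [AddCommGroup M] [Module R M],
    (∀ i, i ≠ t → Z I i M) → (∀ j < t, Z c j M) ∧ ∀ i, Nonempty (LC c (i + t) M ≃ₗ[R] LC c i (LC I t M)) := by
  induction t with
  | zero =>
    intro M _ _ h
    refine ⟨by simp, fun i => ?_⟩
    set G := gam I M
    have hx := exact_sub G
    have hI := G.injective_subtype
    have hS := G.mkQ_surjective
    have hQ : ∀ i, Z I i (M ⧸ G) := by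
      intro i
      rcases i with _ | i
      · have h1 := map_surj' _ _ hI hS hx (L2 (J := I) 0 G tors_gam)
        refine subsingleton_of_forall_eq 0 fun y => ?_
        obtain ⟨x, rfl⟩ := h1 y
        apply LCev_inj
        rw [LCev_map, map_zero, Submodule.mkQ_apply, Submodule.Quotient.mk_eq_zero]
        change _ ∈ gam I M
        rw [← LCev_range]
        exact ⟨x, rfl⟩
      · exact Z_right _ _ hI hS hx (h _ (by omega)) (L2 _ G tors_gam)
    have hQc : ∀ i, Z c i (M ⧸ G) := fun i => Vlem hc i _ fun j _ => hQ j
    have hb : Function.Bijective (LCmap c i G.subtype) := by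
      refine ⟨?_, map_surj _ _ hI hS hx (hQc i)⟩
      rcases i with _ | i
      · exact LCmap0_inj c _ hI
      · exact map_inj _ _ hI hS hx (hQc i)
    exact ⟨(LinearEquiv.ofBijective _ hb).symm.trans (LCcongr c i (LC0 I).symm)⟩
  | succ t ih =>
    intro M _ _ h
    obtain ⟨E, f, hf, hE⟩ := L6' (h 0 (by omega))
    have hs := (LinearMap.range f).mkQ_surjective
    obtain ⟨h1, h2⟩ := ih (E ⧸ LinearMap.range f) (fun i hi =>
      Z_right f _ hf hs (exact_range f) (hE I le_rfl _) (h _ (by omega)))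
    constructor
    · intro j hj
      rcases j with _ | j
      · exact Z0_anti hc (h 0 (by omega))
      · exact Z_left f _ hf hs (exact_range f) (h1 j (by omega)) (hE c hc _)
    · intro i
      obtain ⟨e1⟩ := h2 i
      obtain ⟨e2⟩ := shift f _ hf hs (exact_range f) (hE c hc (i+t)) (hE c hc (i+t+1))
      obtain ⟨e3⟩ := shift f _ hf hs (exact_range f) (hE I le_rfl t) (hE I le_rfl (t+1))
      exact ⟨e2.symm.trans (e1.trans (LCcongr c i e3))⟩

open Pointwise in
lemma L8 (a : Ideal R) (rs : List R) : ∀ (M : Type u) [AddCommGroup M] [Module R M], (∀ r ∈ rs, r ∈ a) →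
    RingTheory.Sequence.IsWeaklyRegular M rs →
    (∀ i < rs.length, Z a i M) ∧ (gam a (M ⧸ (Ideal.ofList rs • ⊤ : Submodule R M)) ≠ ⊥ → ¬ Z a rs.length M) := by
  induction rs with
  | nil =>
    intro M _ _ _ _
    refine ⟨by simp, fun h hz => h ?_⟩
    rw [List.length_nil] at hz
    rw [← Z0_iff]
    refine Z_congr (Submodule.quotEquivOfEqBot _ ?_).symm hz
    simp
  | cons x rs ih =>
    intro M _ _ hr hreg
    rw [RingTheory.Sequence.isWeaklyRegular_cons_iff] at hreg
    obtain ⟨hx, hreg⟩ := hreg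
    have hxa : x ∈ a := hr x (by simp)
    obtain ⟨h1, h2⟩ := ih (QuotSMulTop x M) (fun r h => hr r (by simp [h])) hreg
    have hf : Function.Injective (x • (LinearMap.id : M →ₗ[R] M)) := hx
    have hs := (x • (⊤ : Submodule R M)).mkQ_surjective
    have hex : Function.Exact (x • (LinearMap.id : M →ₗ[R] M)) (x • (⊤ : Submodule R M)).mkQ := by
      intro y
      rw [Submodule.mkQ_apply, Submodule.Quotient.mk_eq_zero, Submodule.mem_smul_pointwise_iff_exists]
      simp
    have hz : ∀ i < rs.length + 1, Z a i M := by
      intro i hi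
      refine Z_of_inj hxa i ?_
      rcases i with _ | i
      · exact LCmap0_inj a _ hf
      · exact map_inj _ _ hf hs hex (h1 i (by omega))
    refine ⟨by simpa using hz, fun hg hz' => ?_⟩
    rw [List.length_cons] at hz'
    refine h2 (fun h => hg ?_) (Z_right _ _ hf hs hex (hz _ (by omega)) hz')
    rw [← Z0_iff] at h ⊢
    exact Z_congr (Submodule.quotOfListConsSMulTopEquivQuotSMulTopInner M x rs).symm h

lemma gam_sup {I K : Ideal R} {m : M} (h1 : m ∈ gam I M) (h2 : m ∈ gam K M) : m ∈ gam (I ⊔ K) M := by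
  obtain ⟨n, hn⟩ := h1
  obtain ⟨k, hk⟩ := h2
  refine ⟨n + k, fun r hr => ?_⟩
  have := Ideal.sup_pow_add_le_pow_sup_pow hr
  obtain ⟨a, ha, b, hb, rfl⟩ := Submodule.mem_sup.1 this
  rw [add_smul, hn a ha, hk b hb, add_zero]

lemma tors_quot {K a c : Ideal R} (h : c * a ≤ K.radical) (hN : Tors K N) : Tors a (N ⧸ gam c N) := by
  intro y
  obtain ⟨n, rfl⟩ := (gam c N).mkQ_surjective y
  have h1 : n ∈ gam (c * a) N := by
    rw [mem_gam_iff]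
    intro r hr
    obtain ⟨k, hk⟩ := h hr
    obtain ⟨m, hm⟩ := mem_gam_iff.1 (hN n) _ hk
    exact ⟨k * m, by rw [pow_mul, hm]⟩
  obtain ⟨q, hq⟩ := h1
  refine ⟨q, fun r hr => ?_⟩
  rw [← map_smul, Submodule.mkQ_apply, Submodule.Quotient.mk_eq_zero]
  refine ⟨q, fun s hs => ?_⟩
  rw [← mul_smul]
  apply hq
  rw [mul_pow]
  exact Ideal.mul_mem_mul hs hr

lemma tors_LC_ann (I : Ideal R) (i : ℕ) : Tors (I ⊔ Module.annihilator R M) (LC I i M) := by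
  intro m
  refine gam_sup (tors_LC i m) ⟨1, fun r hr => ?_⟩
  rw [pow_one, Module.mem_annihilator] at hr
  rw [← LCmap_smul_id]
  have : r • (LinearMap.id : M →ₗ[R] M) = (0 : R) • LinearMap.id := by
    ext x; simp [hr x]
  rw [this, LCmap_smul, zero_smul]

lemma rad_le [Module.Finite R M] (I a : Ideal R) :
    sInf {p | p ∈ associatedPrimes R (M ⧸ (I • (⊤ : Submodule R M))) ∧ ¬ a ≤ p} * a ≤
      (I ⊔ Module.annihilator R M).radical := by
  rw [Ideal.radical_eq_sInf]
  refine le_sInf ?_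
  rintro q ⟨hq, hqp⟩
  have h1 : (⟨q, hqp⟩ : PrimeSpectrum R) ∈ Module.support R (M ⧸ (I • (⊤ : Submodule R M))) := by
    rw [Module.support_quotient]
    refine ⟨?_, le_sup_left.trans hq⟩
    rw [Module.support_eq_zeroLocus]
    exact le_sup_right.trans hq
  rw [Module.support_eq_zeroLocus] at h1
  have h1 : Module.annihilator R (M ⧸ (I • (⊤ : Submodule R M))) ≤ q := h1
  obtain ⟨p, hp, hpq⟩ := Ideal.exists_minimalPrimes_le h1
  have hp' := Module.associatedPrimes.minimalPrimes_annihilator_subset_associatedPrimes R _ hp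
  by_cases hap : a ≤ p
  · exact Ideal.mul_le_right.trans (hap.trans hpq)
  · have h5 : sInf {p | p ∈ associatedPrimes R (M ⧸ (I • (⊤ : Submodule R M))) ∧ ¬ a ≤ p} ≤ p :=
      sInf_le (a := p) ⟨hp', hap⟩
    exact Ideal.mul_le_left.trans (h5.trans hpq)

lemma I_le (I a : Ideal R) :
    I ≤ sInf {p | p ∈ associatedPrimes R (M ⧸ (I • (⊤ : Submodule R M))) ∧ ¬ a ≤ p} := by
  refine le_sInf ?_
  rintro p ⟨hp, -⟩
  refine le_trans ?_ (IsAssociatedPrime.annihilator_le hp)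
  rw [Submodule.annihilator_top]
  intro r hr
  rw [Module.mem_annihilator]
  intro m
  obtain ⟨m, rfl⟩ := Submodule.mkQ_surjective _ m
  rw [← map_smul, Submodule.mkQ_apply, Submodule.Quotient.mk_eq_zero]
  exact Submodule.smul_mem_smul hr trivial

lemma ind_one {a c : Ideal R} (hT : Tors a (N ⧸ gam c N)) :
    (∀ i, 1 ≤ i → Z a i (gam c N) → Z a i N) ∧ (∀ i, 2 ≤ i → Z a i N → Z a i (gam c N)) := by
  set G := gam c N
  have hx := exact_sub G
  have hI := G.injective_subtype
  have hS := G.mkQ_surjective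
  constructor
  · intro i hi hz
    exact Z_mid _ _ hI hS hx hz (L2' hi hT)
  · intro i hi hz
    obtain ⟨i, rfl⟩ := Nat.exists_eq_succ_of_ne_zero (by omega : i ≠ 0)
    exact Z_left _ _ hI hS hx (L2' (by omega) hT) hz

end C1
end LCaux
end PartC

namespace LCaux
section D1
variable {R : Type u} [CommRing R]
variable {M : Type u} [AddCommGroup M] [Module R M]

lemma cohDim_eq (a : Ideal R) (M : Type u) [AddCommGroup M] [Module R M] :
    cohDim a M = sSup {n : ℕ∞ | ∃ i : ℕ, n = i ∧ ¬ Z a i M} := by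
  unfold cohDim
  congr 1
  ext n
  refine exists_congr fun i => and_congr_right fun _ => ?_
  rw [not_subsingleton_iff_nontrivial]
  exact (lcEquiv a i M).toEquiv.nontrivial_congr

lemma le_cohDim {a : Ideal R} {i : ℕ} (h : ¬ Z a i M) : (i : ℕ∞) ≤ cohDim a M := by
  rw [cohDim_eq]
  exact le_sSup ⟨i, rfl, h⟩

lemma cohDim_le {a : Ideal R} {n : ℕ∞} (h : ∀ i : ℕ, ¬ Z a i M → (i : ℕ∞) ≤ n) : cohDim a M ≤ n := by
  rw [cohDim_eq]
  refine sSup_le ?_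
  rintro _ ⟨i, rfl, hi⟩
  exact h i hi

lemma mem_modColon {N : Submodule R M} {a : Ideal R} {m : M} :
    m ∈ Submodule.modColon N a ↔ ∀ r ∈ a, r • m ∈ N := by
  simp [Submodule.modColon]

lemma linked_gam {I a b : Ideal R} (h : Ideal.IsLinkedBy M I a b) :
    gam a (M ⧸ (I • (⊤ : Submodule R M))) ≠ ⊥ := by
  obtain ⟨-, -, ha, -, h1, h2⟩ := h
  intro hg
  apply ha
  rw [← h2, eq_top_iff]
  intro x _
  rw [mem_modColon]
  intro r hr
  have hm : r • x ∈ Submodule.modColon (I • (⊤ : Submodule R M)) a := by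
    rw [h1]; exact Submodule.smul_mem_smul hr trivial
  rw [mem_modColon] at hm
  have : (I • (⊤ : Submodule R M)).mkQ (r • x) ∈ gam a (M ⧸ (I • (⊤ : Submodule R M))) := by
    refine ⟨1, fun s hs => ?_⟩
    rw [pow_one] at hs
    rw [← map_smul, Submodule.mkQ_apply, Submodule.Quotient.mk_eq_zero]
    exact hm s hs
  rw [hg, Submodule.mem_bot, Submodule.mkQ_apply, Submodule.Quotient.mk_eq_zero] at this
  exact this

variable [IsNoetherianRing R]

lemma grade_eq {a : Ideal R} {rs : List R} (hrs : IsRegular M rs) (hra : ∀ r ∈ rs, r ∈ a)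
    (hz : ¬ Z a rs.length M) : gradeM a M = rs.length := by
  unfold gradeM
  refine IsGreatest.csSup_eq ⟨⟨rs, rfl, hra, hrs⟩, ?_⟩
  rintro _ ⟨rs', rfl, hra', hrs'⟩
  by_contra hlt
  exact hz ((L8 a rs' M hra' hrs'.toIsWeaklyRegular).1 _ (not_le.1 hlt))

theorem main [Module.Finite R M] (I a : Ideal R) (h : ∃ b, Ideal.IsLinkedBy M I a b) :
    cohDim a M = (gradeM a M : ℕ∞) ∨
      cohDim a M =
        cohDim a
          ↥((localCohomology
              (sInf {p | p ∈ associatedPrimes R (M ⧸ (I • (⊤ : Submodule R M))) ∧ ¬ a ≤ p})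
              (gradeM a M)).obj (ModuleCat.of R M)) +
          (gradeM a M : ℕ∞) := by
  obtain ⟨b, hl⟩ := h
  have hg := linked_gam hl
  obtain ⟨⟨rs, hrs, rfl⟩, hIab, -⟩ := hl
  have hIa := hIab.trans inf_le_left
  have hmem : ∀ r ∈ rs, r ∈ Ideal.ofList rs := fun r hr => Ideal.subset_span hr
  have h8 := L8 a rs M (fun r hr => hIa (hmem r hr)) hrs.toIsWeaklyRegular
  have ht := h8.2 hg
  rw [grade_eq hrs (fun r hr => hIa (hmem r hr)) ht]
  have h8I := L8 (Ideal.ofList rs) rs M hmem hrs.toIsWeaklyRegular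
  generalize hc : sInf {p | p ∈ associatedPrimes R (M ⧸ (Ideal.ofList rs • (⊤ : Submodule R M))) ∧ ¬ a ≤ p} = c
  have hIc : Ideal.ofList rs ≤ c := hc ▸ I_le _ _
  have hrad : c * a ≤ _ := hc ▸ rad_le (M := M) (Ideal.ofList rs) a
  have hT := tors_quot hrad (tors_LC_ann (M := M) (Ideal.ofList rs) rs.length)
  have hI : ∀ i, i ≠ rs.length → Z (Ideal.ofList rs) i M := by
    intro i hi
    rcases lt_or_gt_of_ne hi with h | h
    · exact h8I.1 i h
    · exact L4 rs M i h
  obtain ⟨-, ha7⟩ := L7 hIa rs.length M hI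
  obtain ⟨-, hc7⟩ := L7 hIc rs.length M hI
  obtain ⟨e1⟩ := hc7 0
  rw [zero_add] at e1
  set t := rs.length
  set N := LC (Ideal.ofList rs) t M
  have e2 : ↥((localCohomology c t).obj (ModuleCat.of R M)) ≃ₗ[R] gam c N :=
    (lcEquiv c t M).trans (e1.trans (LC0 c))
  have hZ : ∀ i, Z a (i + t) M ↔ Z a i N := fun i => by
    obtain ⟨e⟩ := ha7 i
    exact e.toEquiv.subsingleton_congr
  obtain ⟨o1, o2⟩ := ind_one hT
  have htle : (t : ℕ∞) ≤ cohDim a M := le_cohDim ht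
  by_cases hA : ∀ i, 1 ≤ i → Z a i N
  · left
    refine le_antisymm (cohDim_le fun i hi => ?_) htle
    by_contra hlt
    rw [not_le, Nat.cast_lt] at hlt
    obtain ⟨k, rfl⟩ := Nat.exists_eq_add_of_lt hlt
    apply hi
    rw [show t + k + 1 = (k + 1) + t by omega, hZ]
    exact hA _ (by omega)
  · right
    push Not at hA
    obtain ⟨i0, hi0, hn0⟩ := hA
    have hn0' : ¬ Z a i0 N := by
      rw [Z, not_subsingleton_iff_nontrivial]; exact hn0
    have hge : ((i0 + t : ℕ) : ℕ∞) ≤ cohDim a M := le_cohDim (by rw [hZ]; exact hn0')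
    refine le_antisymm (cohDim_le fun i hi => ?_) ?_
    · rcases le_or_gt i t with h | h
      · exact (Nat.cast_le.2 h).trans le_add_self
      · obtain ⟨k, rfl⟩ := Nat.exists_eq_add_of_lt h
        rw [show t + k + 1 = (k + 1) + t by omega] at hi ⊢
        rw [hZ] at hi
        push_cast
        refine add_le_add_left ?_ _
        have := le_cohDim (i := k + 1) (a := a) (fun hz => hi (o1 _ (by omega) (Z_congr e2 hz)))
        push_cast at this
        exact this
    · refine add_le_of_le_tsub_right_of_le htle (cohDim_le fun i hi => ?_)
      refine ENat.le_sub_of_add_le_right (ENat.natCast_ne_top t) ?_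
      rcases le_or_gt i 1 with h | h
      · refine le_trans ?_ hge
        exact_mod_cast (by omega : i + t ≤ i0 + t)
      · have := le_cohDim (i := i + t) (a := a) (M := M) (fun hz => hi
          (Z_congr e2.symm (o2 i h ((hZ i).1 hz))))
        push_cast at this
        exact this
end D1
end LCaux

variable {R : Type u} [CommRing R] [IsNoetherianRing R]
variable {M : Type u} [AddCommGroup M] [Module R M] [Module.Finite R M] [Nontrivial M]

theorem stmt9 (I a : Ideal R) (h : ∃ b, Ideal.IsLinkedBy M I a b)
    (hass : ∀ p ∈ associatedPrimes R (M ⧸ (I • (⊤ : Submodule R M))),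
      ∀ q ∈ associatedPrimes R (M ⧸ (I • (⊤ : Submodule R M))), q ≤ p → q = p) :
    cohDim a M = (gradeM a M : ℕ∞) ∨
      cohDim a M =
        cohDim a
          ↥((localCohomology
              (sInf {p | p ∈ associatedPrimes R (M ⧸ (I • (⊤ : Submodule R M))) ∧ ¬ a ≤ p})
              (gradeM a M)).obj (ModuleCat.of R M)) +
          (gradeM a M : ℕ∞) := by
  exact LCaux.main I a h
end
end

section
/- Let a and b be geometrically linked by I over M (linked with aM ∩ bM = IM), with I generated by an M-regular sequence of length t, and suppose M is not relative Cohen-Macaulay with respect to a (i.e., cd(a, M) > grade_M(a)). Then cd(a, M) = cd(a, H^{grade_M a}_b(M)) + grade_M(a). -/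
universe u

open RingTheory.Sequence CategoryTheory

noncomputable section

namespace LinkAux
open Limits
set_option linter.unusedSectionVars false

set_option linter.unusedSectionVars false
section LES
variable {C : Type*} [Category C] {D : Type*} [Category D] [Abelian C] [Abelian D]
  [HasProjectiveResolutions C]
variable {F₁ F₂ F₃ : C ⥤ D} [F₁.Additive] [F₂.Additive] [F₃.Additive]
variable (α : F₁ ⟶ F₂) (β : F₂ ⟶ F₃) (w : α ≫ β = 0)

/-- short complex of complexes -/
def cplx (P : ChainComplex C ℕ) : ShortComplex (ChainComplex D ℕ) :=
  ShortComplex.mk ((NatTrans.mapHomologicalComplex α _).app P)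
    ((NatTrans.mapHomologicalComplex β _).app P) (by
      ext n
      have := congrArg (fun t => NatTrans.app t (P.X n)) w
      exact this)

/-- functoriality -/
def cplxMap {P Q : ChainComplex C ℕ} (f : P ⟶ Q) : cplx α β w P ⟶ cplx α β w Q where
  τ₁ := (F₁.mapHomologicalComplex _).map f
  τ₂ := (F₂.mapHomologicalComplex _).map f
  τ₃ := (F₃.mapHomologicalComplex _).map f
  comm₁₂ := ((NatTrans.mapHomologicalComplex α _).naturality f)
  comm₂₃ := ((NatTrans.mapHomologicalComplex β _).naturality f)

variable (hex : ∀ P : C, Projective P → (ShortComplex.mk (α.app P) (β.app P)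
  (by simpa using congrArg (fun t => NatTrans.app t P) w)).ShortExact)

/-- homology of `F` applied to the chosen resolution -/
def hh (F : C ⥤ D) [F.Additive] (X : C) (n : ℕ) : D :=
  ((F.mapHomologicalComplex (ComplexShape.down ℕ)).obj (projectiveResolution X).complex).homology n

/-- comparison -/
def hiso (F : C ⥤ D) [F.Additive] (X : C) (n : ℕ) : (F.leftDerived n).obj X ≅ hh F X n :=
  (projectiveResolution X).isoLeftDerivedObj F n

/-- map in `F` -/
def hnat {F G : C ⥤ D} [F.Additive] [G.Additive] (a : F ⟶ G) (X : C) (n : ℕ) :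
    hh F X n ⟶ hh G X n :=
  HomologicalComplex.homologyMap ((NatTrans.mapHomologicalComplex a _).app _) n

/-- map in `X` -/
def hmap (F : C ⥤ D) [F.Additive] {X Y : C} (f : X ⟶ Y) (n : ℕ) :
    hh F X n ⟶ hh F Y n :=
  HomologicalComplex.homologyMap ((F.mapHomologicalComplex _).map
    (ProjectiveResolution.lift f (projectiveResolution X) (projectiveResolution Y))) n

lemma leftDerived_map (F : C ⥤ D) [F.Additive] {X Y : C} (f : X ⟶ Y) (n : ℕ) :
    (F.leftDerived n).map f = (hiso F X n).hom ≫ hmap F f n ≫ (hiso F Y n).inv :=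
  Functor.leftDerived_map_eq F n f _ (ProjectiveResolution.lift_commutes f
    (projectiveResolution X) (projectiveResolution Y))

lemma leftDerived_nat {F G : C ⥤ D} [F.Additive] [G.Additive] (a : F ⟶ G) (X : C) (n : ℕ) :
    (NatTrans.leftDerived a n).app X = (hiso F X n).hom ≫ hnat a X n ≫ (hiso G X n).inv :=
  (projectiveResolution X).leftDerived_app_eq a n

lemma cplx_shortExact (w : α ≫ β = 0)
    (hex : ∀ P : C, Projective P → (ShortComplex.mk (α.app P) (β.app P)
      (by simpa using congrArg (fun t => NatTrans.app t P) w)).ShortExact)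
    (X : C) :
    (cplx α β w (projectiveResolution X).complex).ShortExact := by
  apply HomologicalComplex.shortExact_of_degreewise_shortExact
  intro n
  exact hex _ ((projectiveResolution X).projective n)

/-- connecting map on homology -/
def hdelta (X : C) (n : ℕ) : hh F₃ X (n+1) ⟶ hh F₁ X n :=
  (cplx_shortExact α β w hex X).δ (n+1) n (ComplexShape.down_mk (n+1) n rfl)

lemma hdelta_naturality {X Y : C} (f : X ⟶ Y) (n : ℕ) :
    hdelta α β w hex X n ≫ hmap F₁ f n = hmap F₃ f (n+1) ≫ hdelta α β w hex Y n :=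
  HomologicalComplex.HomologySequence.δ_naturality (cplxMap α β w
      (ProjectiveResolution.lift f (projectiveResolution X) (projectiveResolution Y)))
      (cplx_shortExact α β w hex X)
      (cplx_shortExact α β w hex Y) (n+1) n (ComplexShape.down_mk (n+1) n rfl)

lemma hdelta_comp (X : C) (n : ℕ) : hdelta α β w hex X n ≫ hnat α X n = 0 :=
  (cplx_shortExact α β w hex X).δ_comp (n+1) n (ComplexShape.down_mk (n+1) n rfl)

lemma comp_hdelta (X : C) (n : ℕ) : hnat β X (n+1) ≫ hdelta α β w hex X n = 0 :=
  (cplx_shortExact α β w hex X).comp_δ (n+1) n (ComplexShape.down_mk (n+1) n rfl)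

lemma hexact₁ (X : C) (n : ℕ) : (ShortComplex.mk _ _ (hdelta_comp α β w hex X n)).Exact :=
  (cplx_shortExact α β w hex X).homology_exact₁ (n+1) n (ComplexShape.down_mk (n+1) n rfl)

lemma hexact₃ (X : C) (n : ℕ) : (ShortComplex.mk _ _ (comp_hdelta α β w hex X n)).Exact :=
  (cplx_shortExact α β w hex X).homology_exact₃ (n+1) n (ComplexShape.down_mk (n+1) n rfl)

lemma hexact₂ (w : α ≫ β = 0)
    (hex : ∀ P : C, Projective P → (ShortComplex.mk (α.app P) (β.app P)
      (by simpa using congrArg (fun t => NatTrans.app t P) w)).ShortExact)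
    (X : C) (n : ℕ) (h0 : hnat α X n ≫ hnat β X n = 0) :
    (ShortComplex.mk _ _ h0).Exact :=
  (cplx_shortExact α β w hex X).homology_exact₂ n

lemma leftDerived_exact₂ (w : α ≫ β = 0)
    (hex : ∀ P : C, Projective P → (ShortComplex.mk (α.app P) (β.app P)
      (by simpa using congrArg (fun t => NatTrans.app t P) w)).ShortExact)
    (X : C) (n : ℕ)
    (h0 : (NatTrans.leftDerived α n).app X ≫ (NatTrans.leftDerived β n).app X = 0) :
    (ShortComplex.mk _ _ h0).Exact := by
  have h0' : hnat α X n ≫ hnat β X n = 0 := by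
    rw [leftDerived_nat, leftDerived_nat] at h0
    rw [← cancel_mono (hiso F₃ X n).inv]
    simpa using h0
  refine ShortComplex.exact_of_iso ?_ (hexact₂ α β w hex X n h0')
  refine ShortComplex.isoMk (hiso F₁ X n).symm (hiso F₂ X n).symm
    (hiso F₃ X n).symm ?_ ?_
  · simp [leftDerived_nat]
  · simp [leftDerived_nat]

/-- connecting -/
def delta (n : ℕ) : F₃.leftDerived (n+1) ⟶ F₁.leftDerived n where
  app X := (hiso F₃ X (n+1)).hom ≫ hdelta α β w hex X n ≫ (hiso F₁ X n).inv
  naturality X Y f := by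
    simp only [leftDerived_map, Category.assoc, Iso.inv_hom_id_assoc]
    rw [reassoc_of% (hdelta_naturality α β w hex f n)]

lemma delta_comp (X : C) (n : ℕ) :
    (delta α β w hex n).app X ≫ (NatTrans.leftDerived α n).app X = 0 := by
  simp [delta, leftDerived_nat, reassoc_of% (hdelta_comp α β w hex X n)]

lemma comp_delta (X : C) (n : ℕ) :
    (NatTrans.leftDerived β (n+1)).app X ≫ (delta α β w hex n).app X = 0 := by
  simp [delta, leftDerived_nat, reassoc_of% (comp_hdelta α β w hex X n)]

lemma leftDerived_exact₁ (X : C) (n : ℕ) :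
    (ShortComplex.mk _ _ (delta_comp α β w hex X n)).Exact := by
  refine ShortComplex.exact_of_iso ?_ (hexact₁ α β w hex X n)
  refine ShortComplex.isoMk (hiso F₃ X (n+1)).symm (hiso F₁ X n).symm
    (hiso F₂ X n).symm ?_ ?_
  · simp [delta]
  · simp [leftDerived_nat]

lemma leftDerived_exact₃ (X : C) (n : ℕ) :
    (ShortComplex.mk _ _ (comp_delta α β w hex X n)).Exact := by
  refine ShortComplex.exact_of_iso ?_ (hexact₃ α β w hex X n)
  refine ShortComplex.isoMk (hiso F₂ X (n+1)).symm (hiso F₃ X (n+1)).symm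
    (hiso F₁ X n).symm ?_ ?_
  · simp [leftDerived_nat]
  · simp [delta]

end LES
section ExtPart
variable {R : Type u} [CommRing R]

/-- `Hom(-, Y)` as covariant functor to the opposite category -/
abbrev FY (Y : ModuleCat.{u} R) : ModuleCat.{u} R ⥤ (ModuleCat.{u} R)ᵒᵖ :=
  ((linearYoneda R (ModuleCat.{u} R)).obj Y).rightOp

/-- functoriality in `Y` -/
abbrev FYmap {Y Z : ModuleCat.{u} R} (f : Y ⟶ Z) : FY Z ⟶ FY Y :=
  NatTrans.rightOp ((linearYoneda R (ModuleCat.{u} R)).map f)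

lemma FYmap_w (S : ShortComplex (ModuleCat.{u} R)) : FYmap S.g ≫ FYmap S.f = 0 := by
  ext P
  apply Quiver.Hom.unop_inj
  ext (x : P ⟶ S.X₁)
  change (x ≫ S.f) ≫ S.g = 0
  simp

lemma FY_hex_aux (S : ShortComplex (ModuleCat.{u} R)) (hS : S.ShortExact)
    (P : ModuleCat.{u} R) (hP : Projective P) (w) :
    (ShortComplex.mk (C := ModuleCat.{u} R)
      (((linearYoneda R (ModuleCat.{u} R)).map S.f).app (Opposite.op P))
      (((linearYoneda R (ModuleCat.{u} R)).map S.g).app (Opposite.op P)) w).ShortExact := by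
  have := hS.mono_f
  have := hS.epi_g
  have h1 : Mono (((linearYoneda R (ModuleCat.{u} R)).map S.f).app (Opposite.op P)) := by
    rw [ModuleCat.mono_iff_injective]
    intro (x : P ⟶ S.X₁) (y : P ⟶ S.X₁) (hxy : x ≫ S.f = y ≫ S.f)
    exact (cancel_mono S.f).1 hxy
  have h2 : Epi (((linearYoneda R (ModuleCat.{u} R)).map S.g).app (Opposite.op P)) := by
    rw [ModuleCat.epi_iff_surjective]
    intro (x : P ⟶ S.X₃)
    exact ⟨Projective.factorThru x S.g, Projective.factorThru_comp x S.g⟩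
  refine ShortComplex.ShortExact.mk' ?_ h1 h2
  rw [ShortComplex.moduleCat_exact_iff]
  intro (x : P ⟶ S.X₂) (hx : x ≫ S.g = 0)
  exact ⟨hS.exact.lift x hx, hS.exact.lift_f x hx⟩

lemma FY_hex (S : ShortComplex (ModuleCat.{u} R)) (hS : S.ShortExact)
    (P : ModuleCat.{u} R) (hP : Projective P) :
    (ShortComplex.mk ((FYmap S.g).app P) ((FYmap S.f).app P)
      (congrArg (fun t => NatTrans.app t P) (FYmap_w S))).ShortExact :=
  (FY_hex_aux S hS P hP (by
      ext (x : P ⟶ S.X₁)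
      change (x ≫ S.f) ≫ S.g = 0
      simp)).op

/-- connecting morphism on Ext -/
def dExt (S : ShortComplex (ModuleCat.{u} R)) (hS : S.ShortExact) (i : ℕ) :
    (Ext R (ModuleCat.{u} R) i).flip.obj S.X₃ ⟶ (Ext R (ModuleCat.{u} R) (i+1)).flip.obj S.X₁ :=
  NatTrans.leftOp (delta (FYmap S.g) (FYmap S.f) (FYmap_w S) (FY_hex S hS) i)

variable (S : ShortComplex (ModuleCat.{u} R)) (hS : S.ShortExact)

lemma dExt_exact₁ (i : ℕ) (X : (ModuleCat.{u} R)ᵒᵖ) :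
    Function.Exact ((dExt S hS i).app X).hom
      (((Ext R (ModuleCat.{u} R) (i+1)).obj X).map S.f).hom :=
  (ShortComplex.ShortExact.moduleCat_exact_iff_function_exact _).1
    (leftDerived_exact₃ (FYmap S.g) (FYmap S.f) (FYmap_w S) (FY_hex S hS) X.unop i).unop

lemma dExt_exact₃ (i : ℕ) (X : (ModuleCat.{u} R)ᵒᵖ) :
    Function.Exact (((Ext R (ModuleCat.{u} R) i).obj X).map S.g).hom
      ((dExt S hS i).app X).hom :=
  (ShortComplex.ShortExact.moduleCat_exact_iff_function_exact _).1
    (leftDerived_exact₁ (FYmap S.g) (FYmap S.f) (FYmap_w S) (FY_hex S hS) X.unop i).unop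

lemma dExt_exact₂ (hS : S.ShortExact) (i : ℕ) (X : (ModuleCat.{u} R)ᵒᵖ) :
    Function.Exact (((Ext R (ModuleCat.{u} R) i).obj X).map S.f).hom
      (((Ext R (ModuleCat.{u} R) i).obj X).map S.g).hom := by
  have h0 : ((NatTrans.leftDerived (FYmap S.g) i).app X.unop ≫ (NatTrans.leftDerived (FYmap S.f) i).app X.unop) = 0 := by
    rw [leftDerived_nat, leftDerived_nat]
    have : hnat (FYmap S.g) X.unop i ≫ hnat (FYmap S.f) X.unop i = 0 := by
      have h := (cplx (FYmap S.g) (FYmap S.f) (FYmap_w S) (projectiveResolution X.unop).complex).zero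
      have h2 := congrArg (fun t => HomologicalComplex.homologyMap t i) h
      simp only [HomologicalComplex.homologyMap_comp, HomologicalComplex.homologyMap_zero] at h2
      exact h2
    simp [reassoc_of% this]
  exact (ShortComplex.ShortExact.moduleCat_exact_iff_function_exact _).1
    (leftDerived_exact₂ (FYmap S.g) (FYmap S.f) (FYmap_w S) (FY_hex S hS) X.unop i h0).unop

/-- Ext vanishes on injectives. -/
lemma ext_injective (X : ModuleCat.{u} R) (Y : ModuleCat.{u} R) [Injective Y] (i : ℕ) :
    IsZero (((Ext R (ModuleCat.{u} R) (i+1)).obj (Opposite.op X)).obj Y) := by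
  refine IsZero.of_iso ?_ ((projectiveResolution X).isoExt (i + 1) Y)
  rw [← HomologicalComplex.exactAt_iff_isZero_homology,
    HomologicalComplex.exactAt_iff' _ i (i+1) (i+2) (by simp) (by simp)]
  rw [ShortComplex.moduleCat_exact_iff]
  intro (x : (projectiveResolution X).complex.X (i+1) ⟶ Y)
    (hx : (projectiveResolution X).complex.d (i+2) (i+1) ≫ x = 0)
  have hex := (projectiveResolution X).exact_succ i
  exact ⟨hex.descToInjective x hx, hex.comp_descToInjective x hx⟩

lemma map_additive_zero (F : ModuleCat.{u} R ⥤ (ModuleCat.{u} R)ᵒᵖ) [F.Additive]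
    (X Y : ModuleCat.{u} R) (n : ℕ) : (F.leftDerived n).map (0 : X ⟶ Y) = 0 := by
  rw [Functor.leftDerived_map_eq F n (0 : X ⟶ Y) (P := projectiveResolution X)
    (Q := projectiveResolution Y) 0 (by simp), Functor.map_zero, zero_comp]
  exact comp_zero

/-- scalars -/
lemma ext_smul (X Y : ModuleCat.{u} R) (n : ℕ) (x : R) :
    ((Ext R (ModuleCat.{u} R) n).obj (Opposite.op X)).map (x • 𝟙 Y) =
    ((Ext R (ModuleCat.{u} R) n).map (x • 𝟙 X).op).app Y := by
  apply Quiver.Hom.op_inj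
  change (NatTrans.leftDerived (FYmap (x • 𝟙 Y)) n).app X = ((FY Y).leftDerived n).map (x • 𝟙 X)
  rw [Functor.leftDerived_map_eq (FY Y) n (x • 𝟙 X) (P := projectiveResolution X)
    (Q := projectiveResolution X) (x • 𝟙 _) (by
      ext1
      simp only [HomologicalComplex.comp_f, HomologicalComplex.smul_f_apply,
        HomologicalComplex.id_f, Linear.smul_comp, Category.id_comp,
        ChainComplex.single₀_map_f_zero]
      exact ((Linear.comp_smul _ X _ ((projectiveResolution X).π.f 0) x (𝟙 X)).trans
        (congrArg (fun t => x • t) (Category.comp_id _))).symm), leftDerived_nat]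
  have : (NatTrans.mapHomologicalComplex (FYmap (x • 𝟙 Y)) (ComplexShape.down ℕ)).app
      (projectiveResolution X).complex =
      ((FY Y).mapHomologicalComplex (ComplexShape.down ℕ)).map (x • 𝟙 _) := by
    ext k
    apply Quiver.Hom.unop_inj
    ext (y : (projectiveResolution X).complex.X k ⟶ Y)
    change y ≫ (x • 𝟙 Y) = (x • 𝟙 ((projectiveResolution X).complex.X k)) ≫ y
    simp
  unfold hnat
  rw [this]
  rfl

lemma ext_zero_of_smul (X Y : ModuleCat.{u} R) (n : ℕ) (x : R) (hX : x • 𝟙 X = 0)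
    (hY : IsIso (x • 𝟙 Y)) :
    IsZero (((Ext R (ModuleCat.{u} R) n).obj (Opposite.op X)).obj Y) := by
  have h := ext_smul X Y n x
  rw [hX] at h
  have h0 : ((Ext R (ModuleCat.{u} R) n).map (0 : X ⟶ X).op).app Y = 0 :=
    congrArg Quiver.Hom.unop (map_additive_zero (FY Y) X X n)
  rw [h0] at h
  have : IsIso (((Ext R (ModuleCat.{u} R) n).obj (Opposite.op X)).map (x • 𝟙 Y)) := inferInstance
  rw [h] at this
  rw [IsZero.iff_id_eq_zero, ← cancel_epi (0 : ((Ext R (ModuleCat.{u} R) n).obj (Opposite.op X)).obj Y ⟶ ((Ext R (ModuleCat.{u} R) n).obj (Opposite.op X)).obj Y)]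
  simp

end ExtPart

section HZero
variable {C : Type*} [Category C] {D : Type*} [Category D] [Abelian C] [Abelian D]
  [HasProjectiveResolutions C]

lemma opcycles_nat {F G : C ⥤ D} [F.Additive] [G.Additive] (a : F ⟶ G) {X : C}
    (P : ProjectiveResolution X) :
    HomologicalComplex.opcyclesMap ((NatTrans.mapHomologicalComplex a _).app P.complex) 0 ≫
      P.fromLeftDerivedZero' G = P.fromLeftDerivedZero' F ≫ a.app X := by
  rw [← cancel_epi (HomologicalComplex.pOpcycles _ _),
    HomologicalComplex.p_opcyclesMap_assoc, P.pOpcycles_comp_fromLeftDerivedZero' G,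
    P.pOpcycles_comp_fromLeftDerivedZero'_assoc F]
  exact (a.naturality (P.π.f 0)).symm

/-- augmentation -/
def hzero (F : C ⥤ D) [F.Additive] (X : C) : hh F X 0 ⟶ F.obj X :=
  (ChainComplex.isoHomologyι₀ ((F.mapHomologicalComplex (ComplexShape.down ℕ)).obj
    (projectiveResolution X).complex)).hom ≫ (projectiveResolution X).fromLeftDerivedZero' F

lemma hzero_nat {F G : C ⥤ D} [F.Additive] [G.Additive] (a : F ⟶ G) (X : C) :
    hnat a X 0 ≫ hzero G X = hzero F X ≫ a.app X := by
  have h1 := opcycles_nat a (projectiveResolution X)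
  have h2 := HomologicalComplex.homologyι_naturality
    ((NatTrans.mapHomologicalComplex a _).app (projectiveResolution X).complex) 0
  have e1 : hzero F X ≫ a.app X = (ChainComplex.isoHomologyι₀
      ((F.mapHomologicalComplex (ComplexShape.down ℕ)).obj
      (projectiveResolution X).complex)).hom ≫
        ((projectiveResolution X).fromLeftDerivedZero' F ≫ a.app X) := Category.assoc _ _ _
  rw [e1, ← h1]
  exact (reassoc_of% h2) _

lemma fromLeftDerivedZero_app (F : C ⥤ D) [F.Additive] (X : C) :
    F.fromLeftDerivedZero.app X = (hiso F X 0).hom ≫ hzero F X :=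
  (projectiveResolution X).fromLeftDerivedZero_eq F

lemma fromLeftDerivedZero_nat {F G : C ⥤ D} [F.Additive] [G.Additive] (a : F ⟶ G) (X : C) :
    (NatTrans.leftDerived a 0).app X ≫ G.fromLeftDerivedZero.app X =
      F.fromLeftDerivedZero.app X ≫ a.app X := by
  rw [fromLeftDerivedZero_app, fromLeftDerivedZero_app, leftDerived_nat]
  simp only [Category.assoc, Iso.inv_hom_id_assoc]
  rw [hzero_nat]

end HZero

section ExtZero
variable {R : Type u} [CommRing R]

instance (Y : ModuleCat.{u} R) : PreservesFiniteColimits (FY Y) := by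
  have : PreservesFiniteLimits ((linearYoneda R (ModuleCat.{u} R)).obj Y) := by
    constructor
    intro J _ _
    have h1 : PreservesLimitsOfShape J
        ((linearYoneda R (ModuleCat.{u} R)).obj Y ⋙ forget (ModuleCat.{u} R)) :=
      inferInstanceAs (PreservesLimitsOfShape J (yoneda.obj Y))
    exact preservesLimitsOfShape_of_reflects_of_preserves _ (forget (ModuleCat.{u} R))
  exact preservesFiniteColimits_rightOp _

/-- `Hom(X, Y) ≅ Ext^0(X, Y)` -/
def theta (X Y : ModuleCat.{u} R) :
    ((linearYoneda R (ModuleCat.{u} R)).obj Y).obj (Opposite.op X) ≅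
     ((Ext R (ModuleCat.{u} R) 0).obj (Opposite.op X)).obj Y :=
  (asIso ((FY Y).fromLeftDerivedZero.app X)).unop

lemma theta_nat_right (X : ModuleCat.{u} R) {Y Z : ModuleCat.{u} R} (f : Y ⟶ Z) :
    (theta X Y).hom ≫ ((Ext R (ModuleCat.{u} R) 0).obj (Opposite.op X)).map f =
      ((linearYoneda R (ModuleCat.{u} R)).map f).app (Opposite.op X) ≫ (theta X Z).hom :=
  congrArg Quiver.Hom.unop (fromLeftDerivedZero_nat (FYmap f) X)

lemma theta_nat_left (Y : ModuleCat.{u} R) {X Z : ModuleCat.{u} R} (f : X ⟶ Z) :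
    (theta Z Y).hom ≫ ((Ext R (ModuleCat.{u} R) 0).map f.op).app Y =
      ((linearYoneda R (ModuleCat.{u} R)).obj Y).map f.op ≫ (theta X Y).hom :=
  congrArg Quiver.Hom.unop ((FY Y).fromLeftDerivedZero.naturality f)

end ExtZero

section LC
variable {R : Type u} [CommRing R]

instance forget_pres : PreservesColimitsOfShape ℕᵒᵖᵒᵖ (forget (ModuleCat.{u} R)) := by
  have h := preservesFilteredColimitsOfSize_shrink.{0, u, 0, u} (forget (ModuleCat.{u} R))
  exact h.preserves_filtered_colimits _

/-- the `n`-th stage -/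
abbrev Rn (a : Ideal R) (n : ℕ) : ModuleCat.{u} R := ModuleCat.of R (R ⧸ a ^ n)

/-- transition -/
abbrev trn (a : Ideal R) {n m : ℕ} (h : n ≤ m) : Rn a m ⟶ Rn a n :=
  (localCohomology.ringModIdeals (localCohomology.idealPowersDiagram a)).map (homOfLE h).op

/-- stage Ext -/
abbrev EE (a : Ideal R) (i n : ℕ) (M : ModuleCat.{u} R) : ModuleCat.{u} R :=
  ((Ext R (ModuleCat.{u} R) i).obj (Opposite.op (Rn a n))).obj M

/-- local cohomology, local notation -/
abbrev HH (a : Ideal R) (i : ℕ) (M : ModuleCat.{u} R) : ModuleCat.{u} R :=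
  (localCohomology a i).obj M

/-- legs -/
def leg (a : Ideal R) (i n : ℕ) (M : ModuleCat.{u} R) : EE a i n M ⟶ HH a i M :=
  (colimit.ι (localCohomology.diagram (localCohomology.idealPowersDiagram a) i)
    (Opposite.op (Opposite.op n))).app M

/-- the cocone evaluated at `M` -/
def cc (a : Ideal R) (i : ℕ) (M : ModuleCat.{u} R) :=
  ((evaluation (ModuleCat.{u} R) (ModuleCat.{u} R)).obj M).mapCocone
    (colimit.cocone (localCohomology.diagram (localCohomology.idealPowersDiagram a) i))

/-- it is a colimit -/
def ccIs (a : Ideal R) (i : ℕ) (M : ModuleCat.{u} R) : IsColimit (cc a i M) :=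
  isColimitOfPreserves _ (colimit.isColimit _)

lemma leg_nat (a : Ideal R) (i n : ℕ) {M N : ModuleCat.{u} R} (f : M ⟶ N) :
    leg a i n M ≫ (localCohomology a i).map f =
      ((Ext R (ModuleCat.{u} R) i).obj (Opposite.op (Rn a n))).map f ≫ leg a i n N :=
  ((colimit.ι (localCohomology.diagram (localCohomology.idealPowersDiagram a) i)
    (Opposite.op (Opposite.op n))).naturality f).symm

lemma leg_trn (a : Ideal R) (i : ℕ) {n m : ℕ} (h : n ≤ m) (M : ModuleCat.{u} R) :
    ((Ext R (ModuleCat.{u} R) i).map (trn a h).op).app M ≫ leg a i m M = leg a i n M :=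
  (cc a i M).w (homOfLE h).op.op

lemma leg_rep (a : Ideal R) (i : ℕ) (M : ModuleCat.{u} R) (y : HH a i M) :
    ∃ n, ∃ x : EE a i n M, leg a i n M x = y := by
  obtain ⟨j, x, hx⟩ := Concrete.isColimit_exists_rep _ (ccIs a i M) y
  exact ⟨j.unop.unop, x, hx⟩

lemma leg_zero (a : Ideal R) (i n : ℕ) (M : ModuleCat.{u} R) (x : EE a i n M)
    (hx : leg a i n M x = 0) : ∃ m, ∃ h : n ≤ m,
      ((Ext R (ModuleCat.{u} R) i).map (trn a h).op).app M x = 0 := by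
  obtain ⟨k, f, g, h⟩ := Concrete.isColimit_exists_of_rep_eq _ (ccIs a i M)
    (i := Opposite.op (Opposite.op n)) (j := Opposite.op (Opposite.op n)) x 0
    (hx.trans (map_zero _).symm)
  refine ⟨k.unop.unop, f.unop.unop.le, ?_⟩
  exact h.trans (map_zero _)

lemma HH_ext {a : Ideal R} {i : ℕ} {M N : ModuleCat.{u} R} {f g : HH a i M ⟶ N}
    (h : ∀ n, leg a i n M ≫ f = leg a i n M ≫ g) : f = g :=
  (ccIs a i M).hom_ext fun j => h j.unop.unop

lemma HH_zero (a : Ideal R) (i : ℕ) (M : ModuleCat.{u} R) (h : ∀ n, IsZero (EE a i n M)) :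
    Subsingleton (HH a i M) := by
  refine ⟨fun y z => ?_⟩
  have key : ∀ y : HH a i M, y = 0 := by
    intro y
    obtain ⟨n, x, rfl⟩ := leg_rep a i M y
    have := ModuleCat.subsingleton_of_isZero (h n)
    rw [Subsingleton.elim x 0, map_zero]
  rw [key y, key z]

/-- (L2) -/
lemma HH_injective (a : Ideal R) (i : ℕ) (M : ModuleCat.{u} R) [Injective M] :
    Subsingleton (HH a (i+1) M) :=
  HH_zero a _ M fun n => ext_injective _ M i

/-- (Inv) -/
lemma HH_inv (a : Ideal R) (i : ℕ) (M : ModuleCat.{u} R) (x : R) (hx : x ∈ a)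
    (hM : Function.Bijective (fun m : M => x • m)) : Subsingleton (HH a i M) := by
  refine HH_zero a _ M fun n => ext_zero_of_smul _ M i (x ^ n) ?_ ?_
  · ext
    change x ^ n • (1 : R ⧸ a ^ n) = 0
    rw [← map_one (Ideal.Quotient.mk (a ^ n)), ← Ideal.Quotient.mk_eq_mk,
      ← Submodule.Quotient.mk_smul, Submodule.Quotient.mk_eq_zero]
    simpa using Ideal.pow_mem_pow hx n
  · rw [ConcreteCategory.isIso_iff_bijective]
    change Function.Bijective (fun m : M => x ^ n • m)
    have : (fun m : M => x ^ n • m) = (fun m : M => x • m)^[n] := by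
      funext m
      rw [smul_iterate_apply]
    rw [this]
    exact hM.iterate n

/-- cocone for the connecting map -/
def dcocone (a : Ideal R) (S : ShortComplex (ModuleCat.{u} R)) (hS : S.ShortExact) (i : ℕ) :
    Cocone (localCohomology.diagram (localCohomology.idealPowersDiagram a) i ⋙
      (evaluation (ModuleCat.{u} R) (ModuleCat.{u} R)).obj S.X₃) where
  pt := HH a (i+1) S.X₁
  ι :=
    { app := fun j => (dExt S hS i).app (Opposite.op (Rn a j.unop.unop)) ≫
        leg a (i+1) j.unop.unop S.X₁
      naturality := fun j k f => by
        have h1 := (dExt S hS i).naturality (trn a f.unop.unop.le).op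
        have h2 := leg_trn a (i+1) f.unop.unop.le S.X₁
        refine (Category.assoc _ _ _).symm.trans ?_
        refine (congrArg (fun t => t ≫ leg a (i+1) k.unop.unop S.X₁) h1).trans ?_
        refine (Category.assoc _ _ _).trans ?_
        refine (congrArg (fun t => (dExt S hS i).app (Opposite.op (Rn a j.unop.unop)) ≫ t) h2).trans ?_
        exact (Category.comp_id _).symm }

/-- connecting map -/
def dH (a : Ideal R) (S : ShortComplex (ModuleCat.{u} R)) (hS : S.ShortExact) (i : ℕ) :
    HH a i S.X₃ ⟶ HH a (i+1) S.X₁ :=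
  (ccIs a i S.X₃).desc (dcocone a S hS i)

lemma leg_dH (a : Ideal R) (S : ShortComplex (ModuleCat.{u} R)) (hS : S.ShortExact) (i n : ℕ) :
    leg a i n S.X₃ ≫ dH a S hS i =
      (dExt S hS i).app (Opposite.op (Rn a n)) ≫ leg a (i+1) n S.X₁ :=
  (ccIs a i S.X₃).fac (dcocone a S hS i) (Opposite.op (Opposite.op n))

/-- exactness passes to the colimit -/
lemma colim_exact (a : Ideal R) (i j k : ℕ) (A B C : ModuleCat.{u} R)
    (f : HH a i A ⟶ HH a j B) (g : HH a j B ⟶ HH a k C)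
    (f' : ∀ n, EE a i n A ⟶ EE a j n B) (g' : ∀ n, EE a j n B ⟶ EE a k n C)
    (hf : ∀ n, leg a i n A ≫ f = f' n ≫ leg a j n B)
    (hg : ∀ n, leg a j n B ≫ g = g' n ≫ leg a k n C)
    (hg' : ∀ n m (h : n ≤ m), ((Ext R (ModuleCat.{u} R) j).map (trn a h).op).app B ≫ g' m =
      g' n ≫ ((Ext R (ModuleCat.{u} R) k).map (trn a h).op).app C)
    (hex : ∀ n, Function.Exact (f' n).hom (g' n).hom) :
    Function.Exact f.hom g.hom := by
  intro y
  constructor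
  · intro hy
    obtain ⟨n, x, rfl⟩ := leg_rep a j B y
    have h1 : leg a k n C (g' n x) = 0 := by
      rw [← ConcreteCategory.comp_apply, ← hg, ConcreteCategory.comp_apply]; exact hy
    obtain ⟨m, h, hm⟩ := leg_zero a k n C _ h1
    rw [← ConcreteCategory.comp_apply, ← hg', ConcreteCategory.comp_apply] at hm
    obtain ⟨z, hz⟩ := (hex m _).1 hm
    refine ⟨leg a i m A z, ?_⟩
    have h2 : f (leg a i m A z) = leg a j m B (f' m z) := by
      rw [← ConcreteCategory.comp_apply, hf, ConcreteCategory.comp_apply]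
    refine h2.trans ?_
    rw [← leg_trn a j h B, ConcreteCategory.comp_apply]
    exact congrArg _ hz
  · rintro ⟨w, rfl⟩
    obtain ⟨n, x, rfl⟩ := leg_rep a i A w
    have h2 : f (leg a i n A x) = leg a j n B (f' n x) := by
      rw [← ConcreteCategory.comp_apply, hf, ConcreteCategory.comp_apply]
    have h3 : g (leg a j n B (f' n x)) = leg a k n C (g' n (f' n x)) := by
      rw [← ConcreteCategory.comp_apply, hg, ConcreteCategory.comp_apply]
    have h4 : g' n (f' n x) = 0 := (hex n).apply_apply_eq_zero x
    change g (f (leg a i n A x)) = 0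
    rw [h2, h3, h4, map_zero]

variable (a : Ideal R) (S : ShortComplex (ModuleCat.{u} R)) (hS : S.ShortExact)

/-- (L1) -/
lemma HH_exact₁ (i : ℕ) : Function.Exact (dH a S hS i).hom ((localCohomology a (i+1)).map S.f).hom := by
  refine colim_exact a i (i+1) (i+1) _ _ _ _ _
    (fun n => (dExt S hS i).app (Opposite.op (Rn a n)))
    (fun n => ((Ext R (ModuleCat.{u} R) (i+1)).obj (Opposite.op (Rn a n))).map S.f)
    (fun n => leg_dH a S hS i n) (fun n => leg_nat a (i+1) n S.f) ?_
    (fun n => dExt_exact₁ S hS i _)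
  intro n m h
  exact (((Ext R (ModuleCat.{u} R) (i+1)).map (trn a h).op).naturality S.f).symm

lemma HH_exact₃ (i : ℕ) : Function.Exact ((localCohomology a i).map S.g).hom (dH a S hS i).hom := by
  refine colim_exact a i i (i+1) _ _ _ _ _
    (fun n => ((Ext R (ModuleCat.{u} R) i).obj (Opposite.op (Rn a n))).map S.g)
    (fun n => (dExt S hS i).app (Opposite.op (Rn a n)))
    (fun n => leg_nat a i n S.g) (fun n => leg_dH a S hS i n) ?_
    (fun n => dExt_exact₃ S hS i _)
  intro n m h
  exact (dExt S hS i).naturality (trn a h).op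

lemma HH_exact₂ (hS : S.ShortExact) (i : ℕ) : Function.Exact ((localCohomology a i).map S.f).hom
    ((localCohomology a i).map S.g).hom := by
  refine colim_exact a i i i _ _ _ _ _
    (fun n => ((Ext R (ModuleCat.{u} R) i).obj (Opposite.op (Rn a n))).map S.f)
    (fun n => ((Ext R (ModuleCat.{u} R) i).obj (Opposite.op (Rn a n))).map S.g)
    (fun n => leg_nat a i n S.f) (fun n => leg_nat a i n S.g) ?_
    (fun n => dExt_exact₂ S hS i _)
  intro n m h
  exact (((Ext R (ModuleCat.{u} R) i).map (trn a h).op).naturality S.g).symm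

end LC

section L3
variable {R : Type u} [CommRing R]

/-- evaluation at one -/
def evOne (a : Ideal R) (n : ℕ) (M : ModuleCat.{u} R) :
    ((linearYoneda R (ModuleCat.{u} R)).obj M).obj (Opposite.op (Rn a n)) ⟶ M :=
  ModuleCat.ofHom (X := (Rn a n ⟶ M)) (Y := M)
    { toFun := fun f => f.hom (Submodule.Quotient.mk 1)
      map_add' := fun _ _ => rfl
      map_smul' := fun _ _ => rfl }

lemma evOne_trn (a : Ideal R) {n m : ℕ} (h : n ≤ m) (M : ModuleCat.{u} R) :
    ((linearYoneda R (ModuleCat.{u} R)).obj M).map (trn a h).op ≫ evOne a m M = evOne a n M := by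
  ext (f : Rn a n ⟶ M)
  rfl

lemma evOne_nat (a : Ideal R) (n : ℕ) {M N : ModuleCat.{u} R} (f : M ⟶ N) :
    ((linearYoneda R (ModuleCat.{u} R)).map f).app (Opposite.op (Rn a n)) ≫ evOne a n N =
      evOne a n M ≫ f := by
  ext (g : Rn a n ⟶ M)
  rfl

lemma evOne_inj (a : Ideal R) (n : ℕ) (M : ModuleCat.{u} R) (f : Rn a n ⟶ M)
    (h : evOne a n M f = 0) : f = 0 := by
  ext
  exact h

lemma evOne_range (a : Ideal R) (n : ℕ) (M : ModuleCat.{u} R) (m : M) :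
    (∃ f : Rn a n ⟶ M, evOne a n M f = m) ↔ ∀ r ∈ a ^ n, r • m = 0 := by
  constructor
  · rintro ⟨f, rfl⟩ r hr
    change r • f.hom (Submodule.Quotient.mk 1) = 0
    rw [← map_smul, ← Submodule.Quotient.mk_smul]
    have : (Submodule.Quotient.mk (r • (1:R)) : R ⧸ a ^ n) = 0 := by
      rw [Submodule.Quotient.mk_eq_zero]; simpa using hr
    rw [this, map_zero]
  · intro h
    refine ⟨ModuleCat.ofHom (Submodule.liftQ (a ^ n) (LinearMap.toSpanSingleton R M m) ?_), ?_⟩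
    · intro r hr
      exact LinearMap.mem_ker.2 (h r hr)
    · change (1 : R) • m = m
      simp

/-- cocone -/
def phicocone (a : Ideal R) (M : ModuleCat.{u} R) :
    Cocone (localCohomology.diagram (localCohomology.idealPowersDiagram a) 0 ⋙
      (evaluation (ModuleCat.{u} R) (ModuleCat.{u} R)).obj M) where
  pt := M
  ι :=
    { app := fun j => (theta (Rn a j.unop.unop) M).inv ≫ evOne a j.unop.unop M
      naturality := fun j k f => by
        have h1 := theta_nat_left M (trn a f.unop.unop.le)
        have h2 := evOne_trn a f.unop.unop.le M
        have h3 : ((Ext R (ModuleCat.{u} R) 0).map (trn a f.unop.unop.le).op).app M ≫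
          (theta (Rn a k.unop.unop) M).inv = (theta (Rn a j.unop.unop) M).inv ≫
            ((linearYoneda R (ModuleCat.{u} R)).obj M).map (trn a f.unop.unop.le).op := by
          rw [Iso.comp_inv_eq, Category.assoc, Iso.eq_inv_comp]
          exact h1
        refine (Category.assoc _ _ _).symm.trans ?_
        refine (congrArg (fun t => t ≫ evOne a k.unop.unop M) h3).trans ?_
        refine (Category.assoc _ _ _).trans ?_
        refine (congrArg (fun t => (theta (Rn a j.unop.unop) M).inv ≫ t) h2).trans ?_
        exact (Category.comp_id _).symm }

/-- `H^0 → M` -/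
def phi (a : Ideal R) (M : ModuleCat.{u} R) : HH a 0 M ⟶ M :=
  (ccIs a 0 M).desc (phicocone a M)

lemma leg_phi (a : Ideal R) (n : ℕ) (M : ModuleCat.{u} R) :
    leg a 0 n M ≫ phi a M = (theta (Rn a n) M).inv ≫ evOne a n M :=
  (ccIs a 0 M).fac (phicocone a M) (Opposite.op (Opposite.op n))

lemma leg_phi' (a : Ideal R) (n : ℕ) (M : ModuleCat.{u} R) :
    (theta (Rn a n) M).hom ≫ leg a 0 n M ≫ phi a M = evOne a n M := by
  rw [leg_phi, Iso.hom_inv_id_assoc]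

lemma phi_nat (a : Ideal R) {M N : ModuleCat.{u} R} (f : M ⟶ N) :
    (localCohomology a 0).map f ≫ phi a N = phi a M ≫ f := by
  apply HH_ext
  intro n
  rw [← cancel_epi (theta (Rn a n) M).hom]
  have h1 := leg_nat a 0 n f
  rw [reassoc_of% h1, leg_phi]
  have h2 := leg_phi' a n M
  rw [reassoc_of% h2, reassoc_of% (theta_nat_right (Rn a n) f), Iso.hom_inv_id_assoc, evOne_nat]

lemma theta_rep (a : Ideal R) (M : ModuleCat.{u} R) (y : HH a 0 M) :
    ∃ n, ∃ f : Rn a n ⟶ M, leg a 0 n M ((theta (Rn a n) M).hom f) = y := by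
  obtain ⟨n, x, rfl⟩ := leg_rep a 0 M y
  refine ⟨n, (theta (Rn a n) M).inv x, ?_⟩
  exact congrArg _ (Iso.inv_hom_id_apply (theta (Rn a n) M) x)

lemma phi_theta (a : Ideal R) (M : ModuleCat.{u} R) (n : ℕ) (f : Rn a n ⟶ M) :
    phi a M (leg a 0 n M ((theta (Rn a n) M).hom f)) = evOne a n M f :=
  ConcreteCategory.congr_hom (leg_phi' a n M) f

lemma phi_inj (a : Ideal R) (M : ModuleCat.{u} R) : Function.Injective (phi a M) := by
  rw [injective_iff_map_eq_zero]
  intro y hy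
  obtain ⟨n, f, rfl⟩ := theta_rep a M y
  rw [phi_theta] at hy
  rw [evOne_inj a n M f hy]
  exact (congrArg _ (map_zero _)).trans (map_zero _)

lemma phi_range (a : Ideal R) (M : ModuleCat.{u} R) (m : M) :
    (∃ y, phi a M y = m) ↔ ∃ n, ∀ r ∈ a ^ n, r • m = 0 := by
  constructor
  · rintro ⟨y, rfl⟩
    obtain ⟨n, f, rfl⟩ := theta_rep a M y
    exact ⟨n, (evOne_range a n M _).1 ⟨f, (phi_theta a M n f).symm⟩⟩
  · rintro ⟨n, h⟩
    obtain ⟨f, hf⟩ := (evOne_range a n M m).2 h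
    exact ⟨_, (phi_theta a M n f).trans hf⟩

end L3

section Tors
variable {R : Type u} [CommRing R]

/-- short exact sequence attached to an injective map -/
def ses {A B : Type u} [AddCommGroup A] [AddCommGroup B] [Module R A] [Module R B]
    (f : A →ₗ[R] B) : ShortComplex (ModuleCat.{u} R) :=
  ShortComplex.mk (ModuleCat.ofHom f) (ModuleCat.ofHom (LinearMap.range f).mkQ) (by
    ext x
    change (LinearMap.range f).mkQ (f x) = 0
    simp)

lemma ses_exact {A B : Type u} [AddCommGroup A] [AddCommGroup B] [Module R A] [Module R B]
    (f : A →ₗ[R] B) (hf : Function.Injective f) : (ses f).ShortExact := by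
  refine ShortComplex.ShortExact.mk' ?_ ((ModuleCat.mono_iff_injective _).2 hf)
    ((ModuleCat.epi_iff_surjective _).2 (Submodule.mkQ_surjective _))
  rw [ShortComplex.moduleCat_exact_iff]
  intro x hx
  exact LinearMap.mem_range.1 ((Submodule.Quotient.mk_eq_zero _).1 hx)

/-- `Γ_a(M)` -/
def Gam (a : Ideal R) (M : Type u) [AddCommGroup M] [Module R M] : Submodule R M where
  carrier := {m | ∃ n, ∀ r ∈ a ^ n, r • m = 0}
  zero_mem' := ⟨0, fun r _ => smul_zero r⟩
  add_mem' := by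
    rintro x y ⟨n, hn⟩ ⟨k, hk⟩
    refine ⟨n + k, fun r hr => ?_⟩
    rw [smul_add, hn r (Ideal.pow_le_pow_right (Nat.le_add_right n k) hr),
      hk r (Ideal.pow_le_pow_right (Nat.le_add_left k n) hr), add_zero]
  smul_mem' := by
    rintro c x ⟨n, hn⟩
    refine ⟨n, fun r hr => ?_⟩
    rw [smul_comm, hn r hr, smul_zero]

lemma mem_Gam (a : Ideal R) (M : Type u) [AddCommGroup M] [Module R M] (m : M) :
    m ∈ Gam a M ↔ ∃ n, ∀ r ∈ a ^ n, r • m = 0 := Iff.rfl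

/-- torsion -/
def Tor (a : Ideal R) (M : Type u) [AddCommGroup M] [Module R M] : Prop :=
  ∀ m : M, ∃ n, ∀ r ∈ a ^ n, r • m = 0

lemma Gam_fg (a : Ideal R) (M : Type u) [AddCommGroup M] [Module R M] (N : Submodule R M)
    (hN : N.FG) (h : N ≤ Gam a M) : ∃ n, ∀ r ∈ a ^ n, ∀ m ∈ N, r • m = 0 := by
  obtain ⟨s, rfl⟩ := hN
  have h1 : ∀ s : Finset M, (s : Set M) ⊆ Gam a M → ∃ n, ∀ r ∈ a ^ n, ∀ m ∈ s, r • m = 0 := by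
    intro s
    classical
    induction s using Finset.induction_on with
    | empty => intro _; exact ⟨0, by simp⟩
    | insert x s hx ih =>
      intro h
      obtain ⟨n, hn⟩ := ih (fun y hy => h (by simp [Finset.mem_coe.1 hy]))
      obtain ⟨k, hk⟩ := h (show x ∈ ((insert x s : Finset M) : Set M) by simp)
      refine ⟨n + k, fun r hr m hm => ?_⟩
      rcases Finset.mem_insert.1 hm with rfl | hm
      · exact hk r (Ideal.pow_le_pow_right (Nat.le_add_left k n) hr)
      · exact hn r (Ideal.pow_le_pow_right (Nat.le_add_right n k) hr) m hm
  obtain ⟨n, hn⟩ := h1 s (Submodule.subset_span.trans h)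
  refine ⟨n, fun r hr m hm => ?_⟩
  have h2 : Submodule.span R (s : Set M) ≤ LinearMap.ker (LinearMap.lsmul R M r) :=
    Submodule.span_le.2 fun y hy => hn r hr y hy
  exact h2 hm

lemma Gam_baer [IsNoetherianRing R] (a : Ideal R) (E : Type u) [AddCommGroup E] [Module R E]
    (hE : Module.Injective R E) : Module.Baer R (Gam a E) := by
  intro J f
  let f' : J →ₗ[R] E := (Gam a E).subtype ∘ₗ f
  obtain ⟨n, hn⟩ := Gam_fg a E (LinearMap.range f') (IsNoetherian.noetherian _ |> fun h => by
      rw [LinearMap.range_eq_map]; exact h.map f') (by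
      rintro _ ⟨x, rfl⟩
      exact (f x).2)
  obtain ⟨k, hk⟩ := Ideal.exists_pow_inf_eq_pow_smul a (J : Submodule R R)
  have hAR : ∀ x ∈ J, x ∈ a ^ (k + n) → x ∈ a ^ n • (J : Submodule R R) := by
    intro x hx hx'
    have h1 : x ∈ a ^ (k + n) • (⊤ : Submodule R R) ⊓ J := ⟨by simpa using hx', hx⟩
    rw [hk (k + n) (Nat.le_add_right k n), Nat.add_sub_cancel_left] at h1
    exact Submodule.smul_mono le_rfl inf_le_right h1
  let p : J →ₗ[R] R ⧸ a ^ (k + n) := (Submodule.mkQ (a ^ (k + n))) ∘ₗ J.subtype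
  have hker : LinearMap.ker p ≤ LinearMap.ker f' := by
    intro x hx
    have hx1 : (x : R) ∈ a ^ (k + n) := (Submodule.Quotient.mk_eq_zero _).1 hx
    have hx2 := hAR x x.2 hx1
    have hx3 : x ∈ a ^ n • (⊤ : Submodule R J) := by
      have : a ^ n • (J : Submodule R R) = (a ^ n • (⊤ : Submodule R J)).map J.subtype := by
        rw [Submodule.map_smul'']; simp
      rw [this] at hx2
      obtain ⟨y, hy, hyx⟩ := hx2
      rwa [← Subtype.ext hyx]
    have h3 : a ^ n • (⊤ : Submodule R J) ≤ LinearMap.ker f' := by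
      rw [Submodule.smul_le]
      intro r hr y _
      rw [LinearMap.mem_ker, map_smul]
      exact hn r hr _ ⟨y, rfl⟩
    exact h3 hx3
  obtain ⟨h, hh⟩ := hE.out ((LinearMap.ker p).liftQ p le_rfl)
    (LinearMap.ker_eq_bot.1 (Submodule.ker_liftQ_eq_bot _ _ _ le_rfl))
    ((LinearMap.ker p).liftQ f' hker)
  have key : ∀ x : J, h (Submodule.Quotient.mk (x : R)) = f' x := fun x =>
    hh (Submodule.Quotient.mk x)
  let e : E := h (Submodule.Quotient.mk 1)
  have he : ∀ r : R, h (Submodule.Quotient.mk r) = r • e := by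
    intro r
    rw [← map_smul, ← Submodule.Quotient.mk_smul]
    simp
  have heG : e ∈ Gam a E := by
    refine ⟨k + n, fun r hr => ?_⟩
    rw [← he, (Submodule.Quotient.mk_eq_zero _).2 hr, map_zero]
  refine ⟨LinearMap.toSpanSingleton R _ ⟨e, heG⟩, fun x hx => ?_⟩
  apply Subtype.ext
  change x • e = f' ⟨x, hx⟩
  rw [← key, ← he]

lemma Tor_Gam (a : Ideal R) (M : Type u) [AddCommGroup M] [Module R M] : Tor a (Gam a M) := by
  rintro ⟨m, n, hn⟩
  exact ⟨n, fun r hr => Subtype.ext (hn r hr)⟩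

lemma Tor_quot (a : Ideal R) (M : Type u) [AddCommGroup M] [Module R M] (h : Tor a M)
    (N : Submodule R M) : Tor a (M ⧸ N) := by
  intro m
  obtain ⟨m, rfl⟩ := Submodule.Quotient.mk_surjective _ m
  obtain ⟨n, hn⟩ := h m
  exact ⟨n, fun r hr => by rw [← Submodule.Quotient.mk_smul, hn r hr]; rfl⟩

lemma Tor_phi_surj (a : Ideal R) (M : ModuleCat.{u} R) (h : Tor a M) :
    Function.Surjective (phi a M) := fun m => (phi_range a M m).2 (h m)

/-- (T) -/
lemma HH_Tor [IsNoetherianRing R] (a : Ideal R) (k : ℕ) :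
    ∀ (L : Type u) [AddCommGroup L] [Module R L], Tor a L →
      Subsingleton (HH a (k+1) (ModuleCat.of R L)) := by
  induction k with
  | zero =>
    intro L _ _ hL
    let E := Injective.under (ModuleCat.of R L)
    have hEo : Injective (ModuleCat.of R E) := inferInstanceAs (Injective E)
    have hE : Module.Injective R E := Module.injective_module_of_injective_object R E
    let j : L →ₗ[R] Gam a E := LinearMap.codRestrict (Gam a E)
      (Injective.ι (ModuleCat.of R L)).hom (fun m => by
        obtain ⟨n, hn⟩ := hL m
        refine ⟨n, fun r hr => ?_⟩
        rw [← map_smul, hn r hr, map_zero])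
    have hj : Function.Injective j := by
      intro x y hxy
      exact (ModuleCat.mono_iff_injective (Injective.ι (ModuleCat.of R L))).1 inferInstance
        (congrArg Subtype.val hxy)
    have hI : Module.Injective R (Gam a E) := (Gam_baer a E hE).injective
    have hIo : Injective (ModuleCat.of R (Gam a E)) :=
      Module.injective_object_of_injective_module R _
    have hz : Subsingleton (HH a 1 (ModuleCat.of R (Gam a E))) := HH_injective a 0 _
    refine ⟨?_⟩
    have key : ∀ y : HH a 1 (ModuleCat.of R L), y = 0 := by
      intro y
      obtain ⟨z, rfl⟩ := ((HH_exact₁ a (ses j) (ses_exact j hj) 0) y).1 (Subsingleton.elim (α := HH a 1 (ModuleCat.of R (Gam a E))) _ _)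
      have hs : ∃ w, (localCohomology a 0).map (ses j).g w = z := by
        obtain ⟨v, hv⟩ := Submodule.mkQ_surjective _ (phi a _ z)
        obtain ⟨w, hw⟩ := Tor_phi_surj a (ModuleCat.of R (Gam a E)) (Tor_Gam a E) v
        refine ⟨w, phi_inj a _ ?_⟩
        exact (ConcreteCategory.congr_hom (phi_nat a (ses j).g) w).trans
          ((congrArg (ses j).g hw).trans hv)
      obtain ⟨w, rfl⟩ := hs
      exact (HH_exact₃ a (ses j) (ses_exact j hj) 0).apply_apply_eq_zero w
    intro y z
    rw [key y, key z]
  | succ k ih =>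
    intro L _ _ hL
    let E := Injective.under (ModuleCat.of R L)
    have hEo : Injective (ModuleCat.of R E) := inferInstanceAs (Injective E)
    have hE : Module.Injective R E := Module.injective_module_of_injective_object R E
    let j : L →ₗ[R] Gam a E := LinearMap.codRestrict (Gam a E)
      (Injective.ι (ModuleCat.of R L)).hom (fun m => by
        obtain ⟨n, hn⟩ := hL m
        refine ⟨n, fun r hr => ?_⟩
        rw [← map_smul, hn r hr, map_zero])
    have hj : Function.Injective j := by
      intro x y hxy
      exact (ModuleCat.mono_iff_injective (Injective.ι (ModuleCat.of R L))).1 inferInstance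
        (congrArg Subtype.val hxy)
    have hI : Module.Injective R (Gam a E) := (Gam_baer a E hE).injective
    have hIo : Injective (ModuleCat.of R (Gam a E)) :=
      Module.injective_object_of_injective_module R _
    have hz : Subsingleton (HH a (k+1+1) (ModuleCat.of R (Gam a E))) := HH_injective a (k+1) _
    have hq := ih (Gam a E ⧸ LinearMap.range j) (Tor_quot a _ (Tor_Gam a E) _)
    refine ⟨?_⟩
    have key : ∀ y : HH a (k+1+1) (ModuleCat.of R L), y = 0 := by
      intro y
      obtain ⟨z, rfl⟩ := ((HH_exact₁ a (ses j) (ses_exact j hj) (k+1)) y).1 (Subsingleton.elim (α := HH a (k+1+1) (ModuleCat.of R (Gam a E))) _ _)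
      rw [Subsingleton.elim (α := HH a (k+1) (ModuleCat.of R (Gam a E ⧸ LinearMap.range j))) z 0]
      exact map_zero _
    intro y z
    rw [key y, key z]

end Tors

section Shift
variable {R : Type u} [CommRing R]

/-- structure of `M_x / M` -/
structure ShiftMod (x : R) (M M' : Type u) [AddCommGroup M] [Module R M] [AddCommGroup M']
    [Module R M'] where
  /-- `m ↦ m / x ^ k` -/
  j : ℕ → M →ₗ[R] M'
  surj : ∀ q, ∃ k m, j k m = q
  zero_iff : ∀ k m, j k m = 0 ↔ ∃ m', x ^ k • m' = m
  succ : ∀ k m, j (k + 1) (x • m) = j k m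

lemma HH_zero_of_regular (c : Ideal R) (x : R) (hx : x ∈ c) (M : Type u) [AddCommGroup M]
    [Module R M] (hreg : IsSMulRegular M x) : Subsingleton (HH c 0 (ModuleCat.of R M)) := by
  refine ⟨fun y z => phi_inj c _ ?_⟩
  have key : ∀ y, phi c (ModuleCat.of R M) y = 0 := by
    intro y
    obtain ⟨n, hn⟩ := (phi_range c (ModuleCat.of R M) _).1 ⟨y, rfl⟩
    have h1 := hn (x ^ n) (Ideal.pow_mem_pow hx n)
    exact (hreg.pow n) (h1.trans (smul_zero _).symm)
  rw [key y, key z]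

lemma exists_shift (x : R) (M : Type u) [AddCommGroup M] [Module R M]
    (hreg : IsSMulRegular M x) : ∃ (M' : Type u) (_ : AddCommGroup M') (_ : Module R M'),
      Nonempty (ShiftMod x M M') ∧ ∀ c : Ideal R, x ∈ c → ∀ i,
        Nonempty (HH c (i+1) (ModuleCat.of R M) ≃ₗ[R] HH c i (ModuleCat.of R M')) := by
  let S := Submonoid.powers x
  let f : M →ₗ[R] LocalizedModule S M := LocalizedModule.mkLinearMap S M
  have hf : Function.Injective f := by
    rw [injective_iff_map_eq_zero]
    intro m hm
    obtain ⟨⟨_, n, rfl⟩, hs⟩ := (IsLocalizedModule.eq_zero_iff S f).1 hm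
    exact (hreg.pow n) (hs.trans (smul_zero _).symm)
  let s : ℕ → S := fun k => ⟨x ^ k, k, rfl⟩
  let j : ℕ → M →ₗ[R] (LocalizedModule S M ⧸ LinearMap.range f) := fun k =>
    (LinearMap.range f).mkQ ∘ₗ
      { toFun := fun m => IsLocalizedModule.mk' f m (s k)
        map_add' := fun m n => IsLocalizedModule.mk'_add f m n _
        map_smul' := fun r m => IsLocalizedModule.mk'_smul f r m _ }
  refine ⟨LocalizedModule S M ⧸ LinearMap.range f, inferInstance, inferInstance, ⟨⟨j, ?_, ?_, ?_⟩⟩, ?_⟩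
  · intro q
    obtain ⟨q, rfl⟩ := Submodule.mkQ_surjective _ q
    obtain ⟨⟨m, ⟨_, k, rfl⟩⟩, rfl⟩ := IsLocalizedModule.mk'_surjective S f q
    exact ⟨k, m, rfl⟩
  · intro k m
    change (LinearMap.range f).mkQ (IsLocalizedModule.mk' f m (s k)) = 0 ↔ _
    rw [Submodule.mkQ_apply, Submodule.Quotient.mk_eq_zero, LinearMap.mem_range]
    constructor
    · rintro ⟨m', hm'⟩
      have h1 := IsLocalizedModule.mk'_eq_iff.1 hm'.symm
      refine ⟨m', hf ?_⟩
      rw [h1, map_smul]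
      rfl
    · rintro ⟨m', rfl⟩
      refine ⟨m', ?_⟩
      exact (IsLocalizedModule.mk'_cancel f m' (s k)).symm
  · intro k m
    change (LinearMap.range f).mkQ (IsLocalizedModule.mk' f (x • m) (s (k+1))) =
      (LinearMap.range f).mkQ (IsLocalizedModule.mk' f m (s k))
    congr 1
    rw [← IsLocalizedModule.mk'_cancel_right f m (s k) (s 1)]
    congr 1
    · change x • m = x ^ 1 • m
      simp
    · exact Subtype.ext (pow_add x k 1)
  · intro c hc i
    have hbij : Function.Bijective (fun m : LocalizedModule S M => x • m) := by
      have := IsLocalizedModule.map_units f (s 1)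
      rw [Module.End.isUnit_iff] at this
      convert this using 2 with m
      rw [Module.algebraMap_end_apply]
      change _ = x ^ 1 • m
      rw [pow_one]
    have hz : ∀ i, Subsingleton (HH c i (ModuleCat.of R (LocalizedModule S M))) := fun i =>
      HH_inv c i (ModuleCat.of R (LocalizedModule S M)) x hc hbij
    let d : HH c i (ModuleCat.of R (LocalizedModule S M ⧸ LinearMap.range f)) →ₗ[R]
        HH c (i+1) (ModuleCat.of R M) := (dH c (ses f) (ses_exact f hf) i).hom
    have hd : Function.Bijective d := by
      constructor
      · rw [injective_iff_map_eq_zero]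
        intro y hy
        obtain ⟨z, rfl⟩ := (HH_exact₃ c (ses f) (ses_exact f hf) i y).1 hy
        rw [(hz i).elim z 0]
        exact map_zero _
      · intro y
        exact (HH_exact₁ c (ses f) (ses_exact f hf) i y).1 ((hz (i+1)).elim _ _)
    exact ⟨(LinearEquiv.ofBijective d hd).symm⟩

/-- `xM` -/
def xT (M : Type u) [AddCommGroup M] [Module R M] (x : R) : Submodule R M :=
  LinearMap.range (LinearMap.lsmul R M x)

lemma mem_xT {M : Type u} [AddCommGroup M] [Module R M] {x : R} {m : M} :
    m ∈ xT M x ↔ ∃ m', x • m' = m := Iff.rfl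

lemma xT_eq (M : Type u) [AddCommGroup M] [Module R M] (x : R) (rs : List R) :
    (Ideal.ofList (x :: rs) • ⊤ : Submodule R M) = xT M x ⊔ Ideal.ofList rs • ⊤ := by
  rw [Ideal.ofList_cons_smul]
  congr 1
  ext m
  rw [Submodule.mem_smul_pointwise_iff_exists]
  simp [mem_xT]

/-- regular mod `N` -/
def RegMod {M : Type u} [AddCommGroup M] [Module R M] (x : R) (N : Submodule R M) : Prop :=
  ∀ m, x • m ∈ N → m ∈ N

/-- weakly regular mod `N` -/
def WW {M : Type u} [AddCommGroup M] [Module R M] : List R → Submodule R M → Prop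
  | [], _ => True
  | x :: rs, N => RegMod x N ∧ WW rs (N ⊔ xT M x)

lemma regMod_iff {M : Type u} [AddCommGroup M] [Module R M] (x : R) (N : Submodule R M) :
    IsSMulRegular (M ⧸ N) x ↔ RegMod x N := by
  constructor
  · intro h m hm
    rw [← Submodule.Quotient.mk_eq_zero] at hm ⊢
    rw [Submodule.Quotient.mk_smul] at hm
    exact h (hm.trans (smul_zero x).symm)
  · intro h p q hpq
    obtain ⟨p, rfl⟩ := Submodule.Quotient.mk_surjective _ p
    obtain ⟨q, rfl⟩ := Submodule.Quotient.mk_surjective _ q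
    have : x • (Submodule.Quotient.mk p : M ⧸ N) = x • Submodule.Quotient.mk q := hpq
    rw [← Submodule.Quotient.mk_smul, ← Submodule.Quotient.mk_smul, Submodule.Quotient.eq,
      ← smul_sub] at this
    exact (Submodule.Quotient.eq _).2 (h _ this)

lemma WW_of {M : Type u} [AddCommGroup M] [Module R M] (rs : List R) : ∀ (N : Submodule R M),
    (∀ i (h : i < rs.length), RegMod rs[i] (N ⊔ Ideal.ofList (rs.take i) • ⊤)) → WW rs N := by
  induction rs with
  | nil => intro N _; trivial
  | cons x rs ih =>
    intro N h
    refine ⟨?_, ih _ ?_⟩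
    · have := h 0 (by simp)
      simpa using this
    · intro i hi
      have := h (i+1) (by simpa using hi)
      rw [List.take_succ_cons, xT_eq, ← sup_assoc] at this
      simpa using this

lemma WW_of_weaklyRegular {M : Type u} [AddCommGroup M] [Module R M] (rs : List R)
    (h : IsWeaklyRegular M rs) : WW rs (⊥ : Submodule R M) := by
  apply WW_of
  intro i hi
  rw [bot_sup_eq, ← regMod_iff]
  exact h.regular_mod_prev i hi

section LemA
variable {M : Type u} [AddCommGroup M] [Module R M] {N : Submodule R M} {x y : R}

lemma RegMod.pow (h : RegMod x N) (k : ℕ) : RegMod (x ^ k) N := by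
  induction k with
  | zero => intro m hm; simpa using hm
  | succ k ih =>
    intro m hm
    rw [pow_succ', mul_smul] at hm
    exact ih _ (h _ hm)

lemma lemA1 (h : RegMod x N) (h' : RegMod y (N ⊔ xT M x)) (k : ℕ) :
    RegMod y (N ⊔ xT M (x ^ k)) := by
  induction k with
  | zero =>
    intro m _
    exact Submodule.mem_sup_right ⟨m, by simp⟩
  | succ k ih =>
    intro m hm
    obtain ⟨n, hn, _, ⟨m', rfl⟩, he⟩ := Submodule.mem_sup.1 hm
    have he : n + x ^ (k+1) • m' = y • m := he
    have h1 : y • m ∈ N ⊔ xT M (x ^ k) := by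
      rw [← he]
      refine add_mem (Submodule.mem_sup_left hn) (Submodule.mem_sup_right ⟨x • m', ?_⟩)
      change x ^ k • x • m' = _
      rw [pow_succ, mul_smul]
    obtain ⟨n1, hn1, _, ⟨m1, rfl⟩, he1⟩ := Submodule.mem_sup.1 (ih m h1)
    have he1 : n1 + x ^ k • m1 = m := he1
    have h2 : x ^ k • (y • m1 - x • m') ∈ N := by
      have : x ^ k • (y • m1 - x • m') = n - y • n1 := by
        rw [← he1] at he
        rw [smul_sub, ← mul_smul (x ^ k) x, ← pow_succ, smul_comm (x ^ k) y, sub_eq_sub_iff_add_eq_add,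
          he, smul_add, add_comm]
      rw [this]
      exact sub_mem hn (N.smul_mem _ hn1)
    have h3 := h.pow k _ h2
    have h4 : y • m1 ∈ N ⊔ xT M x := by
      have : y • m1 = (y • m1 - x • m') + x • m' := by abel
      rw [this]
      exact add_mem (Submodule.mem_sup_left h3) (Submodule.mem_sup_right ⟨m', rfl⟩)
    obtain ⟨n2, hn2, _, ⟨m2, rfl⟩, he2⟩ := Submodule.mem_sup.1 (h' m1 h4)
    have he2 : n2 + x • m2 = m1 := he2
    rw [← he1, ← he2, smul_add, ← mul_smul, ← pow_succ, ← add_assoc]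
    exact add_mem (Submodule.mem_sup_left (add_mem hn1 (N.smul_mem _ hn2)))
      (Submodule.mem_sup_right ⟨m2, rfl⟩)

lemma lemA2 (h : RegMod x N) (h' : RegMod y (N ⊔ xT M x)) : RegMod x (N ⊔ xT M y) := by
  intro m hm
  obtain ⟨n, hn, _, ⟨m1, rfl⟩, he⟩ := Submodule.mem_sup.1 hm
  have he : n + y • m1 = x • m := he
  have h1 : y • m1 ∈ N ⊔ xT M x := by
    have : y • m1 = -n + x • m := by rw [← he]; abel
    rw [this]
    exact add_mem (Submodule.mem_sup_left (neg_mem hn)) (Submodule.mem_sup_right ⟨m, rfl⟩)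
  obtain ⟨n2, hn2, _, ⟨m2, rfl⟩, he2⟩ := Submodule.mem_sup.1 (h' m1 h1)
  have he2 : n2 + x • m2 = m1 := he2
  have h3 : x • (m - y • m2) ∈ N := by
    have : x • (m - y • m2) = n + y • n2 := by
      rw [smul_sub, ← he, ← he2, smul_add, smul_comm x y]; abel
    rw [this]
    exact add_mem hn (N.smul_mem _ hn2)
  have h4 := h _ h3
  have : m = (m - y • m2) + y • m2 := by abel
  rw [this]
  exact add_mem (Submodule.mem_sup_left h4) (Submodule.mem_sup_right ⟨m2, rfl⟩)

lemma regMod_ofList (rs : List R) : ∀ (N : Submodule R M), RegMod x N → WW rs (N ⊔ xT M x) →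
    RegMod x (N ⊔ Ideal.ofList rs • ⊤) := by
  induction rs with
  | nil => intro N h _; simpa using h
  | cons y rs ih =>
    intro N h h'
    rw [xT_eq, ← sup_assoc]
    refine ih _ (lemA2 h h'.1) ?_
    rw [sup_right_comm]
    exact h'.2

end LemA

namespace ShiftMod
variable {x : R} {M M' : Type u} [AddCommGroup M] [Module R M] [AddCommGroup M']
    [Module R M'] (s : ShiftMod x M M')

lemma add_pow (k l : ℕ) (m : M) : s.j (k + l) (x ^ l • m) = s.j k m := by
  induction l with
  | zero => simp
  | succ l ih => rw [pow_succ', mul_smul, ← add_assoc, s.succ, ih]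

lemma add_pow' (k l : ℕ) (m : M) : s.j (k + l) (x ^ k • m) = s.j l m := by
  rw [add_comm, add_pow]

/-- `N^` -/
def hat (N : Submodule R M) : Submodule R M' where
  carrier := {q | ∃ k, ∃ n ∈ N, s.j k n = q}
  zero_mem' := ⟨0, 0, N.zero_mem, map_zero _⟩
  add_mem' := by
    rintro _ _ ⟨k, n, hn, rfl⟩ ⟨l, m, hm, rfl⟩
    refine ⟨k + l, x ^ l • n + x ^ k • m, add_mem (N.smul_mem _ hn) (N.smul_mem _ hm), ?_⟩
    rw [map_add, add_pow, add_pow']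
  smul_mem' := by
    rintro r _ ⟨k, n, hn, rfl⟩
    exact ⟨k, r • n, N.smul_mem _ hn, map_smul _ _ _⟩

lemma j_mem_hat {N : Submodule R M} {n : M} (hn : n ∈ N) (k : ℕ) : s.j k n ∈ s.hat N :=
  ⟨k, n, hn, rfl⟩

lemma j_mem_hat' {N : Submodule R M} {k : ℕ} {m : M} (h : m ∈ N ⊔ xT M (x ^ k)) :
    s.j k m ∈ s.hat N := by
  obtain ⟨n, hn, _, ⟨m1, rfl⟩, he⟩ := Submodule.mem_sup.1 h
  have he : n + x ^ k • m1 = m := he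
  rw [← he, map_add, (s.zero_iff k _).2 ⟨m1, rfl⟩, add_zero]
  exact s.j_mem_hat hn k

lemma hat_crit {N : Submodule R M} (h : RegMod x N) {k : ℕ} {m : M} (hm : s.j k m ∈ s.hat N) :
    m ∈ N ⊔ xT M (x ^ k) := by
  obtain ⟨l, n, hn, he⟩ := hm
  have h1 : s.j (k + l) (x ^ l • m - x ^ k • n) = 0 := by
    rw [map_sub, add_pow, add_pow', he, sub_self]
  obtain ⟨m', hm'⟩ := (s.zero_iff _ _).1 h1
  have h2 : x ^ l • (m - x ^ k • m') ∈ N := by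
    have : x ^ l • (m - x ^ k • m') = x ^ k • n := by
      rw [smul_sub, ← mul_smul, ← pow_add, add_comm l k, hm']; abel
    rw [this]
    exact N.smul_mem _ hn
  have h3 := h.pow l _ h2
  have : m = (m - x ^ k • m') + x ^ k • m' := by abel
  rw [this]
  exact add_mem (Submodule.mem_sup_left h3) (Submodule.mem_sup_right ⟨m', rfl⟩)

lemma hat_bot : s.hat ⊥ = ⊥ := by
  rw [eq_bot_iff]
  rintro _ ⟨k, n, hn, rfl⟩
  rw [(Submodule.mem_bot R).1 hn, map_zero]
  exact zero_mem _

lemma hat_sup_xT (N : Submodule R M) (y : R) : s.hat (N ⊔ xT M y) = s.hat N ⊔ xT M' y := by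
  apply le_antisymm
  · rintro _ ⟨k, n, hn, rfl⟩
    obtain ⟨n, hn', _, ⟨m1, rfl⟩, rfl⟩ := Submodule.mem_sup.1 hn
    rw [map_add]
    refine add_mem (Submodule.mem_sup_left (s.j_mem_hat hn' k)) (Submodule.mem_sup_right ?_)
    exact ⟨s.j k m1, (map_smul (s.j k) y m1).symm⟩
  · refine sup_le ?_ ?_
    · rintro _ ⟨k, n, hn, rfl⟩
      exact s.j_mem_hat (Submodule.mem_sup_left hn) k
    · rintro _ ⟨q, rfl⟩
      obtain ⟨k, m, rfl⟩ := s.surj q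
      refine ⟨k, y • m, Submodule.mem_sup_right ⟨m, rfl⟩, map_smul _ _ _⟩

lemma hat_ideal (I : Ideal R) : s.hat (I • ⊤) = I • ⊤ := by
  apply le_antisymm
  · rintro _ ⟨k, n, hn, rfl⟩
    have h1 : s.j k n ∈ (I • (⊤ : Submodule R M)).map (s.j k) := ⟨n, hn, rfl⟩
    rw [Submodule.map_smul''] at h1
    exact Submodule.smul_mono le_rfl le_top h1
  · rw [Submodule.smul_le]
    intro r hr q _
    obtain ⟨k, m, rfl⟩ := s.surj q
    exact ⟨k, r • m, Submodule.smul_mem_smul hr trivial, map_smul _ _ _⟩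

lemma hat_WW (rs : List R) : ∀ N : Submodule R M, RegMod x N → WW rs (N ⊔ xT M x) →
    WW rs (s.hat N) := by
  induction rs with
  | nil => intro _ _ _; trivial
  | cons y rs ih =>
    intro N h h'
    refine ⟨?_, ?_⟩
    · intro q hq
      obtain ⟨k, m, rfl⟩ := s.surj q
      rw [← map_smul] at hq
      exact s.j_mem_hat' (lemA1 h h'.1 k m (s.hat_crit h hq))
    · rw [← hat_sup_xT]
      refine ih _ (lemA2 h h'.1) ?_
      rw [sup_right_comm]
      exact h'.2

/-- propagation of torsion -/
lemma propagate (s : ShiftMod x M M') (I : Ideal R) (r : R)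
    (h : ∀ m : M, ∃ n, r ^ n • m ∈ xT M x ⊔ I • (⊤ : Submodule R M)) (q : M') :
    ∃ n, r ^ n • q ∈ I • (⊤ : Submodule R M') := by
  obtain ⟨k, m, rfl⟩ := s.surj q
  have key : ∀ k, ∃ n, r ^ n • m ∈ I • (⊤ : Submodule R M) ⊔ xT M (x ^ k) := by
    intro k
    induction k with
    | zero => exact ⟨0, Submodule.mem_sup_right ⟨r ^ 0 • m, by simp⟩⟩
    | succ k ih =>
      obtain ⟨n, hn⟩ := ih
      obtain ⟨p, hp, _, ⟨m1, rfl⟩, he⟩ := Submodule.mem_sup.1 hn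
      have he : p + x ^ k • m1 = r ^ n • m := he
      obtain ⟨n', hn'⟩ := h m1
      obtain ⟨_, ⟨m2, rfl⟩, p', hp', he'⟩ := Submodule.mem_sup.1 hn'
      have he' : x • m2 + p' = r ^ n' • m1 := he'
      refine ⟨n' + n, ?_⟩
      have : r ^ (n' + n) • m = (r ^ n' • p + x ^ k • p') + x ^ (k + 1) • m2 := by
        rw [pow_add, mul_smul, ← he, smul_add, smul_comm (r ^ n') (x ^ k), ← he', smul_add,
          pow_succ, mul_smul]
        abel
      rw [this]
      exact add_mem (Submodule.mem_sup_left (add_mem (Submodule.smul_mem _ _ hp)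
        (Submodule.smul_mem _ _ hp'))) (Submodule.mem_sup_right ⟨m2, rfl⟩)
  obtain ⟨n, hn⟩ := key k
  refine ⟨n, ?_⟩
  rw [← map_smul, ← s.hat_ideal]
  exact s.j_mem_hat' hn

end ShiftMod

/-- iterate -/
theorem exists_K (rs : List R) : ∀ (M : Type u) [AddCommGroup M] [Module R M],
    WW rs (⊥ : Submodule R M) → ∃ (K : Type u) (_ : AddCommGroup K) (_ : Module R K),
      (∀ c : Ideal R, (∀ r ∈ rs, r ∈ c) →
        (∀ i, i < rs.length → Subsingleton (HH c i (ModuleCat.of R M))) ∧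
        ∀ i, Nonempty (HH c (i + rs.length) (ModuleCat.of R M) ≃ₗ[R] HH c i (ModuleCat.of R K))) ∧
      (∀ r : R, (∀ m : M, ∃ n, r ^ n • m ∈ (Ideal.ofList rs • ⊤ : Submodule R M)) →
        ∀ k : K, ∃ n, r ^ n • k = 0) ∧
      (∀ a : Ideal R, (∃ m : M, m ∉ (Ideal.ofList rs • ⊤ : Submodule R M) ∧
          ∀ r ∈ a, r • m ∈ (Ideal.ofList rs • ⊤ : Submodule R M)) →
        ∃ k : K, k ≠ 0 ∧ ∀ r ∈ a, r • k = 0) := by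
  induction rs with
  | nil =>
    intro M _ _ _
    refine ⟨M, inferInstance, inferInstance, ?_, ?_, ?_⟩
    · intro c _
      exact ⟨fun i hi => absurd hi (Nat.not_lt_zero i), fun i => ⟨LinearEquiv.refl R _⟩⟩
    · intro r h k
      simpa using h k
    · rintro a ⟨m, hm, h⟩
      exact ⟨m, by simpa using hm, by simpa using h⟩
  | cons x rs ih =>
    intro M _ _ h
    have hreg : IsSMulRegular M x := by
      intro p q hpq
      have h1 : x • (p - q) ∈ (⊥ : Submodule R M) := by
        rw [smul_sub, Submodule.mem_bot]; exact sub_eq_zero.2 hpq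
      exact sub_eq_zero.1 ((Submodule.mem_bot R).1 (h.1 _ h1))
    obtain ⟨M', _, _, ⟨s⟩, hH⟩ := exists_shift x M hreg
    have hW : WW rs (⊥ : Submodule R M') := by
      rw [← s.hat_bot]
      exact s.hat_WW rs ⊥ h.1 h.2
    obtain ⟨K, _, _, h1, h2, h3⟩ := ih M' hW
    refine ⟨K, inferInstance, inferInstance, ?_, ?_, ?_⟩
    · intro c hc
      have hx : x ∈ c := hc x (by simp)
      obtain ⟨g1, g2⟩ := h1 c (fun r hr => hc r (by simp [hr]))
      constructor
      · intro i hi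
        cases i with
        | zero => exact HH_zero_of_regular c x hx M hreg
        | succ i =>
          obtain ⟨e⟩ := hH c hx i
          have := g1 i (by simpa using hi)
          exact e.injective.subsingleton
      · intro i
        obtain ⟨e⟩ := hH c hx (i + rs.length)
        obtain ⟨e'⟩ := g2 i
        exact ⟨e.trans e'⟩
    · intro r hr
      refine h2 r (s.propagate _ r ?_)
      intro m
      rw [← xT_eq]
      exact hr m
    · rintro a ⟨m, hm, ha⟩
      refine h3 a ⟨s.j 1 m, ?_, ?_⟩
      · intro hmem
        rw [← s.hat_ideal] at hmem
        have hrg : RegMod x (Ideal.ofList rs • (⊤ : Submodule R M)) := by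
          have := regMod_ofList rs ⊥ h.1 h.2
          rwa [bot_sup_eq] at this
        have h5 := s.hat_crit hrg hmem
        rw [pow_one, sup_comm, ← xT_eq] at h5
        exact hm h5
      · intro r hr
        have h5 := ha r hr
        rw [xT_eq, sup_comm, ← pow_one x] at h5
        rw [← map_smul, ← s.hat_ideal]
        exact s.j_mem_hat' h5

end Shift

section Final
variable {R : Type u} [CommRing R]

lemma HH_nontrivial_congr (a : Ideal R) (i : ℕ) {N N' : Type u} [AddCommGroup N] [Module R N]
    [AddCommGroup N'] [Module R N'] (e : N ≃ₗ[R] N')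
    (h : Nontrivial (HH a i (ModuleCat.of R N))) : Nontrivial (HH a i (ModuleCat.of R N')) :=
  (((localCohomology a i).mapIso e.toModuleIso).toLinearEquiv.toEquiv.nontrivial_congr).1 h

lemma cohDim_congr (a : Ideal R) {N N' : Type u} [AddCommGroup N] [Module R N]
    [AddCommGroup N'] [Module R N'] (e : N ≃ₗ[R] N') : cohDim a N = cohDim a N' := by
  unfold cohDim
  congr 1
  ext n
  constructor
  · rintro ⟨i, rfl, h⟩
    exact ⟨i, rfl, HH_nontrivial_congr a i e h⟩
  · rintro ⟨i, rfl, h⟩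
    exact ⟨i, rfl, HH_nontrivial_congr a i e.symm h⟩

/-- `H^0 ≃ Γ` -/
lemma HH_zero_Gam (b : Ideal R) (K : Type u) [AddCommGroup K] [Module R K] :
    Nonempty (HH b 0 (ModuleCat.of R K) ≃ₗ[R] Gam b K) := by
  let f : HH b 0 (ModuleCat.of R K) →ₗ[R] Gam b K :=
    LinearMap.codRestrict (Gam b K) (phi b (ModuleCat.of R K)).hom
      (fun y => (phi_range b (ModuleCat.of R K) _).1 ⟨y, rfl⟩)
  refine ⟨LinearEquiv.ofBijective f ⟨?_, ?_⟩⟩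
  · intro y z h
    exact phi_inj b _ (congrArg Subtype.val h)
  · rintro ⟨m, hm⟩
    obtain ⟨y, hy⟩ := (phi_range b (ModuleCat.of R K) m).2 hm
    exact ⟨y, Subtype.ext hy⟩

lemma gradeM_eq (a : Ideal R) (M : Type u) [AddCommGroup M] [Module R M] (rs : List R)
    (hrs : IsRegular M rs) (ha : ∀ r ∈ rs, r ∈ a)
    (hnt : Nontrivial (HH a rs.length (ModuleCat.of R M))) : gradeM a M = rs.length := by
  unfold gradeM
  have hle : ∀ n ∈ {n : ℕ | ∃ rs : List R, rs.length = n ∧ (∀ r ∈ rs, r ∈ a) ∧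
      RingTheory.Sequence.IsRegular M rs}, n ≤ rs.length := by
    rintro _ ⟨ss, rfl, hss, hreg⟩
    by_contra hlt
    obtain ⟨K, _, _, h1, -, -⟩ := exists_K ss M (WW_of_weaklyRegular ss hreg.toIsWeaklyRegular)
    have := (h1 a hss).1 rs.length (not_le.1 hlt)
    exact not_subsingleton _ this
  have hmem : rs.length ∈ {n : ℕ | ∃ rs : List R, rs.length = n ∧ (∀ r ∈ rs, r ∈ a) ∧
      RingTheory.Sequence.IsRegular M rs} := ⟨rs, rfl, ha, hrs⟩
  exact le_antisymm (csSup_le ⟨_, hmem⟩ hle) (le_csSup ⟨_, hle⟩ hmem)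

lemma Gam_surj [IsNoetherianRing R] (a b : Ideal R) (K : Type u) [AddCommGroup K] [Module R K]
    (hT : Tor a (K ⧸ LinearMap.range (Gam b K).subtype)) (p : ℕ)
    (h : Nontrivial (HH a (p+1) (ModuleCat.of R K))) :
    Nontrivial (HH a (p+1) (ModuleCat.of R (Gam b K))) := by
  by_contra hn
  rw [not_nontrivial_iff_subsingleton] at hn
  have hz := HH_Tor a p _ hT
  have key : ∀ y : HH a (p+1) (ModuleCat.of R K), y = 0 := by
    intro y
    obtain ⟨z, rfl⟩ := (HH_exact₂ a (ses (Gam b K).subtype)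
      (ses_exact _ (Submodule.subtype_injective _)) (p+1) y).1 (hz.elim _ _)
    rw [hn.elim z 0]
    exact map_zero _
  obtain ⟨y, z, hyz⟩ := h
  exact hyz ((key y).trans (key z).symm)

lemma Gam_inj [IsNoetherianRing R] (a b : Ideal R) (K : Type u) [AddCommGroup K] [Module R K]
    (hT : Tor a (K ⧸ LinearMap.range (Gam b K).subtype)) (p : ℕ)
    (h : Nontrivial (HH a (p+1+1) (ModuleCat.of R (Gam b K)))) :
    Nontrivial (HH a (p+1+1) (ModuleCat.of R K)) := by
  by_contra hn
  rw [not_nontrivial_iff_subsingleton] at hn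
  have hz := HH_Tor a p _ hT
  have key : ∀ y : HH a (p+1+1) (ModuleCat.of R (Gam b K)), y = 0 := by
    intro y
    obtain ⟨z, rfl⟩ := (HH_exact₁ a (ses (Gam b K).subtype)
      (ses_exact _ (Submodule.subtype_injective _)) (p+1) y).1 (hn.elim _ _)
    rw [hz.elim z 0]
    exact map_zero _
  obtain ⟨y, z, hyz⟩ := h
  exact hyz ((key y).trans (key z).symm)

lemma mem_modColon {M : Type u} [AddCommGroup M] [Module R M] (N : Submodule R M) (a : Ideal R)
    (m : M) : m ∈ Submodule.modColon N a ↔ ∀ r ∈ a, r • m ∈ N := by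
  simp [Submodule.modColon]

theorem main [IsNoetherianRing R] (M : Type u) [AddCommGroup M] [Module R M] (I a b : Ideal R)
    (h : Ideal.IsLinkedBy M I a b) (hncm : (gradeM a M : ℕ∞) < cohDim a M) :
    cohDim a M =
      cohDim a ↥((localCohomology b (gradeM a M)).obj (ModuleCat.of R M)) +
        (gradeM a M : ℕ∞) := by
  obtain ⟨⟨rs, hrs, rfl⟩, hI, haM, hbM, hcol1, hcol2⟩ := h
  have hrsI : ∀ r ∈ rs, r ∈ Ideal.ofList rs := fun r hr => Ideal.subset_span hr
  have hra : ∀ r ∈ rs, r ∈ a := fun r hr => (hI (hrsI r hr)).1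
  have hrb : ∀ r ∈ rs, r ∈ b := fun r hr => (hI (hrsI r hr)).2
  obtain ⟨K, _, _, h1, h2, h3⟩ := exists_K rs M (WW_of_weaklyRegular rs hrs.toIsWeaklyRegular)
  obtain ⟨-, ha2⟩ := h1 a hra
  obtain ⟨-, hb2⟩ := h1 b hrb
  -- socle element
  have hsoc : ∃ k : K, k ≠ 0 ∧ ∀ r ∈ a, r • k = 0 := by
    apply h3
    by_contra hcon
    push Not at hcon
    have hle : b • (⊤ : Submodule R M) ≤ Ideal.ofList rs • (⊤ : Submodule R M) := by
      intro m hm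
      by_contra hm'
      obtain ⟨r, hr, hrm⟩ := hcon m hm'
      rw [← hcol1, mem_modColon] at hm
      exact hrm (hm r hr)
    apply haM
    rw [← hcol2, eq_top_iff]
    intro m _
    rw [mem_modColon]
    intro r hr
    exact hle (Submodule.smul_mem_smul hr trivial)
  have hnt : Nontrivial (HH a rs.length (ModuleCat.of R M)) := by
    obtain ⟨e⟩ := ha2 0
    rw [Nat.zero_add] at e
    obtain ⟨e'⟩ := HH_zero_Gam a K
    obtain ⟨k, hk, hk'⟩ := hsoc
    have : Nontrivial (Gam a K) := by
      refine ⟨⟨⟨k, 1, fun r hr => hk' r (by simpa using hr)⟩, 0, fun h => hk ?_⟩⟩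
      exact congrArg Subtype.val h
    exact (e.trans e').toEquiv.nontrivial
  have hgr := gradeM_eq a M rs hrs hra hnt
  rw [hgr] at hncm ⊢
  -- torsion
  have hab : ∀ k : K, ∃ n, ∀ r ∈ (a * b) ^ n, r • k = 0 := by
    intro k
    have hrad : a * b ≤ Ideal.radical (LinearMap.ker (LinearMap.toSpanSingleton R K k)) := by
      intro r hr
      obtain ⟨n, hn⟩ := h2 r (fun m => ⟨1, by
        rw [pow_one]
        have hle : a * b ≤ (Submodule.comap (LinearMap.toSpanSingleton R M m)
            (Ideal.ofList rs • (⊤ : Submodule R M)) : Ideal R) := by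
          rw [Ideal.mul_le]
          intro r hr s hs
          have h5 : s • m ∈ b • (⊤ : Submodule R M) := Submodule.smul_mem_smul hs trivial
          rw [← hcol1, mem_modColon] at h5
          have h6 := h5 r hr
          rw [← mul_smul] at h6
          exact h6
        exact hle hr⟩) k
      exact ⟨n, hn⟩
    obtain ⟨n, hn⟩ := Ideal.exists_pow_le_of_le_radical_of_fg hrad (IsNoetherian.noetherian _)
    exact ⟨n, fun r hr => hn hr⟩
  have hT : Tor a (K ⧸ LinearMap.range (Gam b K).subtype) := by
    rw [Submodule.range_subtype]
    intro q
    obtain ⟨k, rfl⟩ := Submodule.Quotient.mk_surjective _ q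
    obtain ⟨n, hn⟩ := hab k
    refine ⟨n, fun r hr => ?_⟩
    rw [← Submodule.Quotient.mk_smul, Submodule.Quotient.mk_eq_zero]
    refine ⟨n, fun s hs => ?_⟩
    rw [← mul_smul, mul_comm]
    apply hn
    rw [mul_pow]
    exact Ideal.mul_mem_mul hr hs
  -- identify
  obtain ⟨e⟩ := hb2 0
  rw [Nat.zero_add] at e
  obtain ⟨e'⟩ := HH_zero_Gam b K
  have hcd : cohDim a ↥((localCohomology b rs.length).obj (ModuleCat.of R M)) =
      cohDim a (Gam b K) := cohDim_congr a (e.trans e')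
  rw [hcd]
  apply le_antisymm
  · apply sSup_le
    rintro _ ⟨i, rfl, hi⟩
    rcases le_or_gt i rs.length with hle | hlt
    · exact (Nat.cast_le.2 hle).trans le_add_self
    · obtain ⟨p, rfl⟩ : ∃ p, i = (p + 1) + rs.length := ⟨i - rs.length - 1, by omega⟩
      obtain ⟨e⟩ := ha2 (p + 1)
      have h5 : Nontrivial (HH a (p + 1) (ModuleCat.of R K)) :=
        e.toEquiv.nontrivial_congr.1 hi
      have h6 := Gam_surj a b K hT p h5
      have h7 : ((p + 1 : ℕ) : ℕ∞) ≤ cohDim a (Gam b K) := le_sSup ⟨p + 1, rfl, h6⟩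
      rw [Nat.cast_add]
      gcongr
  · have hle : cohDim a (Gam b K) ≤ cohDim a M - (rs.length : ℕ∞) := by
      apply sSup_le
      rintro _ ⟨p, rfl, hp⟩
      apply ENat.le_sub_of_add_le_right (ENat.natCast_ne_top _)
      rcases le_or_gt p 1 with hle | hlt
      · have h8 : (rs.length : ℕ∞) + 1 ≤ cohDim a M := Order.add_one_le_of_lt hncm
        refine le_trans ?_ h8
        rw [add_comm]
        gcongr
        exact_mod_cast hle
      · obtain ⟨q, rfl⟩ : ∃ q, p = q + 1 + 1 := ⟨p - 2, by omega⟩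
        have h6 := Gam_inj a b K hT q hp
        obtain ⟨e⟩ := ha2 (q + 1 + 1)
        rw [← Nat.cast_add]
        exact le_sSup ⟨_, rfl, e.toEquiv.nontrivial_congr.2 h6⟩
    calc cohDim a (Gam b K) + (rs.length : ℕ∞)
        ≤ (cohDim a M - (rs.length : ℕ∞)) + rs.length := by gcongr
      _ = cohDim a M := tsub_add_cancel_of_le hncm.le

end Final

end LinkAux

variable {R : Type u} [CommRing R] [IsNoetherianRing R]
variable {M : Type u} [AddCommGroup M] [Module R M] [Module.Finite R M] [Nontrivial M]

theorem stmt10 (I a b : Ideal R) (h : Ideal.IsLinkedBy M I a b)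
    (hgeo : a • (⊤ : Submodule R M) ⊓ b • (⊤ : Submodule R M) = I • (⊤ : Submodule R M))
    (hncm : (gradeM a M : ℕ∞) < cohDim a M) :
    cohDim a M =
      cohDim a ↥((localCohomology b (gradeM a M)).obj (ModuleCat.of R M)) +
        (gradeM a M : ℕ∞) := by
  exact LinkAux.main M I a b h hncm
end
end

section
/- Let a and b be proper ideals of a Noetherian local ring R and M a nonzero finitely generated R-module with aM ≠ M ≠ bM, bM = 0 :_M a, aM = 0 :_M b, and aM ∩ bM = 0. Then grade_M(a + b) = 1; in particular, it is impossible that M ≅ aM ⊕ bM with both summands nonzero unless a contradiction arises: indeed, if grade_M(a+b) > 1 then M = aM ⊕ bM, and since abM = 0, Krull's intersection theorem forces bM = 0 and aM = M, a contradiction. -/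
universe u

open RingTheory.Sequence CategoryTheory

noncomputable section

variable {R : Type u} [CommRing R] [IsNoetherianRing R] [IsLocalRing R]
variable {M : Type u} [AddCommGroup M] [Module R M] [Module.Finite R M] [Nontrivial M]

theorem stmt12 (a b : Ideal R) (ha : a ≠ ⊤) (hb : b ≠ ⊤)
    (h : Ideal.IsLinkedBy M ⊥ a b)
    (hgeo : a • (⊤ : Submodule R M) ⊓ b • (⊤ : Submodule R M) = ⊥) :
    gradeM (a + b) M = 1 := by
  obtain ⟨-, -, -, -, h1, h2⟩ := h
  have hA : ∀ m : M, m ∈ a • (⊤ : Submodule R M) ↔ ∀ r ∈ b, r • m = 0 := by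
    intro m; rw [← h2]; simp [Submodule.modColon]
  have hB : ∀ m : M, m ∈ b • (⊤ : Submodule R M) ↔ ∀ r ∈ a, r • m = 0 := by
    intro m; rw [← h1]; simp [Submodule.modColon]
  have hz : ∀ m : M, m ∈ a • (⊤ : Submodule R M) → m ∈ b • (⊤ : Submodule R M) → m = 0 := by
    intro m h3 h4
    have : m ∈ a • (⊤ : Submodule R M) ⊓ b • (⊤ : Submodule R M) := ⟨h3, h4⟩
    rwa [hgeo, Submodule.mem_bot] at this
  have hma : ∀ r ∈ a, ∀ m : M, r • m ∈ a • (⊤ : Submodule R M) := fun r hr m =>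
    Submodule.smul_mem_smul hr trivial
  have hmb : ∀ r ∈ b, ∀ m : M, r • m ∈ b • (⊤ : Submodule R M) := fun r hr m =>
    Submodule.smul_mem_smul hr trivial
  have hle : a ⊔ b ≤ IsLocalRing.maximalIdeal R :=
    sup_le (IsLocalRing.le_maximalIdeal ha) (IsLocalRing.le_maximalIdeal hb)
  -- a regular element exists
  have hex : ∃ x ∈ a ⊔ b, IsSMulRegular M x := by
    by_contra! hcon
    have hsub : ((a ⊔ b : Ideal R) : Set R) ⊆ ⋃ p ∈ associatedPrimes R M, (p : Set R) := by
      rw [biUnion_associatedPrimes_eq_compl_regular R M]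
      exact fun r hr => hcon r hr
    obtain ⟨p, hp, hlep⟩ := (Ideal.subset_union_prime_finite (associatedPrimes.finite R M)
      (f := id) 0 0 (fun _ h _ _ => h.isPrime)).1 hsub
    rw [AssociatedPrimes.mem_iff, isAssociatedPrime_iff] at hp
    obtain ⟨hpp, m, rfl⟩ := hp
    have hm : ∀ r ∈ a ⊔ b, r • m = 0 := fun r hr => by
      simpa [Submodule.mem_colon_singleton] using hlep hr
    have hm0 : m = 0 := hz m ((hA m).2 fun r hr => hm r (Ideal.mem_sup_right hr))
      ((hB m).2 fun r hr => hm r (Ideal.mem_sup_left hr))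
    apply hpp.ne_top
    rw [Ideal.eq_top_iff_one, Submodule.mem_colon_singleton, hm0]
    simp
  -- no regular sequence of length two
  have hno : ∀ x ∈ a ⊔ b, ∀ y ∈ a ⊔ b, IsSMulRegular M x →
      IsSMulRegular (QuotSMulTop x M) y → False := by
    intro x hx y hy hxr hyr
    obtain ⟨a1, ha1, b1, hb1, rfl⟩ := Submodule.mem_sup.1 hx
    obtain ⟨a2, ha2, b2, hb2, rfl⟩ := Submodule.mem_sup.1 hy
    have hab : ∀ r ∈ a, ∀ s ∈ b, ∀ m : M, r • s • m = 0 := fun r hr s hs m =>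
      (hB _).1 (hmb s hs m) r hr
    have hba : ∀ r ∈ a, ∀ s ∈ b, ∀ m : M, s • r • m = 0 := fun r hr s hs m =>
      (hA _).1 (hma r hr m) s hs
    have htop : ∀ m : M, m ∈ (a ⊔ b) • (⊤ : Submodule R M) := by
      intro m
      have key : (a2 + b2) • a1 • m = (a1 + b1) • a2 • m := by
        rw [add_smul, add_smul, hba a1 ha1 b2 hb2, hba a2 ha2 b1 hb1, smul_comm]
      open scoped Pointwise in
      have hmem : a1 • m ∈ (a1 + b1) • (⊤ : Submodule R M) := by
        rw [← Submodule.Quotient.mk_eq_zero]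
        apply hyr.right_eq_zero_of_smul
        rw [← Submodule.Quotient.mk_smul, key, Submodule.Quotient.mk_eq_zero]
        exact Submodule.smul_mem_pointwise_smul _ _ _ trivial
      obtain ⟨n, -, hn⟩ := (Submodule.mem_smul_pointwise_iff_exists _ _ _).1 hmem
      rw [add_smul] at hn
      have hn' : b1 • n = a1 • (m - n) := by rw [smul_sub, ← hn]; abel
      have hb0 : b1 • n = 0 := hz _ (hn' ▸ hma a1 ha1 _) (hmb b1 hb1 n)
      have ha0 : a1 • (m - n) = 0 := hn' ▸ hb0
      have hnA : n ∈ a • (⊤ : Submodule R M) := (hA n).2 fun r hr => by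
        apply hxr.right_eq_zero_of_smul
        rw [smul_comm, add_smul, hb0, add_zero]
        exact hba a1 ha1 r hr n
      have hnB : m - n ∈ b • (⊤ : Submodule R M) := (hB _).2 fun r hr => by
        apply hxr.right_eq_zero_of_smul
        rw [smul_comm, add_smul, ha0, zero_add]
        exact hab r hr b1 hb1 _
      rw [Submodule.sup_smul]
      exact Submodule.mem_sup.2 ⟨n, hnA, m - n, hnB, by abel⟩
    have hbot := Submodule.eq_bot_of_le_smul_of_le_jacobson_bot (a ⊔ b) (⊤ : Submodule R M)
      Module.Finite.fg_top (fun m _ => htop m)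
      (hle.trans (IsLocalRing.maximalIdeal_le_jacobson _))
    exact top_ne_bot hbot
  obtain ⟨x, hx, hxr⟩ := hex
  refine IsGreatest.csSup_eq ⟨⟨[x], rfl, by simpa using hx, ?_⟩, ?_⟩
  · rw [IsLocalRing.isRegular_iff_isWeaklyRegular_of_subset_maximalIdeal
      (by simpa using hle hx), isWeaklyRegular_singleton_iff]
    exact hxr
  · rintro n ⟨rs, rfl, hmem, hreg⟩
    match rs, hmem, hreg with
    | [], _, _ => simp
    | [_], _, _ => simp
    | x :: y :: l, hmem, hreg =>
      exfalso
      have hw := hreg.toIsWeaklyRegular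
      rw [isWeaklyRegular_cons_iff, isWeaklyRegular_cons_iff] at hw
      exact hno x (hmem x (by simp)) y (hmem y (by simp)) hw.1 hw.2.1
end
end

section
/- Let a be an ideal of R with aM ≠ M and t = grade_M(a), and let I = (x_1, …, x_t) with x_1, …, x_t an M-regular sequence contained in a. Then Ass_R(H^t_a(M)) = Ass_R(Ext^t_R(R/a, M)) = V(a) ∩ Ass_R(M/IM). -/
universe u

open RingTheory.Sequence CategoryTheory

noncomputable section

namespace LC
open Limits Opposite
variable {R : Type u} [CommRing R]

/-- cocycles -/
def Z {X : ModuleCat.{u} R} (P : ProjectiveResolution X) (Y : ModuleCat.{u} R) (n : ℕ) :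
    Submodule R (P.complex.X n ⟶ Y) :=
  LinearMap.ker (Linear.leftComp R Y (P.complex.d (n+1) n))

/-- the op complex -/
abbrev K {X : ModuleCat.{u} R} (P : ProjectiveResolution X) (Y : ModuleCat.{u} R) :
    ChainComplex (ModuleCat.{u} R)ᵒᵖ ℕ :=
  ((((linearYoneda R (ModuleCat.{u} R)).obj Y).rightOp).mapHomologicalComplex _).obj P.complex

def kk {X : ModuleCat.{u} R} (P : ProjectiveResolution X) (Y : ModuleCat.{u} R) (n : ℕ) :
    (K P Y).X n ⟶ op (ModuleCat.of R (Z P Y n)) :=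
  Quiver.Hom.op (ModuleCat.ofHom (Z P Y n).subtype)

lemma d_kk {X : ModuleCat.{u} R} (P : ProjectiveResolution X) (Y : ModuleCat.{u} R) (n : ℕ) :
    (K P Y).d (n+1) n ≫ kk P Y n = 0 := by
  apply Quiver.Hom.unop_inj
  ext z
  exact z.2

def toOp {X : ModuleCat.{u} R} (P : ProjectiveResolution X) (Y : ModuleCat.{u} R) (n : ℕ) :
    (K P Y).opcycles n ⟶ op (ModuleCat.of R (Z P Y n)) :=
  (K P Y).descOpcycles (kk P Y n) (n+1) (by simp) (d_kk P Y n)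

def oldMk' {X : ModuleCat.{u} R} (P : ProjectiveResolution X) (Y : ModuleCat.{u} R) (n : ℕ) :
    (((linearYoneda R (ModuleCat.{u} R)).obj Y).rightOp.leftDerived n).obj X
      ⟶ op (ModuleCat.of R (Z P Y n)) :=
  (P.isoLeftDerivedObj _ n).hom ≫ (K P Y).homologyι n ≫ toOp P Y n

def oldMk {X : ModuleCat.{u} R} (P : ProjectiveResolution X) (Y : ModuleCat.{u} R) (n : ℕ) :
    Z P Y n →ₗ[R] ((Ext R (ModuleCat.{u} R) n).obj (op X)).obj Y :=
  (oldMk' P Y n).unop.hom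

lemma toOp_p {X : ModuleCat.{u} R} (P : ProjectiveResolution X) (Y : ModuleCat.{u} R) (n : ℕ)
    (f : Z P Y n) : ((K P Y).pOpcycles n).unop.hom ((toOp P Y n).unop.hom f) = f.1 := by
  have : (K P Y).pOpcycles n ≫ toOp P Y n = kk P Y n := by simp [toOp]
  have := congrArg Quiver.Hom.unop this
  exact congrArg (fun g : ModuleCat.of R (Z P Y n) ⟶ ModuleCat.of R (P.complex.X n ⟶ Y) =>
    g.hom f) this

lemma toOp_surj {X : ModuleCat.{u} R} (P : ProjectiveResolution X) (Y : ModuleCat.{u} R) (n : ℕ) :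
    Function.Surjective (toOp P Y n).unop.hom := by
  intro z
  have hinj : Function.Injective ((K P Y).pOpcycles n).unop.hom :=
    (ModuleCat.mono_iff_injective _).1 inferInstance
  have hd : (K P Y).d (n+1) n ≫ (K P Y).pOpcycles n = 0 := HomologicalComplex.d_pOpcycles _ _ _
  refine ⟨⟨((K P Y).pOpcycles n).unop.hom z, ?_⟩, ?_⟩
  · have := congrArg Quiver.Hom.unop hd
    exact congrArg (fun f => f.hom z) this
  · apply hinj
    exact toOp_p P Y n _

lemma oldMk_surj {X : ModuleCat.{u} R} (P : ProjectiveResolution X) (Y : ModuleCat.{u} R) (n : ℕ) :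
    Function.Surjective (oldMk P Y n) := by
  have h1 : Function.Surjective ((P.isoLeftDerivedObj
      (((linearYoneda R (ModuleCat.{u} R)).obj Y).rightOp) n).hom).unop.hom :=
    (ModuleCat.epi_iff_surjective _).1 inferInstance
  have h2 : Function.Surjective ((K P Y).homologyι n).unop.hom :=
    (ModuleCat.epi_iff_surjective _).1 inferInstance
  exact h1.comp (h2.comp (toOp_surj P Y n))

lemma oldMk_eq_zero {X : ModuleCat.{u} R} (P : ProjectiveResolution X) (Y : ModuleCat.{u} R) (n : ℕ)
    (f : Z P Y n) : oldMk P Y n f = 0 ↔ ∃ g : P.complex.X ((ComplexShape.down ℕ).next n) ⟶ Y,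
      P.complex.d n _ ≫ g = f.1 := by
  have h1 : Function.Injective ((P.isoLeftDerivedObj
      (((linearYoneda R (ModuleCat.{u} R)).obj Y).rightOp) n).hom).unop.hom :=
    (ModuleCat.mono_iff_injective _).1 inferInstance
  have hinj : Function.Injective ((K P Y).pOpcycles n).unop.hom :=
    (ModuleCat.mono_iff_injective _).1 inferInstance
  have hp := toOp_p P Y n
  have hex : (ShortComplex.mk ((K P Y).homologyι n) ((K P Y).fromOpcycles n ((ComplexShape.down ℕ).next n)) (by simp)).Exact :=
    ShortComplex.exact_of_f_is_kernel _ ((K P Y).homologyIsKernel n _ rfl)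
  have hex2 := hex.unop
  rw [ShortComplex.moduleCat_exact_iff] at hex2
  have hpd : (K P Y).pOpcycles n ≫ (K P Y).fromOpcycles n ((ComplexShape.down ℕ).next n)
    = (K P Y).d n _ := HomologicalComplex.p_fromOpcycles _ _ _
  have hpd2 := congrArg Quiver.Hom.unop hpd
  have e : oldMk P Y n f = ((P.isoLeftDerivedObj
      (((linearYoneda R (ModuleCat.{u} R)).obj Y).rightOp) n).hom).unop.hom
        (((K P Y).homologyι n).unop.hom ((toOp P Y n).unop.hom f)) := rfl
  suffices hk : ((K P Y).homologyι n).unop.hom ((toOp P Y n).unop.hom f) = 0 ↔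
      ∃ g : P.complex.X ((ComplexShape.down ℕ).next n) ⟶ Y, P.complex.d n _ ≫ g = f.1 from
    Iff.trans (iff_of_eq (congrArg (· = 0) e)) (Iff.trans (map_eq_zero_iff _ h1) hk)
  constructor
  · intro h
    obtain ⟨g, hg⟩ := hex2 _ h
    refine ⟨g, ?_⟩
    rw [← hp f, ← hg]
    exact (congrArg (fun t => t.hom g) hpd2).symm
  · rintro ⟨g, hg⟩
    have : (toOp P Y n).unop.hom f = ((K P Y).fromOpcycles n ((ComplexShape.down ℕ).next n)).unop.hom g := by
      apply hinj
      rw [hp, ← hg]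
      exact (congrArg (fun t => t.hom g) hpd2).symm
    rw [this]
    have h0 : (K P Y).homologyι n ≫ (K P Y).fromOpcycles n ((ComplexShape.down ℕ).next n) = 0 := by simp
    exact congrArg (fun t => t.hom g) (congrArg Quiver.Hom.unop h0)

lemma Z_comp {X X' : ModuleCat.{u} R} {g : X ⟶ X'} {P : ProjectiveResolution X}
   {Q : ProjectiveResolution X'} (φ : ProjectiveResolution.Hom P Q g) (Y : ModuleCat.{u} R) (n : ℕ)
   (f : Z Q Y n) : φ.hom.f n ≫ f.1 ∈ Z P Y n := by
  have : Q.complex.d (n+1) n ≫ f.1 = 0 := f.2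
  change P.complex.d (n+1) n ≫ φ.hom.f n ≫ f.1 = 0
  simp [← φ.hom.comm_assoc, this]

lemma oldMk_nat {X X' : ModuleCat.{u} R} {g : X ⟶ X'} {P : ProjectiveResolution X}
   {Q : ProjectiveResolution X'} (φ : ProjectiveResolution.Hom P Q g) (Y : ModuleCat.{u} R) (n : ℕ)
   (f : Z Q Y n) : (((Ext R (ModuleCat.{u} R) n).map g.op).app Y).hom (oldMk Q Y n f) =
     oldMk P Y n ⟨φ.hom.f n ≫ f.1, Z_comp φ Y n f⟩ := by
  let F := ((linearYoneda R (ModuleCat.{u} R)).obj Y).rightOp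
  let ψ : Z Q Y n →ₗ[R] Z P Y n :=
    LinearMap.codRestrict _ (Linear.leftComp R Y (φ.hom.f n) ∘ₗ (Z Q Y n).subtype)
      (fun f => Z_comp φ Y n f)
  have h1 := ProjectiveResolution.isoLeftDerivedObj_hom_naturality g P Q φ.hom
    (by simpa using φ.hom_f_zero_comp_π_f_zero) F n
  have h3 : HomologicalComplex.opcyclesMap ((F.mapHomologicalComplex _).map φ.hom) n ≫ toOp Q Y n
     = toOp P Y n ≫ (ModuleCat.ofHom ψ).op := by
    rw [← cancel_epi ((K P Y).pOpcycles n), HomologicalComplex.p_opcyclesMap_assoc]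
    rw [toOp, toOp, HomologicalComplex.p_descOpcycles, HomologicalComplex.p_descOpcycles_assoc]
    rfl
  have key : (F.leftDerived n).map g ≫ oldMk' Q Y n = oldMk' P Y n ≫ (ModuleCat.ofHom ψ).op := by
    have h4 : HomologicalComplex.homologyMap ((F.mapHomologicalComplex _).map φ.hom) n ≫
        (K Q Y).homologyι n ≫ toOp Q Y n =
        ((K P Y).homologyι n ≫ toOp P Y n) ≫ (ModuleCat.ofHom ψ).op := by
      rw [Category.assoc, ← h3, ← HomologicalComplex.homologyι_naturality_assoc]
    have h5 := congrArg (fun t => t ≫ (K Q Y).homologyι n ≫ toOp Q Y n) h1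
    have h6 := congrArg (fun t => (P.isoLeftDerivedObj F n).hom ≫ t) h4
    exact (Category.assoc _ _ _).symm.trans (h5.trans ((Category.assoc _ _ _).trans
      (h6.trans (Category.assoc _ _ _).symm)))
  exact congrArg (fun t => t.hom f) (congrArg Quiver.Hom.unop key)

section new
variable {X : ModuleCat.{u} R} (P : ProjectiveResolution X) (Y : ModuleCat.{u} R) (n : ℕ)

variable {P Y n} in
lemma Zd (f : Z P Y n) : P.complex.d (n+1) n ≫ f.1 = 0 := f.2

lemma extMk_eq_zero (f : Z P Y n) :
    P.extMk f.1 (n+1) rfl (Zd f) = 0 ↔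
      ∃ g : P.complex.X ((ComplexShape.down ℕ).next n) ⟶ Y, P.complex.d n _ ≫ g = f.1 := by
  cases n with
  | succ n =>
    rw [ProjectiveResolution.extMk_eq_zero_iff _ _ _ _ _ n rfl]
    have : (ComplexShape.down ℕ).next (n+1) = n := by simp
    rw [this]
  | zero =>
    have hz : P.complex.d 0 ((ComplexShape.down ℕ).next 0) = 0 :=
      HomologicalComplex.shape _ _ _ (by simp)
    simp only [hz, zero_comp]
    constructor
    · intro h
      rw [← P.extEquivCohomologyClass.apply_eq_iff_eq,
        ProjectiveResolution.extEquivCohomologyClass_extMk,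
        ProjectiveResolution.extEquivCohomologyClass_zero,
        CochainComplex.HomComplex.CohomologyClass.mk_eq_zero_iff,
        CochainComplex.HomComplex.Cocycle.toSingleMk_mem_coboundaries_iff _ _ _ _ _ 1 (by simp)] at h
      obtain ⟨g, hg⟩ := h
      have h1 : IsZero (P.cochainComplex.X 1) :=
        CochainComplex.isZero_of_isStrictlyLE P.cochainComplex 0 1 (by simp)
      rw [h1.eq_of_src g 0, comp_zero] at hg
      refine ⟨0, ?_⟩
      rw [← cancel_epi (P.cochainComplexXIso (-(0:ℕ)) 0 rfl).hom, ← hg, comp_zero]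
    · rintro ⟨g, hg⟩
      simp [← hg]

def newMk : Z P Y n →ₗ[R] Abelian.Ext X Y n where
  toFun f := P.extMk f.1 (n+1) rfl (Zd f)
  map_add' f g := (P.add_extMk f.1 g.1 (n+1) rfl (Zd f) (Zd g)).symm
  map_smul' r f := by
    simp only [RingHom.id_apply, Abelian.Ext.smul_eq_comp_mk₀]
    rw [ProjectiveResolution.extMk_comp_mk₀]
    congr 1

lemma newMk_surj : Function.Surjective (newMk P Y n) := by
  intro z
  obtain ⟨f, hf, rfl⟩ := P.extMk_surjective z (n+1) rfl
  exact ⟨⟨f, hf⟩, rfl⟩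

end new

lemma exists_equiv (Y : ModuleCat.{u} R) (n : ℕ) :
    ∃ e : ∀ X : ModuleCat.{u} R, ((Ext R (ModuleCat.{u} R) n).obj (op X)).obj Y ≃ₗ[R]
      Abelian.Ext X Y n, ∀ (X X' : ModuleCat.{u} R) (g : X ⟶ X')
      (z : ((Ext R (ModuleCat.{u} R) n).obj (op X')).obj Y),
      e X ((((Ext R (ModuleCat.{u} R) n).map g.op).app Y).hom z) =
        (Abelian.Ext.mk₀ g).comp (e X' z) (zero_add n) := by
  let P : ∀ X : ModuleCat.{u} R, ProjectiveResolution X := fun X => projectiveResolution X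
  have hker : ∀ X, LinearMap.ker (oldMk (P X) Y n) = LinearMap.ker (newMk (P X) Y n) := by
    intro X
    ext f
    rw [LinearMap.mem_ker, LinearMap.mem_ker]
    exact (oldMk_eq_zero _ _ _ f).trans (extMk_eq_zero _ _ _ f).symm
  let e := fun X => ((oldMk (P X) Y n).quotKerEquivOfSurjective (oldMk_surj _ _ _)).symm ≪≫ₗ
    Submodule.quotEquivOfEq _ _ (hker X) ≪≫ₗ
    ((newMk (P X) Y n).quotKerEquivOfSurjective (newMk_surj _ _ _))
  have he : ∀ X f, e X (oldMk (P X) Y n f) = newMk (P X) Y n f := by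
    intro X f
    have : oldMk (P X) Y n f = ((oldMk (P X) Y n).quotKerEquivOfSurjective (oldMk_surj _ _ _))
      (Submodule.Quotient.mk f) := rfl
    rw [this]
    simp only [e, LinearEquiv.trans_apply, LinearEquiv.symm_apply_apply]
    rfl
  refine ⟨e, fun X X' g z => ?_⟩
  obtain ⟨f, rfl⟩ := oldMk_surj (P X') Y n z
  let φ : ProjectiveResolution.Hom (P X) (P X') g := ⟨ProjectiveResolution.lift g _ _, by
    simpa using ProjectiveResolution.lift_commutes_zero g (P X) (P X')⟩
  rw [oldMk_nat φ, he, he]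
  exact (ProjectiveResolution.mk₀_comp_extMk f.1 (n+1) rfl (Zd f) φ).symm
lemma smul_eq_zero_of_kills {N M : ModuleCat.{u} R} {r : R} (h : ∀ y : N, r • y = 0) {n : ℕ}
    (z : Abelian.Ext N M n) : r • z = 0 := by
  have h0 : r • 𝟙 N = 0 := by
    ext y
    exact h y
  have := congrArg (fun f => (Abelian.Ext.mk₀ f).comp z (zero_add n)) h0
  simpa [Abelian.Ext.mk₀_smul] using this

lemma exists_les (M : ModuleCat.{u} R) (r : R) (hr : IsSMulRegular M r) :
    ∃ (δ : Abelian.Ext (ModuleCat.of R (QuotSMulTop r M)) M 1)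
      (g : M ⟶ ModuleCat.of R (QuotSMulTop r M)),
      (∀ (N : ModuleCat.{u} R) (n : ℕ)
        (w : Abelian.Ext N (ModuleCat.of R (QuotSMulTop r M)) n),
        w.comp δ (rfl : n + 1 = n + 1) = 0 →
          ∃ v : Abelian.Ext N M n, v.comp (Abelian.Ext.mk₀ g) (add_zero n) = w) ∧
      (∀ (N : ModuleCat.{u} R) (n : ℕ) (z : Abelian.Ext N M (n + 1)), r • z = 0 →
        ∃ w : Abelian.Ext N (ModuleCat.of R (QuotSMulTop r M)) n,
          w.comp δ (rfl : n + 1 = n + 1) = z) ∧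
      (∀ (N : ModuleCat.{u} R) (z : Abelian.Ext N M 0), r • z = 0 → z = 0) := by
  have hS := hr.smulShortComplex_shortExact
  refine ⟨hS.extClass, (ModuleCat.smulShortComplex M r).g, ?_, ?_, ?_⟩
  · intro N n w hw
    exact Abelian.Ext.covariant_sequence_exact₃ N hS w rfl hw
  · intro N n z hz
    rw [Abelian.Ext.smul_eq_comp_mk₀] at hz
    exact Abelian.Ext.covariant_sequence_exact₁ N hS z hz rfl
  · intro N z hz
    rw [Abelian.Ext.smul_eq_comp_mk₀] at hz
    have := hS.mono_f
    have h1 := Abelian.Ext.postcomp_mk₀_injective_of_mono N (ModuleCat.smulShortComplex M r).f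
    exact @h1 z 0 (hz.trans (map_zero _).symm)

lemma ext_vanish (N : ModuleCat.{u} R) (rs : List R) : ∀ (M : ModuleCat.{u} R)
    (_ : IsWeaklyRegular M rs) (_ : ∀ r ∈ rs, ∃ k : ℕ, ∀ y : N, r ^ k • y = 0) (i : ℕ)
    (_ : i < rs.length) (z : Abelian.Ext N M i), z = 0 := by
  induction rs with
  | nil => intro M _ _ i hi; simp at hi
  | cons r rs ih =>
    intro M hM hN i hi z
    rw [isWeaklyRegular_cons_iff] at hM
    obtain ⟨hr, hrs⟩ := hM
    obtain ⟨δ, g, h3, h1, h0⟩ := exists_les M r hr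
    have hinj : ∀ z : Abelian.Ext N M i, r • z = 0 → z = 0 := by
      intro z hz
      cases i with
      | zero => exact h0 N z hz
      | succ i =>
        obtain ⟨w, rfl⟩ := h1 N i z hz
        have : w = 0 := ih (ModuleCat.of R (QuotSMulTop r M)) hrs
          (fun s hs => hN s (List.mem_cons_of_mem _ hs)) i (by simpa using hi) w
        rw [this, Abelian.Ext.zero_comp]
    obtain ⟨k, hk⟩ := hN r List.mem_cons_self
    have h0 := smul_eq_zero_of_kills hk z
    clear hk
    induction k with
    | zero => simpa using h0
    | succ k ihk =>
      apply ihk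
      apply hinj
      rwa [smul_smul, ← pow_succ']

lemma exists_xi (rs : List R) : ∀ (M : ModuleCat.{u} R)
    (_ : IsWeaklyRegular M rs), ∃ (Q : ModuleCat.{u} R)
    (_ : Nonempty (Q ≃ₗ[R] (M ⧸ (Ideal.ofList rs • (⊤ : Submodule R M)))))
    (ξ : Abelian.Ext Q M rs.length),
    ∀ N : ModuleCat.{u} R, (∀ r ∈ rs, ∃ k : ℕ, ∀ y : N, r ^ k • y = 0) →
      (∀ f : N ⟶ Q, (Abelian.Ext.mk₀ f).comp ξ (zero_add _) = 0 → f = 0) ∧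
      ∀ z : Abelian.Ext N M rs.length, (∀ r ∈ rs, r • z = 0) →
        ∃ f : N ⟶ Q, (Abelian.Ext.mk₀ f).comp ξ (zero_add _) = z := by
  induction rs with
  | nil =>
    intro M _
    refine ⟨M, ⟨(Submodule.quotEquivOfEqBot _ (by simp)).symm⟩, Abelian.Ext.mk₀ (𝟙 M), ?_⟩
    intro N _
    constructor
    · intro f hf
      apply (Abelian.Ext.mk₀_bijective N M).1
      simpa using hf
    · intro z _
      obtain ⟨f, rfl⟩ := (Abelian.Ext.mk₀_bijective N M).2 z
      exact ⟨f, by simp⟩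
  | cons r rs ih =>
    intro M hM
    have hM' := hM
    rw [isWeaklyRegular_cons_iff] at hM
    obtain ⟨hr, hrs⟩ := hM
    obtain ⟨δ, g, e3, e1, -⟩ := exists_les M r hr
    obtain ⟨Q, ⟨eQ⟩, ξ, hξ⟩ := ih (ModuleCat.of R (QuotSMulTop r M)) hrs
    refine ⟨Q, ⟨eQ ≪≫ₗ (Submodule.quotOfListConsSMulTopEquivQuotSMulTopInner M r rs).symm⟩,
      ξ.comp δ rfl, ?_⟩
    intro N hN
    have key : ∀ f : N ⟶ Q, (Abelian.Ext.mk₀ f).comp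
        (ξ.comp δ (rfl : rs.length + 1 = rs.length + 1)) (zero_add _) =
        ((Abelian.Ext.mk₀ f).comp ξ (zero_add _)).comp δ rfl := by
      intro f
      exact (Abelian.Ext.comp_assoc _ _ _ (zero_add _) rfl (by lia)).symm
    have hinj : ∀ w : Abelian.Ext N (ModuleCat.of R (QuotSMulTop r M)) rs.length,
        w.comp δ rfl = 0 → w = 0 := by
      intro w hw
      obtain ⟨v, rfl⟩ := e3 N _ w hw
      rw [ext_vanish N (r :: rs) M hM' hN rs.length (by simp) v, Abelian.Ext.zero_comp]
    obtain ⟨h1, h2⟩ := hξ N (fun s hs => hN s (List.mem_cons_of_mem _ hs))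
    constructor
    · intro f hf
      exact h1 f (hinj _ ((key f).symm.trans hf))
    · intro z hz
      obtain ⟨w, hw⟩ := e1 N rs.length z (hz r List.mem_cons_self)
      obtain ⟨f, hf⟩ := h2 w (by
        intro s hs
        apply hinj
        have := hz s (List.mem_cons_of_mem _ hs)
        rw [← hw] at this
        rw [← this]
        exact Abelian.Ext.smul_comp _ _ _ _)
      refine ⟨f, (key f).trans ?_⟩
      rw [← hw, ← hf]
/-- The projection between quotients by powers of an ideal. -/
def pr (a : Ideal R) {m n : ℕ} (h : m ≤ n) :
    ModuleCat.of R (R ⧸ a ^ n) ⟶ ModuleCat.of R (R ⧸ a ^ m) :=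
  ModuleCat.ofHom (Submodule.mapQ _ _ LinearMap.id (Ideal.pow_le_pow_right h))

lemma exists_colim (a : Ideal R) (Y : ModuleCat.{u} R) (i : ℕ) :
    ∃ ι : ∀ n : ℕ, Abelian.Ext (ModuleCat.of R (R ⧸ a ^ n)) Y i →ₗ[R] (localCohomology a i).obj Y,
      (∀ z, ∃ n y, ι n y = z) ∧
      (∀ (m n : ℕ) (h : m ≤ n) y,
        ι n ((Abelian.Ext.mk₀ (pr a h)).comp y (zero_add i)) = ι m y) ∧
      (∀ (m : ℕ) y, ι m y = 0 → ∃ (n : ℕ) (h : m ≤ n),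
        (Abelian.Ext.mk₀ (pr a h)).comp y (zero_add i) = 0) := by
  obtain ⟨e, he⟩ := exists_equiv Y i
  have := localCohomology.hasColimitDiagram (localCohomology.idealPowersDiagram a) i
  let D := localCohomology.diagram (localCohomology.idealPowersDiagram a) i
  let F := D ⋙ (evaluation _ _).obj Y
  let c : Cocone F := ((evaluation _ _).obj Y).mapCocone (colimit.cocone D)
  have hc : IsColimit c := isColimitOfPreserves _ (colimit.isColimit D)
  have hfil := preservesSmallestFilteredColimits_of_preservesFilteredColimits (forget (ModuleCat.{u} R))
  have hP : PreservesColimit F (forget (ModuleCat.{u} R)) := inferInstance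
  have hmap : ∀ (m n : ℕ) (h : m ≤ n)
      (z : ((Ext R (ModuleCat.{u} R) i).obj (op (ModuleCat.of R (R ⧸ a ^ m)))).obj Y),
      e _ ((F.map (homOfLE h).op.op).hom z) =
        (Abelian.Ext.mk₀ (pr a h)).comp (e _ z) (zero_add i) := by
    intro m n h z
    exact he _ _ (pr a h) z
  let ι : ∀ n : ℕ, Abelian.Ext (ModuleCat.of R (R ⧸ a ^ n)) Y i →ₗ[R]
      (localCohomology a i).obj Y :=
    fun n => (c.ι.app (op (op n))).hom ∘ₗ (e (ModuleCat.of R (R ⧸ a ^ n))).symm.toLinearMap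
  refine ⟨ι, ?_, ?_, ?_⟩
  · intro z
    obtain ⟨j, y, hy⟩ := Concrete.isColimit_exists_rep F hc z
    refine ⟨j.unop.unop, e _ y, ?_⟩
    refine Eq.trans ?_ hy
    exact congrArg (c.ι.app j).hom ((e _).symm_apply_apply y)
  · intro m n h y
    obtain ⟨y, rfl⟩ := (e _).surjective y
    rw [← hmap]
    have h1 : (c.ι.app (op (op n))).hom ((F.map (homOfLE h).op.op).hom y) =
        (c.ι.app (op (op m))).hom y := by
      rw [← c.w (homOfLE h).op.op]
      rfl
    refine (congrArg (c.ι.app (op (op n))).hom ((e _).symm_apply_apply _)).trans ?_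
    refine h1.trans ?_
    exact (congrArg (c.ι.app (op (op m))).hom ((e _).symm_apply_apply _)).symm
  · intro m y hy
    obtain ⟨y, rfl⟩ := (e _).surjective y
    have hy' : (c.ι.app (op (op m))).hom y = (c.ι.app (op (op m))).hom 0 := by
      rw [map_zero]
      refine Eq.trans ?_ hy
      exact (congrArg (c.ι.app (op (op m))).hom ((e _).symm_apply_apply _)).symm
    obtain ⟨k, f, g, hfg⟩ := (Concrete.isColimit_rep_eq_iff_exists F hc _ _).1 hy'
    have h : m ≤ k.unop.unop := leOfHom f.unop.unop
    refine ⟨k.unop.unop, h, ?_⟩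
    rw [← hmap]
    have h2 : (F.map (homOfLE h).op.op).hom y = 0 := by
      refine Eq.trans hfg ?_
      exact map_zero (F.map g).hom
    rw [h2]
    exact map_zero (e _)
lemma mem_ass [IsNoetherianRing R] {M : Type u} [AddCommGroup M] [Module R M] {p : Ideal R} :
    p ∈ associatedPrimes R M ↔ p.IsPrime ∧ ∃ x : M, ∀ r, r ∈ p ↔ r • x = 0 := by
  rw [AssociatedPrimes.mem_iff, isAssociatedPrime_iff]
  refine and_congr_right fun _ => exists_congr fun x => ?_
  rw [SetLike.ext_iff]
  refine forall_congr' fun r => ?_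
  rw [Submodule.mem_colon_singleton, Submodule.mem_bot]

/-- The morphism from a cyclic module determined by the image of the generator. -/
def cyc (J : Ideal R) (Q : ModuleCat.{u} R) (q : Q) (h : ∀ r ∈ J, r • q = 0) :
    ModuleCat.of R (R ⧸ J) ⟶ Q :=
  ModuleCat.ofHom (Submodule.liftQ J (LinearMap.toSpanSingleton R Q q) (fun r hr => h r hr))

/-- The generator of a cyclic module. -/
def one (J : Ideal R) : ModuleCat.of R (R ⧸ J) := (Submodule.Quotient.mk 1 : R ⧸ J)

lemma cyc_one (J : Ideal R) (Q : ModuleCat.{u} R) (q : Q) (h : ∀ r ∈ J, r • q = 0) :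
    (cyc J Q q h).hom (one J) = q := one_smul R q

lemma hom_eq_of_one {J : Ideal R} {Q : ModuleCat.{u} R} (f g : ModuleCat.of R (R ⧸ J) ⟶ Q)
    (h : f.hom (one J) = g.hom (one J)) : f = g := by
  apply ModuleCat.hom_ext
  apply LinearMap.ext
  intro y
  obtain ⟨s, rfl⟩ := Submodule.Quotient.mk_surjective J y
  have : (Submodule.Quotient.mk s : R ⧸ J) = s • (one J : R ⧸ J) := by
    change _ = s • (Submodule.Quotient.mk 1 : R ⧸ J)
    rw [← Submodule.Quotient.mk_smul, smul_eq_mul, mul_one]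
  rw [this]
  exact (map_smul f.hom s _).trans ((congrArg _ h).trans (map_smul g.hom s _).symm)

lemma one_kills (J : Ideal R) (r : R) (hr : r ∈ J) : r • one J = 0 := by
  change r • (Submodule.Quotient.mk 1 : R ⧸ J) = 0
  rw [← Submodule.Quotient.mk_smul, smul_eq_mul, mul_one]
  exact (Submodule.Quotient.mk_eq_zero J).2 hr

lemma kills (J : Ideal R) (r : R) (hr : r ∈ J) (y : ModuleCat.of R (R ⧸ J)) : r • y = 0 := by
  obtain ⟨s, rfl⟩ := Submodule.Quotient.mk_surjective J y
  change r • (Submodule.Quotient.mk s : R ⧸ J) = 0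
  rw [← Submodule.Quotient.mk_smul, smul_eq_mul]
  exact (Submodule.Quotient.mk_eq_zero J).2 (J.mul_mem_right _ hr)

lemma pr_one (a : Ideal R) {m n : ℕ} (h : m ≤ n) : (pr a h).hom (one (a ^ n)) = one (a ^ m) := rfl

/-- The conclusion of `exists_xi` for a cyclic module, on annihilators. -/
lemma ann_iff {J : Ideal R} {Q M : ModuleCat.{u} R} {n : ℕ} {ξ : Abelian.Ext Q M n}
    (hinj : ∀ f : ModuleCat.of R (R ⧸ J) ⟶ Q,
      (Abelian.Ext.mk₀ f).comp ξ (zero_add _) = 0 → f = 0)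
    (f : ModuleCat.of R (R ⧸ J) ⟶ Q) (r : R) :
    r • ((Abelian.Ext.mk₀ f).comp ξ (zero_add _)) = 0 ↔ r • f.hom (one J) = 0 := by
  rw [← Abelian.Ext.smul_comp, ← Abelian.Ext.mk₀_smul]
  constructor
  · intro h
    have := hinj _ h
    exact congrArg (fun g => g.hom (one J)) this
  · intro h
    have : r • f = 0 := hom_eq_of_one _ _ h
    rw [this, Abelian.Ext.mk₀_zero, Abelian.Ext.zero_comp]

lemma ass_ext [IsNoetherianRing R] {J : Ideal R} {Q M : ModuleCat.{u} R} {n : ℕ}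
    {ξ : Abelian.Ext Q M n}
    (hinj : ∀ f : ModuleCat.of R (R ⧸ J) ⟶ Q,
      (Abelian.Ext.mk₀ f).comp ξ (zero_add _) = 0 → f = 0)
    (hsurj : ∀ z : Abelian.Ext (ModuleCat.of R (R ⧸ J)) M n,
        ∃ f : ModuleCat.of R (R ⧸ J) ⟶ Q, (Abelian.Ext.mk₀ f).comp ξ (zero_add _) = z) :
    associatedPrimes R (Abelian.Ext (ModuleCat.of R (R ⧸ J)) M n) =
      {p | J ≤ p} ∩ associatedPrimes R Q := by
  ext p
  rw [Set.mem_inter_iff, mem_ass, mem_ass]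
  constructor
  · rintro ⟨hp, z, hz⟩
    obtain ⟨f, rfl⟩ := hsurj z
    refine ⟨fun r hr => ?_, hp, f.hom (one J), fun r => (hz r).trans (ann_iff hinj f r)⟩
    exact (hz r).2 (smul_eq_zero_of_kills (kills J r hr) _)
  · rintro ⟨hJ, hp, q, hq⟩
    refine ⟨hp, (Abelian.Ext.mk₀ (cyc J Q q fun r hr => (hq r).1 (hJ hr))).comp ξ (zero_add _),
      fun r => ?_⟩
    rw [ann_iff hinj, cyc_one, hq]

lemma ass_lc [IsNoetherianRing R] (a : Ideal R) {Q M : ModuleCat.{u} R} {t : ℕ}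
    {ξ : Abelian.Ext Q M t} (rs : List R) (hrs : ∀ r ∈ rs, r ∈ a)
    (hinj : ∀ n, ∀ f : ModuleCat.of R (R ⧸ a ^ n) ⟶ Q,
      (Abelian.Ext.mk₀ f).comp ξ (zero_add _) = 0 → f = 0)
    (hsurj : ∀ n, ∀ z : Abelian.Ext (ModuleCat.of R (R ⧸ a ^ n)) M t, (∀ r ∈ rs, r • z = 0) →
        ∃ f : ModuleCat.of R (R ⧸ a ^ n) ⟶ Q, (Abelian.Ext.mk₀ f).comp ξ (zero_add _) = z) :
    associatedPrimes R ((localCohomology a t).obj M) =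
      {p | a ≤ p} ∩ associatedPrimes R Q := by
  obtain ⟨ι, hs, hc, h0⟩ := exists_colim a M t
  ext p
  rw [Set.mem_inter_iff, mem_ass, mem_ass]
  constructor
  · rintro ⟨hp, z, hz⟩
    obtain ⟨m, y, rfl⟩ := hs z
    have hfin : ∀ s : Finset R, (∀ r ∈ s, r ∈ p) → ∃ (n : ℕ) (h : m ≤ n), ∀ r ∈ s,
        r • ((Abelian.Ext.mk₀ (pr a h)).comp y (zero_add t)) = 0 := by
      classical
      intro s
      induction s using Finset.induction_on with
      | empty => intro _; exact ⟨m, le_rfl, by simp⟩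
      | insert x s hx ih =>
        intro hsp
        obtain ⟨n, h, hn⟩ := ih fun r hr => hsp r (Finset.mem_insert_of_mem hr)
        have h1 : ι n (x • ((Abelian.Ext.mk₀ (pr a h)).comp y (zero_add t))) = 0 := by
          rw [map_smul, hc]
          exact (hz x).1 (hsp x (Finset.mem_insert_self _ _))
        obtain ⟨k, hk, hk0⟩ := h0 _ _ h1
        have e : (Abelian.Ext.mk₀ (pr a (h.trans hk))).comp y (zero_add t) =
            (Abelian.Ext.mk₀ (pr a hk)).comp ((Abelian.Ext.mk₀ (pr a h)).comp y (zero_add t))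
              (zero_add t) := by
          rw [Abelian.Ext.mk₀_comp_mk₀_assoc]
          congr 2
          exact hom_eq_of_one _ _ rfl
        refine ⟨k, h.trans hk, fun r hr => ?_⟩
        rw [e, ← Abelian.Ext.comp_smul]
        rcases Finset.mem_insert.1 hr with rfl | hr
        · exact hk0
        · rw [hn r hr, Abelian.Ext.comp_zero]
    obtain ⟨s, hsp⟩ := (IsNoetherian.noetherian p : p.FG)
    obtain ⟨n, h, hn⟩ := hfin s fun r hr => hsp ▸ Submodule.subset_span hr
    generalize hw : (Abelian.Ext.mk₀ (pr a h)).comp y (zero_add t) = w at hn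
    have hzw : ι n w = ι m y := by rw [← hw, hc]
    have hann : ∀ r, r ∈ p ↔ r • w = 0 := by
      intro r
      constructor
      · intro hr
        rw [← hsp] at hr
        have : p ≤ LinearMap.ker (LinearMap.toSpanSingleton R _ w) := by
          rw [← hsp, Submodule.span_le]
          intro r hr
          exact hn r hr
        rw [hsp] at hr
        exact this hr
      · intro hr
        rw [hz, ← hzw, ← map_smul, hr, map_zero]
    have han : a ^ n ≤ p := fun r hr =>
      (hann r).2 (smul_eq_zero_of_kills (kills _ r hr) w)
    have hap : a ≤ p := hp.le_of_pow_le han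
    obtain ⟨f, rfl⟩ := hsurj n w fun r hr => (hann r).1 (hap (hrs r hr))
    exact ⟨hap, hp, f.hom (one _), fun r => (hann r).trans (ann_iff (hinj n) f r)⟩
  · rintro ⟨hap, hp, q, hq⟩
    have hq' : ∀ n, 1 ≤ n → ∀ r ∈ a ^ n, r • q = 0 := fun n hn r hr =>
      (hq r).1 (hap (Ideal.pow_le_self (by lia) hr))
    refine ⟨hp, ι 1 ((Abelian.Ext.mk₀ (cyc (a ^ 1) Q q (hq' 1 le_rfl))).comp ξ (zero_add _)),
      fun r => ?_⟩
    rw [← map_smul]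
    constructor
    · intro hr
      rw [(ann_iff (hinj 1) _ r).2, map_zero]
      rw [cyc_one]
      exact (hq r).1 hr
    · intro hr
      obtain ⟨n, h, hn⟩ := h0 _ _ hr
      rw [Abelian.Ext.comp_smul, Abelian.Ext.mk₀_comp_mk₀_assoc, ann_iff (hinj n)] at hn
      rw [hq]
      have : (pr a h ≫ cyc (a ^ 1) Q q (hq' 1 le_rfl)).hom (one (a ^ n)) = q :=
        cyc_one (a ^ 1) Q q (hq' 1 le_rfl)
      rwa [this] at hn

lemma main [IsNoetherianRing R] {M : Type u} [AddCommGroup M] [Module R M] (a : Ideal R)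
    (rs : List R) (t : ℕ) (hlen : rs.length = t) (hmem : ∀ r ∈ rs, r ∈ a)
    (hreg : RingTheory.Sequence.IsRegular M rs) :
    associatedPrimes R ↥((localCohomology a t).obj (ModuleCat.of R M)) =
        associatedPrimes R
          ↥(((Ext R (ModuleCat.{u} R) t).obj
              (Opposite.op (ModuleCat.of R (R ⧸ a)))).obj (ModuleCat.of R M)) ∧
      associatedPrimes R ↥((localCohomology a t).obj (ModuleCat.of R M)) =
        {p | a ≤ p} ∩
          associatedPrimes R (M ⧸ (Ideal.ofList rs • (⊤ : Submodule R M))) := by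
  subst hlen
  obtain ⟨Q, ⟨eQ⟩, ξ, hξ⟩ := exists_xi rs (ModuleCat.of R M) hreg.toIsWeaklyRegular
  obtain ⟨e, -⟩ := exists_equiv (ModuleCat.of R M) rs.length
  have hN : ∀ n, ∀ r ∈ rs, ∃ k : ℕ, ∀ y : ModuleCat.of R (R ⧸ a ^ n), r ^ k • y = 0 :=
    fun n r hr => ⟨n, kills _ _ (Ideal.pow_mem_pow (hmem r hr) n)⟩
  have hN' : ∀ r ∈ rs, ∃ k : ℕ, ∀ y : ModuleCat.of R (R ⧸ a), r ^ k • y = 0 :=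
    fun r hr => ⟨1, kills _ _ (by rw [pow_one]; exact hmem r hr)⟩
  have h1 := ass_lc a rs hmem (fun n => (hξ _ (hN n)).1) (fun n => (hξ _ (hN n)).2)
  have h2 := ass_ext (hξ _ hN').1 (fun z => (hξ _ hN').2 z fun r hr =>
    smul_eq_zero_of_kills (kills a r (hmem r hr)) z)
  have h3 := LinearEquiv.AssociatedPrimes.eq (e (ModuleCat.of R (R ⧸ a)))
  have h4 := LinearEquiv.AssociatedPrimes.eq eQ
  refine ⟨?_, ?_⟩
  · rw [h1, h3, h2]
  · rw [h1, h4]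

end LC

variable {R : Type u} [CommRing R] [IsNoetherianRing R]
variable {M : Type u} [AddCommGroup M] [Module R M] [Module.Finite R M] [Nontrivial M]

theorem stmt14 (a : Ideal R) (ha : a • (⊤ : Submodule R M) ≠ ⊤)
    (rs : List R) (hlen : rs.length = gradeM a M) (hmem : ∀ r ∈ rs, r ∈ a)
    (hreg : RingTheory.Sequence.IsRegular M rs) :
    associatedPrimes R ↥((localCohomology a (gradeM a M)).obj (ModuleCat.of R M)) =
        associatedPrimes R
          ↥(((Ext R (ModuleCat.{u} R) (gradeM a M)).obj
              (Opposite.op (ModuleCat.of R (R ⧸ a)))).obj (ModuleCat.of R M)) ∧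
      associatedPrimes R ↥((localCohomology a (gradeM a M)).obj (ModuleCat.of R M)) =
        {p | a ≤ p} ∩
          associatedPrimes R (M ⧸ (Ideal.ofList rs • (⊤ : Submodule R M))) := by
  exact LC.main a rs _ hlen hmem hreg
end
end
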